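/- arXiv:2109.02835 — 2 statements merged into one kernel-verified Lean document; each statement's English description precedes it below -/
import Mathlib

section
/- For every nonnegative integer k there exists a family (P_e) of positive rational numbers, indexed by the covering edges e of L6'(k), with the following property: let V be the complex vector space with basis {v_t : t ∈ L6'(k)} and, for each node i of the E6 Dynkin diagram, define linear operators on V by X_i v_r := Σ √(P_e)·v_s (sum over color-i edges e: r ⋖ s out of r), Y_i v_s := Σ √(P_e)·v_r (sum over color-i edges e: r ⋖ s into s), and H_i v_t := m_i(t)·v_t; then there is a Lie algebra homomorphism φ : 𝔤(E6) → End(V) with φ(x_i) = X_i, φ(y_i) = Y_i, φ(h_i) = H_i for every node i, and for any such family and homomorphism the 𝔤(E6)-module V is irreducible with highest weight kω_{1'} (the vector indexed by the maximal element of L6'(k) is annihilated by every X_i and is an H_i-eigenvector with eigenvalue k for i = 1' and 0 for i ≠ 1'). The same statement holds with L6'(k) replaced by L6''(k) and the highest weight kω_{1'} replaced by kω_{6'} (eigenvalue k for i = 6' and 0 for i ≠ 6'). -/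
noncomputable section

namespace CL

variable {N : Type} [DecidableEq N] [Fintype N]

/-- One-step relation generating the partial order on the poset of positions. -/
def step (adj : N → N → Prop) (pos : Finset (N × ℕ)) (x y : N × ℕ) : Prop :=
  x ∈ pos ∧ y ∈ pos ∧ adj x.1 y.1 ∧ y.2 = x.2 + 1

/-- The partial order on positions, generated by `step`. -/
def ple (adj : N → N → Prop) (pos : Finset (N × ℕ)) : N × ℕ → N × ℕ → Prop :=
  Relation.ReflTransGen (step adj pos)

/-- The lattice of `ℕ`-labellings of the positions which are bounded by `k`, order-reversing,
and satisfy a further constraint `extra`. -/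
def Elt (adj : N → N → Prop) (pos : Finset (N × ℕ)) (k : ℕ)
    (extra : ({x : N × ℕ // x ∈ pos} → ℕ) → Prop) : Type :=
  {c : {x : N × ℕ // x ∈ pos} → ℕ //
    (∀ x, c x ≤ k) ∧ (∀ x y, ple adj pos y.1 x.1 → c x ≤ c y) ∧ extra c}

variable {adj : N → N → Prop} {pos : Finset (N × ℕ)} {k : ℕ}
  {extra : ({x : N × ℕ // x ∈ pos} → ℕ) → Prop}

instance : Finite (Elt adj pos k extra) := by
  apply Finite.of_injective
    (fun c : Elt adj pos k extra =>
      fun x => (⟨c.1 x, Nat.lt_succ_of_le (c.2.1 x)⟩ : Fin (k + 1)))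
  intro c d h
  apply Subtype.ext
  funext x
  exact congrArg Fin.val (congrFun h x)

instance : Fintype (Elt adj pos k extra) := Fintype.ofFinite _

instance : DecidableEq (Elt adj pos k extra) := by unfold Elt; infer_instance

/-- Componentwise comparison of labellings. -/
def elLe (r s : Elt adj pos k extra) : Prop := ∀ x, r.1 x ≤ s.1 x

/-- The covering edge of color `i`: exactly one entry, at a position of color `i`,
is increased by one. -/
def edge (i : N) (r s : Elt adj pos k extra) : Prop :=
  ∃ x : {x : N × ℕ // x ∈ pos}, x.1.1 = i ∧ s.1 x = r.1 x + 1 ∧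
    ∀ y, y ≠ x → s.1 y = r.1 y

instance (i : N) (r s : Elt adj pos k extra) : Decidable (edge i r s) := by
  unfold edge; infer_instance

/-- The rank function: the sum of all entries. -/
def rk (t : Elt adj pos k extra) : ℕ := ∑ x ∈ pos.attach, t.1 x

/-- The connected component of `t` in the graph of color-`i` covering edges. -/
def comp (i : N) (t : Elt adj pos k extra) : Set (Elt adj pos k extra) :=
  {s | Relation.ReflTransGen (fun a b => edge i a b ∨ edge i b a) t s}

/-- The integer `m_i(t) = (ρ(t) − min ρ on comp_i(t)) − (max ρ on comp_i(t) − ρ(t))`. -/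
def mwt (i : N) (t : Elt adj pos k extra) : ℤ :=
  ((rk t : ℤ) - ((sInf (rk '' comp i t) : ℕ) : ℤ)) -
    (((sSup (rk '' comp i t) : ℕ) : ℤ) - (rk t : ℤ))

end CL

namespace CL

/-- Generators `x_i, y_i, h_i` for the Serre presentation. -/
inductive SGen (I : Type) : Type
  | X : I → SGen I
  | Y : I → SGen I
  | H : I → SGen I

variable {I : Type}

/-- The generator `x_i` in the free Lie algebra. -/
def gx (i : I) : FreeLieAlgebra ℂ (SGen I) := FreeLieAlgebra.of ℂ (SGen.X i)

/-- The generator `y_i` in the free Lie algebra. -/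
def gy (i : I) : FreeLieAlgebra ℂ (SGen I) := FreeLieAlgebra.of ℂ (SGen.Y i)

/-- The generator `h_i` in the free Lie algebra. -/
def gh (i : I) : FreeLieAlgebra ℂ (SGen I) := FreeLieAlgebra.of ℂ (SGen.H i)

/-- The Serre relations determined by the matrix `A`:
`[h_i,h_j] = 0`; `[x_i,y_i] = h_i` and `[x_i,y_j] = 0` for `i ≠ j`;
`[h_i,x_j] = A_{j,i}·x_j`; `[h_i,y_j] = −A_{j,i}·y_j`; and
`ad(x_i)^{1−A_{j,i}}(x_j) = 0 = ad(y_i)^{1−A_{j,i}}(y_j)` for `i ≠ j`. -/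
def serreSet (A : I → I → ℤ) : Set (FreeLieAlgebra ℂ (SGen I)) :=
  {z | ∃ i j : I, z = ⁅gh i, gh j⁆} ∪
  {z | ∃ i : I, z = ⁅gx i, gy i⁆ - gh i} ∪
  {z | ∃ i j : I, i ≠ j ∧ z = ⁅gx i, gy j⁆} ∪
  {z | ∃ i j : I, z = ⁅gh i, gx j⁆ - (A j i) • gx j} ∪
  {z | ∃ i j : I, z = ⁅gh i, gy j⁆ + (A j i) • gy j} ∪
  {z | ∃ i j : I, i ≠ j ∧
    z = ((LieAlgebra.ad ℂ (FreeLieAlgebra ℂ (SGen I)) (gx i)) ^ (1 - A j i).toNat) (gx j)} ∪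
  {z | ∃ i j : I, i ≠ j ∧
    z = ((LieAlgebra.ad ℂ (FreeLieAlgebra ℂ (SGen I)) (gy i)) ^ (1 - A j i).toNat) (gy j)}

/-- The Lie ideal generated by the Serre relations. -/
def serreIdeal (A : I → I → ℤ) : LieIdeal ℂ (FreeLieAlgebra ℂ (SGen I)) :=
  LieSubmodule.lieSpan ℂ _ (serreSet A)

/-- The Lie algebra `𝔤(A)` presented by generators `x_i, y_i, h_i` subject to
the Serre relations determined by `A`. -/
abbrev gLie (A : I → I → ℤ) : Type := FreeLieAlgebra ℂ (SGen I) ⧸ serreIdeal A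

/-- The image of `x_i` in `𝔤(A)`. -/
def px (A : I → I → ℤ) (i : I) : gLie A := LieSubmodule.Quotient.mk (N := serreIdeal A) (gx i)

/-- The image of `y_i` in `𝔤(A)`. -/
def py (A : I → I → ℤ) (i : I) : gLie A := LieSubmodule.Quotient.mk (N := serreIdeal A) (gy i)

/-- The image of `h_i` in `𝔤(A)`. -/
def ph (A : I → I → ℤ) (i : I) : gLie A := LieSubmodule.Quotient.mk (N := serreIdeal A) (gh i)

end CL

namespace CL

variable {N : Type} [DecidableEq N] [Fintype N]
variable {adj : N → N → Prop} {pos : Finset (N × ℕ)} {k : ℕ}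
  {extra : ({x : N × ℕ // x ∈ pos} → ℕ) → Prop}

/-- The raising operator `x_i·`, with coefficient `√(P_e)` on each color-`i` edge `e`. -/
def opX (P : Elt adj pos k extra → Elt adj pos k extra → ℚ) (i : N) :
    Module.End ℂ (Elt adj pos k extra → ℂ) :=
  Matrix.mulVecLin fun s r => if edge i r s then (↑(Real.sqrt (P r s)) : ℂ) else 0

/-- The lowering operator `y_i·`, with coefficient `√(P_e)` on each color-`i` edge `e`. -/
def opY (P : Elt adj pos k extra → Elt adj pos k extra → ℚ) (i : N) :
    Module.End ℂ (Elt adj pos k extra → ℂ) :=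
  Matrix.mulVecLin fun r s => if edge i r s then (↑(Real.sqrt (P r s)) : ℂ) else 0

/-- The diagonal operator `h_i·`, acting on `v_t` by the eigenvalue `m_i(t)`. -/
def opH (i : N) : Module.End ℂ (Elt adj pos k extra → ℂ) :=
  Matrix.mulVecLin (Matrix.diagonal fun t => ((mwt i t : ℤ) : ℂ))

end CL

/-! ### Type `E₆` data -/

/-- The nodes `1', 2', 3', 4', 5', 6'` of the `E₆` Dynkin diagram. -/
inductive N6 : Type
  | m1 | m2 | m3 | m4 | m5 | m6
  deriving DecidableEq

instance : Fintype N6 where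
  elems := ⟨↑[N6.m1, N6.m2, N6.m3, N6.m4, N6.m5, N6.m6], by decide⟩
  complete := by intro x; cases x <;> decide

open N6

/-- Adjacency in the `E₆` Dynkin diagram: edges `1'-2', 2'-3', 3'-4', 3'-5', 5'-6'`. -/
abbrev adj6 : N6 → N6 → Prop := fun a b =>
  (a, b) ∈ ([(m1, m2), (m2, m3), (m3, m4), (m3, m5), (m5, m6)] : List (N6 × N6)) ∨
  (b, a) ∈ ([(m1, m2), (m2, m3), (m3, m4), (m3, m5), (m5, m6)] : List (N6 × N6))

/-- The Cartan matrix of type `E₆`, indexed by the nodes. -/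
def A6 : N6 → N6 → ℤ := fun i j => if i = j then 2 else if adj6 i j then -1 else 0

/-- The 24 (color, rank) positions of the poset `P24 = 𝒫`. -/
def pos24 : Finset (N6 × ℕ) :=
  {(m1, 0), (m2, 1), (m3, 2), (m4, 3), (m5, 3), (m3, 4), (m6, 4), (m2, 5), (m5, 5),
   (m1, 6), (m3, 6), (m2, 7), (m4, 7), (m1, 8), (m3, 8), (m2, 9), (m5, 9), (m3, 10),
   (m6, 10), (m4, 11), (m5, 11), (m3, 12), (m2, 13), (m1, 14)}

/-- The 16 (color, rank) positions of the minuscule poset `P16' = P_{E₆}(ω₁')`. -/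
def pos16p : Finset (N6 × ℕ) :=
  {(m6, 0), (m5, 1), (m3, 2), (m2, 3), (m4, 3), (m1, 4), (m3, 4), (m2, 5), (m5, 5),
   (m3, 6), (m6, 6), (m4, 7), (m5, 7), (m3, 8), (m2, 9), (m1, 10)}

/-- The 16 (color, rank) positions of the minuscule poset `P16'' = P_{E₆}(ω₆')`. -/
def pos16pp : Finset (N6 × ℕ) :=
  {(m1, 0), (m2, 1), (m3, 2), (m4, 3), (m5, 3), (m3, 4), (m6, 4), (m2, 5), (m5, 5),
   (m1, 6), (m3, 6), (m2, 7), (m4, 7), (m3, 8), (m5, 9), (m6, 10)}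

/-- The extra constraints on elements of `L6(a,b)`: `c((1',8)) ≤ a` and `c((1',6)) ≥ a`. -/
def extra6 (a : ℕ) : ({x : N6 × ℕ // x ∈ pos24} → ℕ) → Prop := fun c =>
  c ⟨(m1, 8), by decide⟩ ≤ a ∧ a ≤ c ⟨(m1, 6), by decide⟩

/-- The lattice `L6(a,b) = L_{E₆}(aω₁' + bω₆')`. -/
abbrev L6ab (a b : ℕ) : Type := CL.Elt adj6 pos24 (a + b) (extra6 a)

/-- The lattice `L6'(k) = L_{E₆}(kω₁')`. -/
abbrev L6p (k : ℕ) : Type := CL.Elt adj6 pos16p k (fun _ => True)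

/-- The lattice `L6''(k) = L_{E₆}(kω₆')`. -/
abbrev L6pp (k : ℕ) : Type := CL.Elt adj6 pos16pp k (fun _ => True)

/-- The maximal element of `L6'(k)`. -/
def top6p (k : ℕ) : L6p k :=
  ⟨fun _ => k, fun _ => le_rfl, fun _ _ _ => le_rfl, trivial⟩

/-- The maximal element of `L6''(k)`. -/
def top6pp (k : ℕ) : L6pp k :=
  ⟨fun _ => k, fun _ => le_rfl, fun _ _ _ => le_rfl, trivial⟩

attribute [local instance 100] LieRing.ofAssociativeRing

/-!
Extend the minuscule poset by a virtual position below it, labeled `k`, and one above it, labeled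
`0`. For a labeling `t` and a color `i`, the squared coefficients of the color-`i` edges at `t` are,
up to sign, the residues of a rational function of degree `0` whose zeros are shifted labels of the
positions of color adjacent to `i`, and whose poles are `t x - rank x / 2` and
`t x - rank x / 2 - 1` for `x` of color `i`. Hence `[X_i, Y_i]` is diagonal, and its entries, the
sums of all residues, are given by a linear form `wt i` in the labels and `k`. Raising at `x`
commutes with lowering at `y ≠ x` because the label at `y` enters the coefficient at `x` through a
single factor, and these factors are compatible with exchanging `x` and `y`. The remaining Serre
relations hold in every finite-dimensional representation by `𝔰𝔩₂`-theory.

That `m_i = wt i` follows from the symmetry `u ↦ s + r - u` of the set of labelings that agree with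
`t` at all colors but `i`, where `s` and `r` are its extreme elements: on this set `wt i` is
`2 * rk` up to a constant, and its sum vanishes, being the trace of a commutator.

A vector killed by all `X_i` is a multiple of `v_max`, so `v_max` lies in every nonzero submodule.
Since `Y_i` is the transpose of `X_i`, the annihilator of a proper submodule is nonzero and
invariant under all `X_i`, so it too contains `v_max`, contradicting `v_max ⬝ᵥ v_max = 1`.
-/

/-! ### Partial fractions and signs of products -/

section Products

open Polynomial Finset

variable {K ι κ : Type*} {A : Finset ι} {B : Finset κ}

theorem card_filter_erase_le_card_filter_erase [DecidableEq ι] [DecidableEq κ] [DecidableEq K]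
    {p : ι → K} {b : κ → K} {i : ι} {y : κ} (hi : i ∈ A) (hy : y ∈ B) (hyi : b y = p i)
    (hmult : ∀ v, 1 < #{l ∈ A | p l = v} → #{l ∈ A | p l = v} ≤ #{z ∈ B | b z = v}) (v : K)
    (hv : 1 < #{l ∈ A.erase i | p l = v}) :
    #{l ∈ A.erase i | p l = v} ≤ #{z ∈ B.erase y | b z = v} := by
  have hlt := hv.trans_le (card_le_card (filter_subset_filter (p · = v) (erase_subset i A)))
  have hle := hmult v hlt
  rw [filter_erase, filter_erase]
  obtain rfl | hvi := eq_or_ne (p i) v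
  · rw [card_erase_of_mem (by simp [hi]), card_erase_of_mem (by simp [hy, hyi])]
    exact Nat.sub_le_sub_right hle 1
  · rwa [erase_eq_of_notMem (by simp [hvi]), erase_eq_of_notMem (by simp [hyi, hvi])]

variable [Field K]

theorem sum_prod_sub_div_prod_sub_of_injOn [DecidableEq ι] (hcard : #A = #B) {p : ι → K}
    (hp : Set.InjOn p A) (b : κ → K) :
    ∑ i ∈ A, (∏ y ∈ B, (p i - b y)) / ∏ j ∈ A.erase i, (p i - p j) =
      ∑ i ∈ A, p i - ∑ y ∈ B, b y := by
  obtain rfl | hA := A.eq_empty_or_nonempty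
  · obtain rfl : B = ∅ := card_eq_zero.1 (by simpa using hcard.symm)
    simp
  set Q : K[X] := ∏ y ∈ B, (X - C (b y))
  set D : K[X] := ∏ i ∈ A, (X - C (p i))
  have hQ : Q.Monic := monic_prod_of_monic _ _ fun y _ => monic_X_sub_C _
  have hD : D.Monic := monic_prod_of_monic _ _ fun i _ => monic_X_sub_C _
  have hQdeg : Q.degree = #A := by
    rw [degree_eq_natDegree hQ.ne_zero, natDegree_finsetProd_X_sub_C_eq_card, hcard]
  have hDdeg : D.degree = #A := by
    rw [degree_eq_natDegree hD.ne_zero, natDegree_finsetProd_X_sub_C_eq_card]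
  have hdeg : (Q - D).degree < #A := hQdeg ▸ degree_sub_lt_left (hQdeg.trans hDdeg.symm)
    hQ.ne_zero (hQ.leadingCoeff.trans hD.leadingCoeff.symm)
  have heval : ∀ i ∈ A, (Q - D).eval (p i) = ∏ y ∈ B, (p i - b y) := fun i hi => by
    have hDi : D.eval (p i) = 0 := by
      rw [eval_prod]
      exact prod_eq_zero hi (by simp)
    rw [eval_sub, hDi, sub_zero, eval_prod]
    simp
  calc _ = ∑ i ∈ A, (Q - D).eval (p i) / ∏ j ∈ A.erase i, (p i - p j) :=
        sum_congr rfl fun i hi => by rw [heval i hi]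
    _ = (Q - D).coeff (#A - 1) := (Lagrange.coeff_eq_sum hp hdeg).symm
    _ = _ := by
        rw [coeff_sub, prod_X_sub_C_coeff_card_pred A p hA.card_pos, hcard,
          prod_X_sub_C_coeff_card_pred B b (hcard ▸ hA.card_pos)]
        ring

theorem prod_sub_div_prod_sub_eq_erase [DecidableEq ι] [DecidableEq κ] {p : ι → K} {b : κ → K}
    {i l : ι} {y z : κ} (hi : i ∈ A) (hil : i ≠ l) (hy : y ∈ B) (hz : z ∈ B) (hyz : y ≠ z)
    (hyi : b y = p i) (hzi : b z = p i) :
    (∏ w ∈ B, (p l - b w)) / ∏ j ∈ A.erase l, (p l - p j) =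
      (∏ w ∈ B.erase y, (p l - b w)) / ∏ j ∈ (A.erase i).erase l, (p l - p j) := by
  obtain hl | hl := eq_or_ne (p l) (p i)
  · rw [prod_eq_zero hy (by rw [hl, hyi, sub_self]),
      prod_eq_zero (mem_erase.2 ⟨hyz.symm, hz⟩) (by rw [hl, hzi, sub_self]), zero_div, zero_div]
  · rw [← mul_prod_erase B _ hy, ← mul_prod_erase (A.erase l) _ (mem_erase.2 ⟨hil, hi⟩), hyi,
      erase_right_comm, mul_div_mul_left _ _ (sub_ne_zero.2 hl)]

/-- A pole of multiplicity `m ≥ 2` is harmless when it is matched by `m` zeros: on the left-hand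
side the corresponding terms are `0 / 0 = 0`. -/
theorem sum_prod_sub_div_prod_sub [DecidableEq ι] [DecidableEq K]
    (hcard : #A = #B) {p : ι → K} {b : κ → K}
    (hmult : ∀ v, 1 < #{i ∈ A | p i = v} → #{i ∈ A | p i = v} ≤ #{y ∈ B | b y = v}) :
    ∑ i ∈ A, (∏ y ∈ B, (p i - b y)) / ∏ j ∈ A.erase i, (p i - p j) =
      ∑ i ∈ A, p i - ∑ y ∈ B, b y := by
  classical
  induction hn : #A generalizing A B with
  | zero =>
    obtain rfl := card_eq_zero.1 hn
    exact sum_prod_sub_div_prod_sub_of_injOn hcard (by simp) b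
  | succ n ih =>
    by_cases hp : Set.InjOn p A
    · exact sum_prod_sub_div_prod_sub_of_injOn hcard hp b
    obtain ⟨i, hi, j, hj, hij, hne⟩ : ∃ i ∈ A, ∃ j ∈ A, p i = p j ∧ i ≠ j := by
      simpa [Set.InjOn] using hp
    have hpoles : 1 < #{l ∈ A | p l = p i} :=
      one_lt_card.2 ⟨i, by simp [hi], j, by simp [hj, hij], hne⟩
    have hzeros : 1 < #{y ∈ B | b y = p i} := hpoles.trans_le (hmult _ hpoles)
    obtain ⟨y, hy, z, hz, hyz⟩ := one_lt_card.1 hzeros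
    rw [mem_filter] at hy hz
    have hcard' : #(A.erase i) = #(B.erase y) := by
      rw [card_erase_of_mem hi, card_erase_of_mem hy.1, hcard]
    have hmult' := card_filter_erase_le_card_filter_erase hi hy.1 hy.2 hmult
    have hterm (l) (hl : l ∈ A.erase i) := prod_sub_div_prod_sub_eq_erase hi
      (ne_of_mem_erase hl).symm hy.1 hz.1 hyz hy.2 hz.2
    rw [← add_sum_erase A _ hi, prod_eq_zero hy.1 (by rw [hy.2, sub_self]), zero_div, zero_add,
      sum_congr rfl hterm, ih hcard' hmult' (by rw [card_erase_of_mem hi, hn, Nat.add_sub_cancel]),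
      ← add_sum_erase A p hi, ← add_sum_erase B b hy.1, hy.2]
    ring

/-- The pair of poles `a x` (at `(x, true)`) and `a x - 1` (at `(x, false)`). -/
def doubledPole (a : ι → K) (q : ι × Bool) : K := if q.2 then a q.1 else a q.1 - 1

theorem prod_erase_sub_doubledPole [DecidableEq ι] (a : ι → K) {x : ι} (hx : x ∈ A) (β : Bool)
    (w : K) :
    ∏ q ∈ (A ×ˢ univ).erase (x, β), (w - doubledPole a q) =
      (w - doubledPole a (x, !β)) * ∏ z ∈ A.erase x, (w - a z) * (w - a z + 1) := by
  have hsplit : (A ×ˢ univ).erase (x, β) = insert (x, !β) (A.erase x ×ˢ univ) := by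
    ext ⟨z, γ⟩
    by_cases hzx : z = x <;> cases β <;> cases γ <;> simp [hzx, hx]
  rw [hsplit, prod_insert (by simp), prod_product]
  simp [doubledPole, sub_add]

theorem card_filter_doubledPole_le [DecidableEq K] {a : ι → K} (ha : Set.InjOn a A) {b : κ → K}
    (hmult : ∀ x ∈ A, ∀ z ∈ A, a x - 1 = a z → 1 < #{y ∈ B | b y = a z}) (v : K)
    (hv : 1 < #{q ∈ A ×ˢ univ | doubledPole a q = v}) :
    #{q ∈ A ×ˢ univ | doubledPole a q = v} ≤ #{y ∈ B | b y = v} := by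
  set S : Finset (ι × Bool) := {q ∈ A ×ˢ univ | doubledPole a q = v} with hS
  have hsnd : Set.InjOn Prod.snd (S : Set (ι × Bool)) := by
    rintro ⟨x, β⟩ hx ⟨z, γ⟩ hz (rfl : β = γ)
    simp only [hS, coe_filter, mem_product, mem_univ, and_true, Set.mem_ofPred_eq] at hx hz
    have hxz : a x = a z := by cases β <;> simpa [doubledPole] using hx.2.trans hz.2.symm
    rw [ha hx.1 hz.1 hxz]
  have himage : image Prod.snd S = univ := by
    refine (card_eq_iff_eq_univ _).1 (le_antisymm (card_le_univ _) ?_)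
    rwa [card_image_of_injOn hsnd, Fintype.card_bool]
  have hlift : ∀ β, ∃ x ∈ A, doubledPole a (x, β) = v := fun β => by
    simpa [hS] using himage.ge (mem_univ β)
  obtain ⟨z, hz, hzv⟩ := hlift true
  obtain ⟨x, hx, hxv⟩ := hlift false
  simp only [doubledPole, if_true, Bool.false_eq_true, if_false] at hzv hxv
  rw [← card_image_of_injOn hsnd, himage, card_univ, Fintype.card_bool, ← hzv]
  exact hmult x hx z hz (hxv.trans hzv.symm)

theorem sum_sub_eq_of_doubledPole [DecidableEq ι] [DecidableEq K]
    (hcard : #B = 2 * #A) {a : ι → K} (ha : Set.InjOn a A) {b : κ → K}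
    (hmult : ∀ x ∈ A, ∀ z ∈ A, a x - 1 = a z → 1 < #{y ∈ B | b y = a z}) :
    ∑ x ∈ A, ((∏ y ∈ B, (a x - b y)) / (∏ z ∈ A.erase x, (a x - a z) * (a x - a z + 1)) -
        (∏ y ∈ B, (a x - 1 - b y)) /
          (∏ z ∈ A.erase x, (a x - 1 - a z) * (a x - 1 - a z + 1))) =
      ∑ x ∈ A, (2 * a x - 1) - ∑ y ∈ B, b y := by
  have key := sum_prod_sub_div_prod_sub (A := A ×ˢ (univ : Finset Bool))
    (by rw [card_product, card_univ, Fintype.card_bool, hcard, mul_comm])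
    (card_filter_doubledPole_le ha hmult)
  rw [sum_product, sum_product] at key
  simp only [Fintype.sum_bool] at key
  convert key using 1
  · refine sum_congr rfl fun x hx => ?_
    rw [prod_erase_sub_doubledPole a hx, prod_erase_sub_doubledPole a hx]
    simp [doubledPole, sub_eq_add_neg, div_neg]
  · congr 1
    exact sum_congr rfl fun x _ => by simp [doubledPole]; ring

theorem prod_neg_of_odd {R : Type*} [CommRing R] [LinearOrder R] [IsStrictOrderedRing R] {f : ι → R}
    (p : ι → Prop) [DecidablePred p] (hneg : ∀ i ∈ A, p i → f i < 0)
    (hpos : ∀ i ∈ A, ¬p i → 0 < f i) (hodd : Odd #{i ∈ A | p i}) : ∏ i ∈ A, f i < 0 := by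
  rw [← prod_filter_mul_prod_filter_not A p]
  refine mul_neg_of_neg_of_pos ?_ (prod_pos fun i hi => ?_)
  · have h : 0 < ∏ i ∈ A with p i, -f i := prod_pos fun i hi =>
      neg_pos.2 (hneg i (mem_filter.1 hi).1 (mem_filter.1 hi).2)
    rwa [prod_neg, hodd.neg_one_pow, neg_one_mul, neg_pos] at h
  · exact hpos i (mem_filter.1 hi).1 (mem_filter.1 hi).2

end Products

/-! ### Representations of the Serre presentation -/

namespace CL

theorem ad_pow_apply_eq_zero {K L : Type*} [Field K] [CharZero K] [LieRing L] [LieAlgebra K L]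
    [Module.Finite K L] {e f h z : L} (hef : ⁅e, f⁆ = h) (hhe : ⁅h, e⁆ = (2 : ℕ) • e)
    (hhf : ⁅h, f⁆ = -((2 : ℕ) • f)) {n : ℕ} (hhz : ⁅h, z⁆ = -(n • z)) (hfz : ⁅f, z⁆ = 0) :
    (LieAlgebra.ad K L e ^ (n + 1)) z = 0 := by
  obtain rfl | hz := eq_or_ne z 0
  · exact map_zero _
  obtain rfl | hh := eq_or_ne h 0
  · have he : e = 0 := by
      rw [zero_lie, eq_comm, ← Nat.cast_smul_eq_nsmul K] at hhe
      exact (smul_eq_zero.1 hhe).resolve_left (by norm_num)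
    simp [he]
  have htriple : IsSl2Triple (-h) f e :=
    { h_ne_zero := neg_ne_zero.2 hh
      lie_e_f := by rw [← lie_skew, hef]
      lie_h_e_nsmul := by rw [neg_lie, hhf, neg_neg]
      lie_h_f_nsmul := by rw [neg_lie, hhe] }
  have hprim : htriple.HasPrimitiveVectorWith z (n : K) :=
    { ne_zero := hz
      lie_h := by rw [neg_lie, hhz, neg_neg, Nat.cast_smul_eq_nsmul]
      lie_e := hfz }
  exact hprim.pow_toEnd_f_eq_zero_of_eq_nat rfl

theorem map_ad_pow {R L L' : Type*} [CommRing R] [LieRing L] [LieAlgebra R L] [LieRing L']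
    [LieAlgebra R L'] (f : L →ₗ⁅R⁆ L') (n : ℕ) (a b : L) :
    f ((LieAlgebra.ad R L a ^ n) b) = (LieAlgebra.ad R L' (f a) ^ n) (f b) := by
  induction n with
  | zero => rfl
  | succ n ih =>
    rw [pow_succ', pow_succ', Module.End.mul_apply, Module.End.mul_apply, LieAlgebra.ad_apply,
      LieAlgebra.ad_apply, LieHom.map_lie, ih]

section Presentation

variable {I : Type} {A : I → I → ℤ} {L : Type*} [LieRing L]

/-- The defining relations of `𝔤(A)` other than the two Serre relations. -/
structure WeylRelations (A : I → I → ℤ) (x y h : I → L) : Prop where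
  lie_h_h (i j) : ⁅h i, h j⁆ = 0
  lie_x_y_self (i) : ⁅x i, y i⁆ = h i
  lie_x_y_of_ne {i j} : i ≠ j → ⁅x i, y j⁆ = 0
  lie_h_x (i j) : ⁅h i, x j⁆ = A j i • x j
  lie_h_y (i j) : ⁅h i, y j⁆ = -(A j i • y j)

namespace WeylRelations

variable {x y h : I → L}

theorem swap (hw : WeylRelations A x y h) : WeylRelations A y x fun i => -h i where
  lie_h_h i j := by rw [neg_lie, lie_neg, hw.lie_h_h, neg_zero, neg_zero]
  lie_x_y_self i := by rw [← lie_skew, hw.lie_x_y_self]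
  lie_x_y_of_ne hij := by rw [← lie_skew, hw.lie_x_y_of_ne hij.symm, neg_zero]
  lie_h_x i j := by rw [neg_lie, hw.lie_h_y, neg_neg]
  lie_h_y i j := by rw [neg_lie, hw.lie_h_x]

variable [LieAlgebra ℂ L] [Module.Finite ℂ L]

theorem ad_pow_x_eq_zero (hw : WeylRelations A x y h) (hdiag : ∀ i, A i i = 2)
    (hoff : ∀ i j, i ≠ j → A i j ≤ 0) {i j : I} (hij : i ≠ j) :
    (LieAlgebra.ad ℂ L (x i) ^ (1 - A j i).toNat) (x j) = 0 := by
  obtain ⟨n, hn⟩ := Int.eq_ofNat_of_zero_le (neg_nonneg.2 (hoff j i hij.symm))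
  have hpow : (1 - A j i).toNat = n + 1 := by lia
  rw [hpow]
  refine ad_pow_apply_eq_zero (hw.lie_x_y_self i) ?_ ?_ ?_ (hw.swap.lie_x_y_of_ne hij)
  · rw [hw.lie_h_x, hdiag, ← natCast_zsmul, Nat.cast_ofNat]
  · rw [hw.lie_h_y, hdiag, ← natCast_zsmul, Nat.cast_ofNat]
  · rw [hw.lie_h_x, ← natCast_zsmul, ← hn, neg_smul, neg_neg]

theorem serreIdeal_le_ker (hw : WeylRelations A x y h) (hdiag : ∀ i, A i i = 2)
    (hoff : ∀ i j, i ≠ j → A i j ≤ 0) {f : FreeLieAlgebra ℂ (SGen I) →ₗ⁅ℂ⁆ L}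
    (hfx : ∀ i, f (gx i) = x i) (hfy : ∀ i, f (gy i) = y i) (hfh : ∀ i, f (gh i) = h i) :
    serreIdeal A ≤ f.ker := by
  rw [serreIdeal, LieSubmodule.lieSpan_le]
  intro z hz
  rw [SetLike.mem_coe, LieHom.mem_ker]
  rcases hz with (((((⟨i, j, rfl⟩ | ⟨i, rfl⟩) | ⟨i, j, hij, rfl⟩) | ⟨i, j, rfl⟩) | ⟨i, j, rfl⟩) |
    ⟨i, j, hij, rfl⟩) | ⟨i, j, hij, rfl⟩
  · rw [LieHom.map_lie, hfh, hfh, hw.lie_h_h]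
  · rw [map_sub, LieHom.map_lie, hfx, hfy, hfh, hw.lie_x_y_self, sub_self]
  · rw [LieHom.map_lie, hfx, hfy, hw.lie_x_y_of_ne hij]
  · rw [map_sub, LieHom.map_lie, map_zsmul, hfh, hfx, hw.lie_h_x, sub_self]
  · rw [map_add, LieHom.map_lie, map_zsmul, hfh, hfy, hw.lie_h_y, neg_add_cancel]
  · rw [map_ad_pow, hfx, hfx, hw.ad_pow_x_eq_zero hdiag hoff hij]
  · rw [map_ad_pow, hfy, hfy, hw.swap.ad_pow_x_eq_zero hdiag hoff hij]

theorem exists_lieHom (hw : WeylRelations A x y h) (hdiag : ∀ i, A i i = 2)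
    (hoff : ∀ i j, i ≠ j → A i j ≤ 0) :
    ∃ φ : gLie A →ₗ⁅ℂ⁆ L, ∀ i, φ (px A i) = x i ∧ φ (py A i) = y i ∧ φ (ph A i) = h i := by
  let f : FreeLieAlgebra ℂ (SGen I) →ₗ⁅ℂ⁆ L := FreeLieAlgebra.lift ℂ fun
    | .X i => x i
    | .Y i => y i
    | .H i => h i
  have hfx (i) : f (gx i) = x i := FreeLieAlgebra.lift_of_apply _ _
  have hfy (i) : f (gy i) = y i := FreeLieAlgebra.lift_of_apply _ _
  have hfh (i) : f (gh i) = h i := FreeLieAlgebra.lift_of_apply _ _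
  have hker : (serreIdeal A).toSubmodule ≤ LinearMap.ker f.toLinearMap :=
    hw.serreIdeal_le_ker hdiag hoff hfx hfy hfh
  let g : gLie A →ₗ[ℂ] L := (serreIdeal A).toSubmodule.liftQ f.toLinearMap hker
  have hg : ∀ {a b : gLie A}, g ⁅a, b⁆ = ⁅g a, g b⁆ := fun {a b} => by
    obtain ⟨a, rfl⟩ := LieSubmodule.Quotient.surjective_mk' (serreIdeal A) a
    obtain ⟨b, rfl⟩ := LieSubmodule.Quotient.surjective_mk' (serreIdeal A) b
    exact LieHom.map_lie f a b
  exact ⟨{ g with map_lie' := hg }, fun i => ⟨hfx i, hfy i, hfh i⟩⟩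

end WeylRelations

end Presentation

end CL

/-! ### Minuscule colored posets -/

/-- A type with two points `bot` and `top` adjoined. -/
inductive WithEnds (α : Type) : Type
  | bot
  | top
  | pos (y : α)
  deriving DecidableEq, Fintype

/-- A finite poset of positions `(color, rank)`, ordered by `CL.ple Adj pos`, with two virtual
positions: a bottom one of color adjacent to `botColor` at rank `-1`, and a top one of color
adjacent to `topColor` at rank `height + 1`. -/
structure ColoredPoset (N : Type) where
  Adj : N → N → Prop
  [decAdj : DecidableRel Adj]
  pos : Finset (N × ℕ)
  botColor : N
  topColor : N
  height : ℕ

attribute [instance] ColoredPoset.decAdj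

namespace ColoredPoset

open Finset

variable {N : Type} {P : ColoredPoset N}

/-- The type of positions. -/
abbrev Pos (P : ColoredPoset N) : Type := {x : N × ℕ // x ∈ P.pos}

/-- The color of a position. -/
abbrev color (x : P.Pos) : N := x.1.1

/-- The rank of a position. -/
abbrev rank (x : P.Pos) : ℕ := x.1.2

/-- The positions together with the virtual bottom and top positions. -/
abbrev ExtPos (P : ColoredPoset N) : Type := WithEnds P.Pos

/-- The rank of a possibly virtual position. -/
def extRank : P.ExtPos → ℤ
  | .bot => -1
  | .top => P.height + 1
  | .pos y => rank y

/-- `P.IsNbr i o` says that the color of the possibly virtual position `o` is adjacent to `i`. -/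
def IsNbr (P : ColoredPoset N) (i : N) : P.ExtPos → Prop
  | .bot => i = P.botColor
  | .top => i = P.topColor
  | .pos y => P.Adj i (color y)

/-- There is a chain of `n` steps from `x` to `y`; unlike `CL.ple`, this is decidable by
evaluation. -/
def Reaches (P : ColoredPoset N) : ℕ → N × ℕ → N × ℕ → Prop
  | 0, x, y => x = y
  | n + 1, x, y => ∃ w ∈ P.pos, (P.Adj x.1 w.1 ∧ w.2 = x.2 + 1) ∧ P.Reaches n w y

theorem ple_of_reaches {n : ℕ} {x y : N × ℕ} (hx : x ∈ P.pos) (h : P.Reaches n x y) :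
    CL.ple P.Adj P.pos x y := by
  induction n generalizing x with
  | zero => exact h ▸ .refl
  | succ n ih =>
    obtain ⟨w, hw, hxw, hwy⟩ := h
    exact .head ⟨hx, hw, hxw⟩ (ih hw hwy)

theorem rank_le_of_ple {x y : N × ℕ} (h : CL.ple P.Adj P.pos x y) : x.2 ≤ y.2 := by
  induction h with
  | refl => exact le_rfl
  | tail _ hstep ih => exact ih.trans (hstep.2.2.2 ▸ Nat.le_succ _)

theorem eq_or_exists_step_of_ple {x y : P.Pos} (h : CL.ple P.Adj P.pos x.1 y.1) :
    x = y ∨ ∃ w : P.Pos, P.Adj (color x) (color w) ∧ rank w = rank x + 1 ∧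
      CL.ple P.Adj P.pos w.1 y.1 :=
  h.cases_head.imp Subtype.ext fun ⟨w, ⟨_, hw, hadj, hrank⟩, hwy⟩ => ⟨⟨w, hw⟩, hadj, hrank, hwy⟩

theorem eq_or_rank_lt_of_ple {x y : P.Pos} (h : CL.ple P.Adj P.pos x.1 y.1) :
    x = y ∨ rank x < rank y :=
  (eq_or_exists_step_of_ple h).imp_right fun ⟨_, _, hw, hwy⟩ =>
    Nat.lt_of_succ_le (hw.ge.trans (rank_le_of_ple hwy))

theorem eq_of_color_eq_of_rank_eq {x y : P.Pos} (hxy : color x = color y)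
    (hrank : rank x = rank y) : x = y :=
  Subtype.ext (Prod.ext hxy hrank)

theorem ple_or_ple_of_reaches {x y : P.Pos} (h : P.Reaches (rank y - rank x) x.1 y.1 ∨
    P.Reaches (rank x - rank y) y.1 x.1) :
    CL.ple P.Adj P.pos x.1 y.1 ∨ CL.ple P.Adj P.pos y.1 x.1 :=
  h.imp (ple_of_reaches x.2) (ple_of_reaches y.2)

variable {k : ℕ}

/-- The order-reversing labelings of the positions by `0, …, k`. -/
abbrev Labeling (P : ColoredPoset N) (k : ℕ) : Type := CL.Elt P.Adj P.pos k fun _ => True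

/-- The value of a labeling, set to `k` at the virtual bottom and to `0` at the virtual top. -/
def label (t : P.Labeling k) : P.ExtPos → ℕ
  | .bot => k
  | .top => 0
  | .pos y => t.1 y

/-- The covering relation of labelings that raises the value at `x` by one. -/
def Raises (x : P.Pos) (r s : P.Labeling k) : Prop := s.1 x = r.1 x + 1 ∧ ∀ y ≠ x, s.1 y = r.1 y

theorem edge_iff_exists_raises {i : N} {r s : P.Labeling k} :
    CL.edge i r s ↔ ∃ x, color x = i ∧ Raises x r s := Iff.rfl

/-- A labeling constructed from a function that is order-reversing along the steps. -/
def ofSteps (c : P.Pos → ℕ) (hle : ∀ x, c x ≤ k)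
    (hstep : ∀ x y, P.Adj (color x) (color y) → rank y = rank x + 1 → c y ≤ c x) :
    P.Labeling k :=
  ⟨c, hle, fun x y hyx => by
    obtain ⟨x, hx⟩ := x
    replace hyx : CL.ple P.Adj P.pos y.1 x := hyx
    induction hyx with
    | refl => exact le_rfl
    | tail _ hzx ih => exact (hstep ⟨_, hzx.1⟩ ⟨_, hx⟩ hzx.2.2.1 hzx.2.2.2).trans (ih hzx.1),
    trivial⟩

variable {x y : P.Pos} {o : P.ExtPos} {r s t u : P.Labeling k}

theorem label_le (t : P.Labeling k) (o : P.ExtPos) : label t o ≤ k := by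
  cases o with
  | bot => exact le_rfl
  | top => exact Nat.zero_le k
  | pos y => exact t.2.1 y

/-- The pole of the coefficients of the color of `x` contributed by the position `x`. -/
def pole (t : P.Labeling k) (x : P.Pos) : ℚ := t.1 x - rank x / 2

/-- The zero of the coefficients of an adjacent color contributed by the position `o`. -/
def zero (t : P.Labeling k) (o : P.ExtPos) : ℚ := label t o - (extRank o + 1) / 2

/-- `SameOff i t u` says that the labelings `t` and `u` agree at all positions whose color is not
`i`. -/
def SameOff (i : N) (t u : P.Labeling k) : Prop := ∀ x, color x ≠ i → u.1 x = t.1 x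

namespace Raises

theorem left_unique (h : Raises x r s) (h' : Raises x t s) : r = t := by
  refine Subtype.ext (funext fun y => ?_)
  obtain rfl | hy := eq_or_ne y x
  · exact Nat.succ_injective (h.1.symm.trans h'.1)
  · exact (h.2 y hy).symm.trans (h'.2 y hy)

theorem right_unique (h : Raises x r s) (h' : Raises x r t) : s = t := by
  refine Subtype.ext (funext fun y => ?_)
  obtain rfl | hy := eq_or_ne y x
  · exact h.1.trans h'.1.symm
  · exact (h.2 y hy).trans (h'.2 y hy).symm

theorem pos_unique (h : Raises x r s) (h' : Raises y r s) : x = y := by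
  by_contra hxy
  exact (Nat.succ_ne_self _) (h.1.symm.trans (h'.2 x hxy))

theorem label_eq (h : Raises x r s) (ho : o ≠ .pos x) : label s o = label r o := by
  cases o with
  | bot | top => rfl
  | pos y => exact h.2 y fun hy => ho (hy ▸ rfl)

theorem exists_inf (hxy : x ≠ y) (hsu : Raises y s u) (htu : Raises x t u) :
    ∃ r, Raises x r s ∧ Raises y r t := by
  refine ⟨⟨fun z => min (s.1 z) (t.1 z), fun z => (min_le_left _ _).trans (s.2.1 z),
    fun z w hwz => min_le_min (s.2.2.1 z w hwz) (t.2.2.1 z w hwz), trivial⟩,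
    ⟨?_, fun z hz => ?_⟩, ⟨?_, fun z hz => ?_⟩⟩
  · have := hsu.2 x hxy; have := htu.1; dsimp only; lia
  · obtain rfl | hzy := eq_or_ne z y
    · have := hsu.1; have := htu.2 z hz; dsimp only; lia
    · have := hsu.2 z hzy; have := htu.2 z hz; dsimp only; lia
  · have := hsu.1; have := htu.2 y hxy.symm; dsimp only; lia
  · obtain rfl | hzx := eq_or_ne z x
    · have := htu.1; have := hsu.2 z hz; dsimp only; lia
    · have := hsu.2 z hz; have := htu.2 z hzx; dsimp only; lia

theorem exists_sup (hxy : x ≠ y) (hrs : Raises x r s) (hrt : Raises y r t) :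
    ∃ u, Raises y s u ∧ Raises x t u := by
  refine ⟨⟨fun z => max (s.1 z) (t.1 z), fun z => max_le (s.2.1 z) (t.2.1 z),
    fun z w hwz => max_le_max (s.2.2.1 z w hwz) (t.2.2.1 z w hwz), trivial⟩,
    ⟨?_, fun z hz => ?_⟩, ⟨?_, fun z hz => ?_⟩⟩
  · have := hrs.2 y hxy.symm; have := hrt.1; dsimp only; lia
  · obtain rfl | hzx := eq_or_ne z x
    · have := hrs.1; have := hrt.2 z hz; dsimp only; lia
    · have := hrs.2 z hzx; have := hrt.2 z hz; dsimp only; lia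
  · have := hrs.1; have := hrt.2 x hxy; dsimp only; lia
  · obtain rfl | hzy := eq_or_ne z y
    · have := hrt.1; have := hrs.2 z hz; dsimp only; lia
    · have := hrs.2 z hz; have := hrt.2 z hzy; dsimp only; lia

theorem pole_self (h : Raises x r s) : pole s x = pole r x + 1 := by
  simp only [pole, h.1]
  push_cast
  ring

theorem pole_eq (h : Raises x r s) (hy : y ≠ x) : pole s y = pole r y := by
  rw [pole, pole, h.2 y hy]

theorem zero_eq (h : Raises x r s) (ho : o ≠ .pos x) : zero s o = zero r o := by
  rw [zero, zero, h.label_eq ho]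

theorem sameOff_iff (h : Raises x r s) (t : P.Labeling k) :
    SameOff (color x) t r ↔ SameOff (color x) t s :=
  forall₂_congr fun y hy => by rw [h.2 y fun hyx => hy (hyx ▸ rfl)]

end Raises

theorem sameOff_of_mem_comp {i : N} (h : u ∈ CL.comp i t) : SameOff i t u := by
  induction h with
  | refl => exact fun _ _ => rfl
  | tail _ hedge ih =>
    obtain ⟨x, rfl, hx⟩ | ⟨x, rfl, hx⟩ := hedge
    · exact (Raises.sameOff_iff hx t).1 ih
    · exact (Raises.sameOff_iff hx t).2 ih

/-- The maximal labeling. -/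
def maximum (P : ColoredPoset N) (k : ℕ) : P.Labeling k :=
  ⟨fun _ => k, fun _ => le_rfl, fun _ _ _ => le_rfl, trivial⟩

theorem rk_le_rk_maximum (t : P.Labeling k) : CL.rk t ≤ CL.rk (P.maximum k) :=
  sum_le_sum fun x _ => t.2.1 x

theorem exists_minimal_of_ne_maximum (h : t ≠ P.maximum k) :
    ∃ x, t.1 x < k ∧ ∀ y, t.1 y < k → rank x ≤ rank y := by
  have hlow : ({x | t.1 x < k} : Finset P.Pos).Nonempty := by
    by_contra! hempty
    refine h (Subtype.ext (funext fun x => (t.2.1 x).antisymm (not_lt.1 fun hx => ?_)))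
    exact filter_eq_empty_iff.1 hempty (mem_univ x) hx
  obtain ⟨x, hx, hmin⟩ := exists_min_image _ rank hlow
  simp only [mem_filter_univ] at hx hmin
  exact ⟨x, hx, hmin⟩

theorem Raises.rk_eq (h : Raises x r s) : CL.rk s = CL.rk r + 1 := by
  classical
  simp only [CL.rk]
  rw [← add_sum_erase _ _ (mem_attach _ x), ← add_sum_erase _ r.1 (mem_attach _ x), h.1,
    sum_congr rfl fun y hy => h.2 y (ne_of_mem_erase hy)]
  ring

/-- The sum of the values of a labeling, each weighted by the rank of its position. -/
def rankSum (t : P.Labeling k) : ℕ := ∑ x, rank x * t.1 x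

theorem Raises.rankSum_eq (h : Raises x r s) : rankSum s = rankSum r + rank x := by
  classical
  have hy (y) (hy : y ∈ univ.erase x) : rank y * s.1 y = rank y * r.1 y := by
    rw [h.2 y (ne_of_mem_erase hy)]
  rw [rankSum, rankSum, ← add_sum_erase _ _ (mem_univ x), sum_congr rfl hy,
    ← add_sum_erase univ (fun y => rank y * r.1 y) (mem_univ x), h.1]
  ring

theorem exists_isGreatest_rk_comp (i : N) (t : P.Labeling k) :
    ∃ r ∈ CL.comp i t, IsGreatest (CL.rk '' CL.comp i t) (CL.rk r) ∧
      ∀ x, color x = i → ¬∃ v, Raises x r v := by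
  obtain ⟨r, hr, hmax⟩ :=
    Set.exists_max_image (CL.comp i t) CL.rk (Set.toFinite _) ⟨t, .refl⟩
  refine ⟨r, hr, ⟨⟨r, hr, rfl⟩, Set.forall_mem_image.2 hmax⟩, ?_⟩
  rintro x hx ⟨v, hv⟩
  have := hmax v (.tail hr (.inl ⟨x, hx, hv⟩))
  rw [hv.rk_eq] at this
  lia

theorem exists_isLeast_rk_comp (i : N) (t : P.Labeling k) :
    ∃ s ∈ CL.comp i t, IsLeast (CL.rk '' CL.comp i t) (CL.rk s) ∧
      ∀ x, color x = i → ¬∃ v, Raises x v s := by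
  obtain ⟨s, hs, hmin⟩ :=
    Set.exists_min_image (CL.comp i t) CL.rk (Set.toFinite _) ⟨t, .refl⟩
  refine ⟨s, hs, ⟨⟨s, hs, rfl⟩, Set.forall_mem_image.2 hmin⟩, ?_⟩
  rintro x hx ⟨v, hv⟩
  have := hmin v (.tail hs (.inr ⟨x, hx, hv⟩))
  rw [hv.rk_eq] at this
  lia

variable [DecidableEq N]

instance (i : N) : DecidablePred (P.IsNbr i)
  | .bot => inferInstanceAs (Decidable (i = P.botColor))
  | .top => inferInstanceAs (Decidable (i = P.topColor))
  | .pos y => inferInstanceAs (Decidable (P.Adj i (color y)))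

instance (x : P.Pos) (r s : P.Labeling k) : Decidable (Raises x r s) :=
  inferInstanceAs (Decidable (_ ∧ _))

instance (i : N) (t u : P.Labeling k) : Decidable (SameOff i t u) :=
  inferInstanceAs (Decidable (∀ _, _ → _))

/-- The positions of color `i`. -/
def ofColor (P : ColoredPoset N) (i : N) : Finset P.Pos := {x | color x = i}

/-- The possibly virtual positions of color adjacent to `i`. -/
def nbr (P : ColoredPoset N) (i : N) : Finset P.ExtPos := {o | P.IsNbr i o}

/-- The Cartan matrix of the simply laced diagram `P.Adj`. -/
def cartan (P : ColoredPoset N) (i j : N) : ℤ := if i = j then 2 else if P.Adj i j then -1 else 0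

@[simp] theorem mem_ofColor {i : N} {x : P.Pos} : x ∈ P.ofColor i ↔ color x = i := by
  simp [ofColor]

theorem mem_nbr {i : N} {o : P.ExtPos} : o ∈ P.nbr i ↔ P.IsNbr i o := by
  simp [nbr]

@[simp] theorem pos_mem_nbr {i : N} {y : P.Pos} : .pos y ∈ P.nbr i ↔ P.Adj i (color y) := mem_nbr

@[simp] theorem top_mem_nbr {i : N} : .top ∈ P.nbr i ↔ i = P.topColor := mem_nbr

/-- The finite list of local conditions on a minuscule poset from which the representations are
built: positions of equal or adjacent colors form chains, every position has neighbours directly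
below and above it, positions of color `i` two ranks apart have two neighbours in between, and the
number, ranks and parity of the neighbours of a color are as in a minuscule weight diagram. -/
structure IsMinuscule (P : ColoredPoset N) : Prop where
  adj_irrefl (i : N) : ¬P.Adj i i
  adj_symm {i j : N} : P.Adj i j → P.Adj j i
  rank_le (x : P.Pos) : rank x ≤ P.height
  comparable (x y : P.Pos) : color x = color y ∨ P.Adj (color x) (color y) →
    CL.ple P.Adj P.pos x.1 y.1 ∨ CL.ple P.Adj P.pos y.1 x.1
  exists_below (x : P.Pos) : ∃ o ∈ P.nbr (color x), extRank o + 1 = rank x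
  exists_above (x : P.Pos) : ∃ o ∈ P.nbr (color x), extRank o = rank x + 1
  one_lt_card_between (x z : P.Pos) : color x = color z → rank z = rank x + 2 →
    1 < #{o ∈ P.nbr (color x) | extRank o = rank x + 1}
  card_nbr (i : N) : #(P.nbr i) = 2 * #(P.ofColor i)
  sum_extRank (i : N) : ∑ o ∈ P.nbr i, extRank o = 2 * ∑ x ∈ P.ofColor i, (rank x : ℤ)
  odd_card_below (x : P.Pos) : Odd #{o ∈ P.nbr (color x) | extRank o < rank x}

instance decidableReaches : ∀ n x y, Decidable (P.Reaches n x y)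
  | 0, x, y => inferInstanceAs (Decidable (x = y))
  | n + 1, x, y =>
    have (w : N × ℕ) : Decidable (P.Reaches n w y) := decidableReaches n w y
    inferInstanceAs (Decidable (∃ w ∈ P.pos, (P.Adj x.1 w.1 ∧ w.2 = x.2 + 1) ∧ P.Reaches n w y))

namespace IsMinuscule

theorem ple_of_rank_lt (hP : P.IsMinuscule)
    (hxy : color x = color y ∨ P.Adj (color x) (color y)) (hlt : rank x < rank y) :
    CL.ple P.Adj P.pos x.1 y.1 :=
  (hP.comparable x y hxy).resolve_right fun h => hlt.not_ge (rank_le_of_ple h)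

theorem rank_ne_of_adj (hP : P.IsMinuscule) (hxy : P.Adj (color x) (color y)) :
    rank x ≠ rank y := fun hrank => by
  have hne : x ≠ y := fun h => hP.adj_irrefl (color y) (h ▸ hxy)
  obtain h | h := hP.comparable x y (.inr hxy)
  · exact (eq_or_rank_lt_of_ple h).elim hne fun hlt => hlt.ne hrank
  · exact (eq_or_rank_lt_of_ple h).elim hne.symm fun hlt => hlt.ne hrank.symm

theorem rank_add_two_le (hP : P.IsMinuscule) (hxy : color x = color y) (hlt : rank x < rank y) :
    rank x + 2 ≤ rank y := by
  obtain rfl | ⟨w, hadj, hrank, hwy⟩ :=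
    eq_or_exists_step_of_ple (hP.ple_of_rank_lt (.inl hxy) hlt)
  · exact absurd hlt (lt_irrefl _)
  obtain rfl | hlt' := eq_or_rank_lt_of_ple hwy
  · exact absurd (hxy ▸ hadj) (hP.adj_irrefl _)
  · lia

theorem extRank_ne_of_mem_nbr (hP : P.IsMinuscule) (ho : o ∈ P.nbr (color x)) :
    extRank o ≠ rank x := by
  cases o with
  | bot => simp only [extRank]; lia
  | top => have := hP.rank_le x; simp only [extRank]; lia
  | pos y => exact Nat.cast_injective.ne (hP.rank_ne_of_adj (pos_mem_nbr.1 ho)).symm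

theorem ne_pos_of_mem_nbr (hP : P.IsMinuscule) (ho : o ∈ P.nbr (color x)) : o ≠ .pos x := by
  rintro rfl
  exact hP.adj_irrefl _ (pos_mem_nbr.1 ho)

end IsMinuscule

theorem le_label_of_extRank_lt (hP : P.IsMinuscule) (t : P.Labeling k)
    (ho : o ∈ P.nbr (color x)) (hlt : extRank o < rank x) : t.1 x ≤ label t o := by
  cases o with
  | bot => exact t.2.1 x
  | top => have := hP.rank_le x; simp only [extRank] at hlt; lia
  | pos y =>
    exact t.2.2.1 x y <| hP.ple_of_rank_lt (.inr (hP.adj_symm (pos_mem_nbr.1 ho)))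
      (by simpa [extRank] using hlt)

theorem label_le_of_lt_extRank (hP : P.IsMinuscule) (t : P.Labeling k)
    (ho : o ∈ P.nbr (color x)) (hlt : rank x < extRank o) : label t o ≤ t.1 x := by
  cases o with
  | bot => simp only [extRank] at hlt; lia
  | top => exact Nat.zero_le _
  | pos y =>
    exact t.2.2.1 y x <| hP.ple_of_rank_lt (.inr (pos_mem_nbr.1 ho)) (by simpa [extRank] using hlt)

theorem le_of_rank_lt (hP : P.IsMinuscule) (t : P.Labeling k) (hxy : color x = color y)
    (hlt : rank x < rank y) : t.1 y ≤ t.1 x :=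
  t.2.2.1 y x (hP.ple_of_rank_lt (.inl hxy) hlt)

theorem exists_raises_iff (hP : P.IsMinuscule) :
    (∃ s, Raises x t s) ↔ ∀ o ∈ P.nbr (color x), extRank o + 1 = rank x → t.1 x < label t o := by
  constructor
  · rintro ⟨s, hs⟩ o ho hrank
    have hle := le_label_of_extRank_lt hP s ho (by lia)
    rwa [hs.label_eq (hP.ne_pos_of_mem_nbr ho), hs.1] at hle
  · intro h
    obtain ⟨o, ho, hrank⟩ := hP.exists_below x
    have hlt : t.1 x < k := (h o ho hrank).trans_le (label_le t o)
    refine ⟨ofSteps (Function.update t.1 x (t.1 x + 1)) (fun y => ?_) fun y z hyz hrank => ?_,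
      Function.update_self .., fun y hy => Function.update_of_ne hy ..⟩
    · obtain rfl | hy := eq_or_ne y x
      · simpa using hlt
      · simpa [hy] using t.2.1 y
    · have hle : t.1 z ≤ t.1 y := t.2.2.1 z y (.single ⟨y.2, z.2, hyz, hrank⟩)
      obtain rfl | hz := eq_or_ne z x
      · have hy : y ≠ z := fun hy => by subst hy; lia
        have := h (.pos y) (pos_mem_nbr.2 (hP.adj_symm hyz)) (by simp only [extRank]; lia)
        simpa [hy, label] using this
      · obtain rfl | hy := eq_or_ne y x
        · simpa [hz] using hle.trans (Nat.le_succ _)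
        · simpa [hz, hy] using hle

theorem exists_lowers_iff (hP : P.IsMinuscule) :
    (∃ r, Raises x r t) ↔ ∀ o ∈ P.nbr (color x), extRank o = rank x + 1 → label t o < t.1 x := by
  constructor
  · rintro ⟨r, hr⟩ o ho hrank
    have hle := label_le_of_lt_extRank hP r ho (by lia)
    rw [hr.label_eq (hP.ne_pos_of_mem_nbr ho), hr.1]
    exact Nat.lt_succ_of_le hle
  · intro h
    obtain ⟨o, ho, hrank⟩ := hP.exists_above x
    have hpos : 0 < t.1 x := (Nat.zero_le _).trans_lt (h o ho hrank)
    refine ⟨ofSteps (Function.update t.1 x (t.1 x - 1)) (fun y => ?_) fun y z hyz hrank => ?_,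
      by simp [ofSteps, Nat.sub_add_cancel hpos], fun y hy => (Function.update_of_ne hy ..).symm⟩
    · obtain rfl | hy := eq_or_ne y x
      · simpa using (t.2.1 y).trans (Nat.le_succ k)
      · simpa [hy] using t.2.1 y
    · have hle : t.1 z ≤ t.1 y := t.2.2.1 z y (.single ⟨y.2, z.2, hyz, hrank⟩)
      obtain rfl | hy := eq_or_ne y x
      · have hz : z ≠ y := fun hz => by subst hz; lia
        have := h (.pos z) (pos_mem_nbr.2 hyz) (by simp only [extRank]; lia)
        simpa [hz, label] using Nat.le_sub_one_of_lt this
      · obtain rfl | hz := eq_or_ne z x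
        · simpa [hy] using hle.trans (Nat.le_succ _)
        · simpa [hz, hy] using hle

/-! ### Edge coefficients -/

/-- The rational function of `w` whose values at `pole t x` and `pole t x - 1` are the coefficients
of the edges that raise `t` at `x` and that lead to `t` by a raise at `x`. -/
def coeff (t : P.Labeling k) (x : P.Pos) (w : ℚ) : ℚ :=
  -((∏ o ∈ P.nbr (color x), (w - zero t o)) /
    ∏ z ∈ (P.ofColor (color x)).erase x, (w - pole t z) * (w - pole t z + 1))

/-- The coefficient of the edge raising `t` at `x`. -/
def upCoeff (t : P.Labeling k) (x : P.Pos) : ℚ := coeff t x (pole t x)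

/-- The coefficient of the edge leading to `t` by a raise at `x`. -/
def downCoeff (t : P.Labeling k) (x : P.Pos) : ℚ := coeff t x (pole t x - 1)

theorem Raises.downCoeff_eq (hP : P.IsMinuscule) (h : Raises x r s) :
    downCoeff s x = upCoeff r x := by
  have hw : pole s x - 1 = pole r x := by rw [h.pole_self, add_sub_cancel_right]
  rw [downCoeff, upCoeff, hw]
  refine congrArg Neg.neg <| congrArg₂ _ (prod_congr rfl fun o ho => ?_)
    (prod_congr rfl fun z hz => ?_)
  · rw [h.zero_eq (hP.ne_pos_of_mem_nbr ho)]
  · rw [h.pole_eq (ne_of_mem_erase hz)]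

/-- The factor of `coeff t x w` that depends on `t.1 y`, as a function of `d = w - pole t y`. -/
def localFactor (x y : P.Pos) (d : ℚ) : ℚ :=
  if P.Adj (color x) (color y) then d + 1 / 2 else
    if color x = color y then (d * (d + 1))⁻¹ else 1

/-- The part of `coeff t x w` that does not depend on `t.1 y`. -/
def coeffAway (t : P.Labeling k) (x y : P.Pos) (w : ℚ) : ℚ :=
  -((∏ o ∈ (P.nbr (color x)).erase (.pos y), (w - zero t o)) /
    ∏ z ∈ ((P.ofColor (color x)).erase x).erase y, (w - pole t z) * (w - pole t z + 1))

theorem coeff_eq_localFactor_mul (hP : P.IsMinuscule) (t : P.Labeling k) (hxy : x ≠ y) (w : ℚ) :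
    coeff t x w = localFactor x y (w - pole t y) * coeffAway t x y w := by
  by_cases hadj : P.Adj (color x) (color y)
  · have hy : y ∉ (P.ofColor (color x)).erase x := fun hy =>
      hP.adj_irrefl (color y) (mem_ofColor.1 (mem_of_mem_erase hy) ▸ hadj)
    have hzero : w - zero t (.pos y) = w - pole t y + 1 / 2 := by
      simp only [zero, pole, label, extRank]
      push_cast
      ring
    rw [localFactor, if_pos hadj, coeffAway, erase_eq_of_notMem hy, coeff,
      ← mul_prod_erase _ _ (pos_mem_nbr.2 hadj), hzero]
    ring
  have hy : .pos y ∉ P.nbr (color x) := fun hy => hadj (pos_mem_nbr.1 hy)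
  rw [localFactor, if_neg hadj, coeffAway, erase_eq_of_notMem hy, coeff]
  split_ifs with hcolor
  · rw [← mul_prod_erase _ _ (mem_erase.2 ⟨hxy.symm, mem_ofColor.2 hcolor.symm⟩),
      div_mul_eq_div_div_swap, mul_neg, inv_mul_eq_div]
  · rw [erase_eq_of_notMem (fun hy => hcolor (mem_ofColor.1 (mem_of_mem_erase hy)).symm), one_mul]

theorem Raises.coeffAway_eq (h : Raises y r t) (x : P.Pos) (w : ℚ) :
    coeffAway t x y w = coeffAway r x y w := by
  refine congrArg Neg.neg <| congrArg₂ _ (prod_congr rfl fun o ho => ?_)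
    (prod_congr rfl fun z hz => ?_)
  · rw [h.zero_eq (ne_of_mem_erase ho)]
  · rw [h.pole_eq (ne_of_mem_erase hz)]

theorem localFactor_mul_localFactor_neg (hP : P.IsMinuscule) (x y : P.Pos) (d : ℚ) :
    localFactor x y d * localFactor y x (-d) =
      localFactor x y (d - 1) * localFactor y x (-d - 1) := by
  have hadj : P.Adj (color y) (color x) ↔ P.Adj (color x) (color y) := ⟨hP.adj_symm, hP.adj_symm⟩
  simp only [localFactor, hadj, eq_comm (a := color y)]
  split_ifs
  · ring
  · rw [← mul_inv, ← mul_inv]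
    ring
  · rfl

theorem upCoeff_mul_upCoeff (hP : P.IsMinuscule) (hxy : x ≠ y) (hrs : Raises x r s)
    (hrt : Raises y r t) : upCoeff r x * upCoeff r y = upCoeff t x * upCoeff s y := by
  have hx : pole r x - pole t y = pole r x - pole r y - 1 := by
    rw [hrt.pole_self, sub_add_eq_sub_sub]
  have hy : pole r y - pole s x = -(pole r x - pole r y) - 1 := by
    rw [hrs.pole_self, sub_add_eq_sub_sub, neg_sub]
  simp only [upCoeff, coeff_eq_localFactor_mul hP _ hxy, coeff_eq_localFactor_mul hP _ hxy.symm,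
    hrt.coeffAway_eq, hrs.coeffAway_eq, hrt.pole_eq hxy, hrs.pole_eq hxy.symm, hx, hy]
  rw [mul_mul_mul_comm, ← neg_sub (pole r x), localFactor_mul_localFactor_neg hP, mul_mul_mul_comm]

theorem upCoeff_eq_zero (hP : P.IsMinuscule) (h : ¬∃ s, Raises x t s) : upCoeff t x = 0 := by
  obtain ⟨o, ho, hrank, hle⟩ : ∃ o ∈ P.nbr (color x), extRank o + 1 = rank x ∧ label t o ≤ t.1 x :=
    by simpa only [exists_raises_iff hP, not_forall, not_lt, exists_prop] using h
  have heq : t.1 x = label t o := (le_label_of_extRank_lt hP t ho (by lia)).antisymm hle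
  have hrank' : (extRank o + 1 : ℚ) = rank x := mod_cast hrank
  rw [upCoeff, coeff, prod_eq_zero ho (by rw [pole, zero, heq, hrank', sub_self]), zero_div,
    neg_zero]

theorem downCoeff_eq_zero (hP : P.IsMinuscule) (h : ¬∃ r, Raises x r t) : downCoeff t x = 0 := by
  obtain ⟨o, ho, hrank, hle⟩ : ∃ o ∈ P.nbr (color x), extRank o = rank x + 1 ∧ t.1 x ≤ label t o :=
    by simpa only [exists_lowers_iff hP, not_forall, not_lt, exists_prop] using h
  have heq : t.1 x = label t o := hle.antisymm (label_le_of_lt_extRank hP t ho (by lia))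
  have hrank' : (extRank o : ℚ) = rank x + 1 := mod_cast hrank
  have hzero : pole t x - 1 - zero t o = 0 := by
    rw [pole, zero, heq, hrank']
    ring
  rw [downCoeff, coeff, prod_eq_zero ho hzero, zero_div, neg_zero]

theorem pole_add_one_le (hP : P.IsMinuscule) (t : P.Labeling k) (hxy : color x = color y)
    (hlt : rank x < rank y) : pole t y + 1 ≤ pole t x := by
  have hle : (t.1 y : ℚ) ≤ t.1 x := mod_cast le_of_rank_lt hP t hxy hlt
  have hrank : (rank x + 2 : ℚ) ≤ rank y := mod_cast hP.rank_add_two_le hxy hlt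
  simp only [pole]
  linarith

theorem prod_pole_sub_zero_neg (hP : P.IsMinuscule) (h : Raises x r s) :
    ∏ o ∈ P.nbr (color x), (pole r x - zero r o) < 0 := by
  refine prod_neg_of_odd (fun o => extRank o < rank x) (fun o ho hlt => ?_) (fun o ho hle => ?_)
    (hP.odd_card_below x)
  · have hlabel : (r.1 x + 1 : ℚ) ≤ label r o := by
      have := le_label_of_extRank_lt hP s ho hlt
      rw [h.1, h.label_eq (hP.ne_pos_of_mem_nbr ho)] at this
      exact_mod_cast this
    have hrank : (extRank o + 1 : ℚ) ≤ rank x := mod_cast hlt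
    simp only [pole, zero]
    linarith
  · have hlt := (not_lt.1 hle).lt_of_ne (hP.extRank_ne_of_mem_nbr ho).symm
    have hlabel : (label r o : ℚ) ≤ r.1 x := mod_cast label_le_of_lt_extRank hP r ho hlt
    have hrank : (rank x + 1 : ℚ) ≤ extRank o := mod_cast hlt
    simp only [pole, zero]
    linarith

theorem prod_pole_sub_pole_pos (hP : P.IsMinuscule) (h : Raises x r s) :
    0 < ∏ z ∈ (P.ofColor (color x)).erase x,
      (pole r x - pole r z) * (pole r x - pole r z + 1) := by
  refine prod_pos fun z hz => ?_
  have hne : z ≠ x := ne_of_mem_erase hz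
  have hcolor : color z = color x := mem_ofColor.1 (mem_of_mem_erase hz)
  have hrank : rank z ≠ rank x := fun hrank => hne (eq_of_color_eq_of_rank_eq hcolor hrank)
  obtain hlt | hlt := hrank.lt_or_gt
  · have hle := pole_add_one_le hP s hcolor hlt
    rw [h.pole_self, h.pole_eq hne] at hle
    exact mul_pos_of_neg_of_neg (by linarith) (by linarith)
  · have hle := pole_add_one_le hP r hcolor.symm hlt
    exact mul_pos (by linarith) (by linarith)

theorem upCoeff_pos (hP : P.IsMinuscule) (h : Raises x r s) : 0 < upCoeff r x := by
  rw [upCoeff, coeff, neg_pos]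
  exact div_neg_of_neg_of_pos (prod_pole_sub_zero_neg hP h) (prod_pole_sub_pole_pos hP h)

/-- The weight of `t` along color `i`, computed from the labels. -/
def wt (i : N) (t : P.Labeling k) : ℤ :=
  2 * ∑ x ∈ P.ofColor i, (t.1 x : ℤ) - ∑ o ∈ P.nbr i, (label t o : ℤ)

theorem injOn_pole (hP : P.IsMinuscule) (t : P.Labeling k) (i : N) :
    Set.InjOn (pole t) (P.ofColor i) := fun x hx y hy hxy => by
  have hcolor : color x = color y :=
    (mem_ofColor.1 (mem_coe.1 hx)).trans (mem_ofColor.1 (mem_coe.1 hy)).symm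
  refine eq_of_color_eq_of_rank_eq hcolor (le_antisymm ?_ ?_) <;> refine not_lt.1 fun hlt => ?_
  · linarith [pole_add_one_le hP t hcolor.symm hlt]
  · linarith [pole_add_one_le hP t hcolor hlt]

theorem one_lt_card_zero_eq (hP : P.IsMinuscule) (t : P.Labeling k) (hxy : color x = color y)
    (hpole : pole t x - 1 = pole t y) : 1 < #{o ∈ P.nbr (color x) | zero t o = pole t y} := by
  have hlt : rank x < rank y := by
    by_contra! hle
    obtain hrank | hlt := hle.eq_or_lt
    · rw [eq_of_color_eq_of_rank_eq hxy hrank.symm] at hpole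
      linarith
    · linarith [pole_add_one_le hP t hxy.symm hlt]
  have hle := le_of_rank_lt hP t hxy hlt
  have := hP.rank_add_two_le hxy hlt
  have hsum : 2 * t.1 x + rank y = 2 * t.1 y + rank x + 2 := by
    have : (2 * t.1 x + rank y : ℚ) = 2 * t.1 y + rank x + 2 := by
      simp only [pole] at hpole
      linarith
    exact_mod_cast this
  refine (hP.one_lt_card_between x y hxy (by lia)).trans_le (card_le_card fun o ho => ?_)
  obtain ⟨ho, hranko⟩ := mem_filter.1 ho
  have hlabel : label t o = t.1 x := by
    have := label_le_of_lt_extRank hP t ho (by lia)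
    have := le_label_of_extRank_lt hP t (hxy ▸ ho) (by lia)
    lia
  refine mem_filter.2 ⟨ho, ?_⟩
  rw [← hpole, zero, pole, hlabel, hranko]
  push_cast
  ring

theorem sum_downCoeff_sub_upCoeff (hP : P.IsMinuscule) (t : P.Labeling k) (i : N) :
    ∑ x ∈ P.ofColor i, (downCoeff t x - upCoeff t x) = wt i t := by
  have key := sum_sub_eq_of_doubledPole (hP.card_nbr i) (injOn_pole hP t i) (b := zero t)
    fun x hx z hz => by
      have hxz := (mem_ofColor.1 hx).trans (mem_ofColor.1 hz).symm
      simpa only [mem_ofColor.1 hx] using one_lt_card_zero_eq hP t hxz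
  have hsum : (∑ o ∈ P.nbr i, (extRank o : ℚ)) = 2 * ∑ x ∈ P.ofColor i, (rank x : ℚ) :=
    mod_cast hP.sum_extRank i
  have hcard : (#(P.nbr i) : ℚ) = 2 * #(P.ofColor i) := mod_cast hP.card_nbr i
  calc ∑ x ∈ P.ofColor i, (downCoeff t x - upCoeff t x)
      = ∑ x ∈ P.ofColor i, (2 * pole t x - 1) - ∑ o ∈ P.nbr i, zero t o := by
        rw [← key]
        refine sum_congr rfl fun x hx => ?_
        rw [downCoeff, upCoeff, coeff, coeff, mem_ofColor.1 hx]
        ring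
    _ = wt i t := by
        simp only [pole, zero, wt, sum_sub_distrib, ← mul_sum, ← sum_div, sum_add_distrib,
          sum_const, nsmul_eq_mul, mul_one, hsum, hcard]
        push_cast
        ring

/-! ### Weights -/

variable {i : N}

theorem Raises.wt_eq (hP : P.IsMinuscule) (h : Raises x r s) (i : N) :
    wt i s = wt i r + P.cartan (color x) i := by
  have hs (y : P.Pos) : (s.1 y : ℤ) = r.1 y + if y = x then 1 else 0 := by
    obtain rfl | hy := eq_or_ne y x
    · simp [h.1]
    · simp [h.2 y hy, hy]
  have hlabel (o : P.ExtPos) : (label s o : ℤ) = label r o + if o = .pos x then 1 else 0 := by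
    obtain rfl | ho := eq_or_ne o (.pos x)
    · simp [label, h.1]
    · simp [h.label_eq ho, ho]
  have hadj : P.Adj (color x) i ↔ P.Adj i (color x) := ⟨hP.adj_symm, hP.adj_symm⟩
  simp only [wt, hs, hlabel, sum_add_distrib, sum_ite_eq', mem_ofColor, pos_mem_nbr, cartan, hadj]
  split_ifs with hi hi'
  · exact absurd hi' (hi ▸ hP.adj_irrefl _)
  all_goals ring

theorem wt_maximum (hP : P.IsMinuscule) (i : N) :
    wt i (P.maximum k) = if i = P.topColor then (k : ℤ) else 0 := by
  have hlabel (o : P.ExtPos) :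
      (label (P.maximum k) o : ℤ) = k - if .top = o then (k : ℤ) else 0 := by
    cases o <;> simp [label, maximum]
  have hcard : (#(P.nbr i) : ℤ) = 2 * #(P.ofColor i) := mod_cast hP.card_nbr i
  simp only [wt, hlabel, sum_sub_distrib, sum_const, nsmul_eq_mul, hcard, sum_ite_eq, top_mem_nbr]
  simp only [maximum, sum_const, nsmul_eq_mul]
  ring

theorem sum_ite_raises_left (hP : P.IsMinuscule) {F : Finset (P.Labeling k)}
    (hF : ∀ r, Raises x r s → r ∈ F) :
    ∑ r ∈ F, (if Raises x r s then upCoeff r x else 0) = downCoeff s x := by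
  by_cases h : ∃ r, Raises x r s
  · obtain ⟨r, hr⟩ := h
    rw [sum_eq_single_of_mem r (hF r hr) fun t _ ht => if_neg fun hts => ht (hts.left_unique hr),
      if_pos hr, hr.downCoeff_eq hP]
  · rw [downCoeff_eq_zero hP h, sum_eq_zero fun r _ => if_neg fun hr => h ⟨r, hr⟩]

theorem sum_ite_raises_right (hP : P.IsMinuscule) {F : Finset (P.Labeling k)}
    (hF : ∀ s, Raises x r s → s ∈ F) :
    ∑ s ∈ F, (if Raises x r s then upCoeff r x else 0) = upCoeff r x := by
  by_cases h : ∃ s, Raises x r s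
  · obtain ⟨s, hs⟩ := h
    rw [sum_eq_single_of_mem s (hF s hs) fun t _ ht => if_neg fun hrt => ht (hrt.right_unique hs),
      if_pos hs]
  · rw [upCoeff_eq_zero hP h, sum_eq_zero fun s _ => if_neg fun hs => h ⟨s, hs⟩]

namespace SameOff

theorem label_eq (hP : P.IsMinuscule) (h : SameOff i t u) (ho : o ∈ P.nbr i) :
    label u o = label t o := by
  cases o with
  | bot | top => rfl
  | pos y => exact h y (by rintro rfl; exact hP.adj_irrefl _ (pos_mem_nbr.1 ho))

theorem wt_sub_two_mul_rk (hP : P.IsMinuscule) (h : SameOff i t u) :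
    wt i u - 2 * CL.rk u = wt i t - 2 * CL.rk t := by
  have hsum (v : P.Labeling k) : (CL.rk v : ℤ) =
      ∑ x ∈ P.ofColor i, (v.1 x : ℤ) + ∑ x with color x ≠ i, (v.1 x : ℤ) := by
    rw [CL.rk, ← univ_eq_attach, ofColor, sum_filter_add_sum_filter_not]
    exact Nat.cast_sum _ _
  have hoff : ∑ x with color x ≠ i, (u.1 x : ℤ) = ∑ x with color x ≠ i, (t.1 x : ℤ) :=
    sum_congr rfl fun x hx => by rw [h x (mem_filter.1 hx).2]
  have hnbr : ∑ o ∈ P.nbr i, (label u o : ℤ) = ∑ o ∈ P.nbr i, (label t o : ℤ) :=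
    sum_congr rfl fun o ho => by rw [h.label_eq hP ho]
  rw [wt, wt, hsum, hsum, hoff, hnbr]
  ring

theorem le_of_forall_not_raises (hP : P.IsMinuscule) (hs : SameOff i t s) (hu : SameOff i t u)
    (hmax : ∀ x, color x = i → ¬∃ v, Raises x s v) (x : P.Pos) : u.1 x ≤ s.1 x := by
  by_cases hx : color x = i
  · subst hx
    obtain ⟨o, ho, hrank, hle⟩ :
        ∃ o ∈ P.nbr (color x), extRank o + 1 = rank x ∧ label s o ≤ s.1 x := by
      simpa only [exists_raises_iff hP, not_forall, not_lt, exists_prop] using hmax x rfl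
    calc u.1 x ≤ label u o := le_label_of_extRank_lt hP u ho (by lia)
      _ = label s o := by rw [hu.label_eq hP ho, hs.label_eq hP ho]
      _ ≤ s.1 x := hle
  · rw [hs x hx, hu x hx]

theorem le_of_forall_not_lowers (hP : P.IsMinuscule) (hs : SameOff i t s) (hu : SameOff i t u)
    (hmin : ∀ x, color x = i → ¬∃ v, Raises x v s) (x : P.Pos) : s.1 x ≤ u.1 x := by
  by_cases hx : color x = i
  · subst hx
    obtain ⟨o, ho, hrank, hle⟩ :
        ∃ o ∈ P.nbr (color x), extRank o = rank x + 1 ∧ s.1 x ≤ label s o := by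
      simpa only [exists_lowers_iff hP, not_forall, not_lt, exists_prop] using hmin x rfl
    calc s.1 x ≤ label s o := hle
      _ = label u o := by rw [hu.label_eq hP ho, hs.label_eq hP ho]
      _ ≤ u.1 x := label_le_of_lt_extRank hP u ho (by lia)
  · rw [hs x hx, hu x hx]

end SameOff

theorem sum_wt_sameOff (hP : P.IsMinuscule) (i : N) (t : P.Labeling k) :
    ∑ u with SameOff i t u, wt i u = 0 := by
  set F : Finset (P.Labeling k) := {u | SameOff i t u}
  have hbalance : ∀ x ∈ P.ofColor i, ∑ u ∈ F, downCoeff u x = ∑ u ∈ F, upCoeff u x := fun x hx => by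
    obtain rfl := mem_ofColor.1 hx
    have hF {r s : P.Labeling k} (h : Raises x r s) : r ∈ F ↔ s ∈ F := by
      simpa only [F, mem_filter_univ] using h.sameOff_iff t
    rw [← sum_congr rfl fun u hu => sum_ite_raises_left hP fun r hr => (hF hr).2 hu,
      ← sum_congr rfl fun u hu => sum_ite_raises_right hP fun s hs => (hF hs).1 hu, sum_comm]
  have hcast : ((∑ u ∈ F, wt i u : ℤ) : ℚ) = 0 := by
    push_cast
    simp only [← sum_downCoeff_sub_upCoeff hP]
    rw [sum_comm]
    exact sum_eq_zero fun x hx => by rw [sum_sub_distrib, hbalance x hx, sub_self]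
  exact_mod_cast hcast

theorem exists_add_eq_add (hP : P.IsMinuscule) (hs : SameOff i t s) (hr : SameOff i t r)
    (hu : SameOff i t u) (hsu : ∀ x, s.1 x ≤ u.1 x) (hur : ∀ x, u.1 x ≤ r.1 x) :
    ∃ v, SameOff i t v ∧ ∀ x, v.1 x + u.1 x = s.1 x + r.1 x := by
  refine ⟨ofSteps (fun x => s.1 x + r.1 x - u.1 x) (fun x => ?_) fun x y hxy hrank => ?_,
    fun x hx => ?_, fun x => ?_⟩
  · have := hsu x; have := r.2.1 x; lia
  · have hstep : CL.ple P.Adj P.pos x.1 y.1 := .single ⟨x.2, y.2, hxy, hrank⟩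
    have := s.2.2.1 y x hstep
    have := r.2.2.1 y x hstep
    have := hsu x; have := hur x; have := hsu y; have := hur y
    by_cases hx : color x = i
    · have hy : color y ≠ i := fun hy => hP.adj_irrefl i (by rwa [hx, hy] at hxy)
      have := hs y hy; have := hr y hy
      lia
    · have := hs x hx; have := hr x hx
      lia
  · have := hs x hx; have := hr x hx; have := hu x hx
    simp only [ofSteps]
    lia
  · have := hur x
    simp only [ofSteps]
    lia

theorem two_mul_sum_rk_sameOff (hP : P.IsMinuscule) (hs : SameOff i t s) (hr : SameOff i t r)
    (hmin : ∀ x, color x = i → ¬∃ v, Raises x v s) (hmax : ∀ x, color x = i → ¬∃ v, Raises x r v) :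
    2 * ∑ u with SameOff i t u, CL.rk u = #{u | SameOff i t u} * (CL.rk s + CL.rk r) := by
  set F : Finset (P.Labeling k) := {u | SameOff i t u}
  have : Nonempty (P.Labeling k) := ⟨t⟩
  have hreflect (u : P.Labeling k) (hu : u ∈ F) :
      ∃ v ∈ F, ∀ x, v.1 x + u.1 x = s.1 x + r.1 x := by
    simp only [F, mem_filter_univ] at hu ⊢
    exact exists_add_eq_add hP hs hr hu (hs.le_of_forall_not_lowers hP hu hmin)
      (hr.le_of_forall_not_raises hP hu hmax)
  choose! f hf hadd using hreflect
  have hinv : ∀ u ∈ F, f (f u) = u := fun u hu => Subtype.ext <| funext fun x => by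
    have := hadd u hu x
    have := hadd (f u) (hf u hu) x
    lia
  have hrk : ∀ u ∈ F, CL.rk (f u) + CL.rk u = CL.rk s + CL.rk r := fun u hu => by
    simp only [CL.rk, ← sum_add_distrib]
    exact sum_congr rfl fun x _ => hadd u hu x
  calc 2 * ∑ u ∈ F, CL.rk u = ∑ u ∈ F, CL.rk (f u) + ∑ u ∈ F, CL.rk u := by
        rw [two_mul, sum_nbij' f f hf hf hinv hinv fun _ _ => rfl]
    _ = #F * (CL.rk s + CL.rk r) := by
        rw [← sum_add_distrib, sum_congr rfl hrk, sum_const, smul_eq_mul]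

theorem mwt_eq_wt (hP : P.IsMinuscule) (i : N) (t : P.Labeling k) : CL.mwt i t = wt i t := by
  obtain ⟨r, hr, hgreatest, hmax⟩ := exists_isGreatest_rk_comp i t
  obtain ⟨s, hs, hleast, hmin⟩ := exists_isLeast_rk_comp i t
  set F : Finset (P.Labeling k) := {u | SameOff i t u}
  have hrk : (2 * ∑ u ∈ F, CL.rk u : ℤ) = #F * (CL.rk s + CL.rk r) := mod_cast
    two_mul_sum_rk_sameOff hP (sameOff_of_mem_comp hs) (sameOff_of_mem_comp hr) hmin hmax
  have hwt : ∀ u ∈ F, wt i u = 2 * CL.rk u + (wt i t - 2 * CL.rk t) := fun u hu => by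
    rw [← ((mem_filter_univ u).1 hu).wt_sub_two_mul_rk hP]
    ring
  have hzero : (#F : ℤ) * (CL.rk s + CL.rk r + (wt i t - 2 * CL.rk t)) = 0 := by
    rw [mul_add, ← hrk, ← sum_wt_sameOff hP i t, sum_congr rfl hwt, sum_add_distrib, sum_const,
      nsmul_eq_mul, ← mul_sum, Nat.cast_sum]
  have hcard : (#F : ℤ) ≠ 0 := Nat.cast_ne_zero.2 <|
    card_ne_zero_of_mem (a := t) ((mem_filter_univ t).2 fun _ _ => rfl)
  rw [CL.mwt, hgreatest.csSup_eq, hleast.csInf_eq]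
  linarith [(mul_eq_zero.1 hzero).resolve_left hcard]

/-! ### The representation -/

/-- The matrix of the raising operator at the single position `x`. -/
def raiseMatrix (k : ℕ) (x : P.Pos) : Matrix (P.Labeling k) (P.Labeling k) ℂ :=
  .of fun s r => if Raises x r s then (√(upCoeff r x : ℝ) : ℂ) else 0

theorem sqrt_upCoeff_mul_self (hP : P.IsMinuscule) (h : Raises x r s) :
    (√(upCoeff r x : ℝ) : ℂ) * (√(upCoeff r x : ℝ) : ℂ) = (upCoeff r x : ℂ) := by
  rw [← Complex.ofReal_mul, Real.mul_self_sqrt (mod_cast (upCoeff_pos hP h).le),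
    Complex.ofReal_ratCast]

theorem raiseMatrix_mul_transpose_self (hP : P.IsMinuscule) (x : P.Pos) :
    raiseMatrix k x * (raiseMatrix k x).transpose =
      .diagonal fun t => (downCoeff t x : ℂ) := by
  ext s t
  simp only [Matrix.mul_apply, Matrix.transpose_apply, raiseMatrix, Matrix.of_apply, mul_ite,
    ite_mul, zero_mul, mul_zero, ← ite_and]
  obtain rfl | hst := eq_or_ne s t
  · rw [Matrix.diagonal_apply_eq, ← sum_ite_raises_left hP fun r _ => mem_univ r, Rat.cast_sum]
    refine sum_congr rfl fun r _ => ?_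
    split_ifs with h h' h'
    · exact sqrt_upCoeff_mul_self hP h'
    · exact absurd h.1 h'
    · exact absurd ⟨h', h'⟩ h
    · exact Rat.cast_zero.symm
  · rw [Matrix.diagonal_apply_ne _ hst]
    exact sum_eq_zero fun r _ => if_neg fun h => hst (h.2.right_unique h.1)

theorem transpose_raiseMatrix_mul_self (hP : P.IsMinuscule) (x : P.Pos) :
    (raiseMatrix k x).transpose * raiseMatrix k x = .diagonal fun t => (upCoeff t x : ℂ) := by
  ext r t
  simp only [Matrix.mul_apply, Matrix.transpose_apply, raiseMatrix, Matrix.of_apply, mul_ite,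
    ite_mul, zero_mul, mul_zero, ← ite_and]
  obtain rfl | hrt := eq_or_ne r t
  · rw [Matrix.diagonal_apply_eq]
    refine .trans ?_ (congrArg Rat.cast (sum_ite_raises_right hP fun s _ => mem_univ s))
    rw [Rat.cast_sum]
    refine sum_congr rfl fun s _ => ?_
    split_ifs with h h' h'
    · exact sqrt_upCoeff_mul_self hP h'
    · exact absurd h.1 h'
    · exact absurd ⟨h', h'⟩ h
    · exact Rat.cast_zero.symm
  · rw [Matrix.diagonal_apply_ne _ hrt]
    exact sum_eq_zero fun s _ => if_neg fun h => hrt (h.2.left_unique h.1)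

theorem sqrt_upCoeff_mul_sqrt (hP : P.IsMinuscule) (h : Raises x r s) (b : ℚ) :
    (√(upCoeff r x : ℝ) : ℂ) * (√(b : ℝ) : ℂ) = (√((upCoeff r x * b : ℚ) : ℝ) : ℂ) := by
  rw [← Complex.ofReal_mul, ← Real.sqrt_mul (mod_cast (upCoeff_pos hP h).le), Rat.cast_mul]

theorem raiseMatrix_mul_transpose_comm (hP : P.IsMinuscule) (hxy : x ≠ y) :
    raiseMatrix k x * (raiseMatrix k y).transpose =
      (raiseMatrix k y).transpose * raiseMatrix k x := by
  ext s t
  simp only [Matrix.mul_apply, Matrix.transpose_apply, raiseMatrix, Matrix.of_apply, mul_ite,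
    ite_mul, zero_mul, mul_zero, ← ite_and]
  by_cases h : ∃ r, Raises x r s ∧ Raises y r t
  · obtain ⟨r, hrs, hrt⟩ := h
    obtain ⟨u, hsu, htu⟩ := Raises.exists_sup hxy hrs hrt
    refine (sum_eq_single_of_mem r (mem_univ r) fun r' _ hne =>
      if_neg fun h' => hne (h'.2.left_unique hrs)).trans <| .trans ?_ <|
      .symm <| sum_eq_single_of_mem u (mem_univ u) fun u' _ hne =>
        if_neg fun h' => hne (h'.2.right_unique hsu)
    rw [if_pos ⟨hrt, hrs⟩, if_pos ⟨htu, hsu⟩, sqrt_upCoeff_mul_sqrt hP hrs,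
      sqrt_upCoeff_mul_sqrt hP hsu, upCoeff_mul_upCoeff hP hxy hrs hrt, mul_comm]
  · exact (sum_eq_zero fun r _ => if_neg fun h' => h ⟨r, h'.2, h'.1⟩).trans <|
      .symm <| sum_eq_zero fun u _ => if_neg fun h' => h (Raises.exists_inf hxy h'.2 h'.1)

theorem lie_raiseMatrix_transpose (hP : P.IsMinuscule) (x y : P.Pos) :
    ⁅raiseMatrix k x, (raiseMatrix k y).transpose⁆ =
      if x = y then .diagonal fun t => ((downCoeff t x - upCoeff t x : ℚ) : ℂ) else 0 := by
  rw [Ring.lie_def]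
  split_ifs with hxy
  · subst hxy
    rw [raiseMatrix_mul_transpose_self hP, transpose_raiseMatrix_mul_self hP, Matrix.diagonal_sub]
    simp only [Rat.cast_sub]
  · rw [raiseMatrix_mul_transpose_comm hP hxy, sub_self]

/-- The matrix of the raising operator of color `i`. -/
def colorMatrix (P : ColoredPoset N) (k : ℕ) (i : N) : Matrix (P.Labeling k) (P.Labeling k) ℂ :=
  ∑ x ∈ P.ofColor i, raiseMatrix k x

/-- The diagonal matrix of the weights along color `i`. -/
def weightMatrix (P : ColoredPoset N) (k : ℕ) (i : N) : Matrix (P.Labeling k) (P.Labeling k) ℂ :=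
  .diagonal fun t => (wt i t : ℂ)

theorem lie_colorMatrix_transpose_self (hP : P.IsMinuscule) (i : N) :
    ⁅P.colorMatrix k i, (P.colorMatrix k i).transpose⁆ = P.weightMatrix k i := by
  rw [colorMatrix, Matrix.transpose_sum, sum_lie_sum]
  simp only [lie_raiseMatrix_transpose hP, sum_ite_eq]
  ext s t
  rw [Matrix.sum_apply]
  obtain rfl | hst := eq_or_ne s t
  · rw [weightMatrix, Matrix.diagonal_apply_eq, ← Rat.cast_intCast, ← sum_downCoeff_sub_upCoeff hP,
      Rat.cast_sum]
    exact sum_congr rfl fun x hx => by rw [if_pos hx, Matrix.diagonal_apply_eq]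
  · rw [weightMatrix, Matrix.diagonal_apply_ne _ hst]
    exact sum_eq_zero fun x hx => by rw [if_pos hx, Matrix.diagonal_apply_ne _ hst]

theorem lie_colorMatrix_transpose_of_ne (hP : P.IsMinuscule) {i j : N} (hij : i ≠ j) :
    ⁅P.colorMatrix k i, (P.colorMatrix k j).transpose⁆ = 0 := by
  simp only [colorMatrix, Matrix.transpose_sum, sum_lie, lie_sum, lie_raiseMatrix_transpose hP]
  refine sum_eq_zero fun y hy => sum_eq_zero fun x hx => if_neg ?_
  rintro rfl
  exact hij ((mem_ofColor.1 hx).symm.trans (mem_ofColor.1 hy))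

theorem lie_weightMatrix_raiseMatrix (hP : P.IsMinuscule) (i : N) (x : P.Pos) :
    ⁅P.weightMatrix k i, raiseMatrix k x⁆ = P.cartan (color x) i • raiseMatrix k x := by
  ext s r
  rw [Ring.lie_def, Matrix.sub_apply, weightMatrix, Matrix.diagonal_mul, Matrix.mul_diagonal,
    Matrix.smul_apply, raiseMatrix, Matrix.of_apply]
  split_ifs with h
  · rw [h.wt_eq hP, zsmul_eq_mul]
    push_cast
    ring
  · simp

theorem lie_weightMatrix_colorMatrix (hP : P.IsMinuscule) (i j : N) :
    ⁅P.weightMatrix k i, P.colorMatrix k j⁆ = P.cartan j i • P.colorMatrix k j := by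
  rw [colorMatrix, lie_sum, smul_sum]
  exact sum_congr rfl fun x hx => by rw [lie_weightMatrix_raiseMatrix hP, mem_ofColor.1 hx]

theorem weylRelations (hP : P.IsMinuscule) (k : ℕ) :
    CL.WeylRelations P.cartan (P.colorMatrix k) (fun i => (P.colorMatrix k i).transpose)
      (P.weightMatrix k) where
  lie_h_h i j := by
    rw [Ring.lie_def, weightMatrix, weightMatrix, Matrix.diagonal_mul_diagonal,
      Matrix.diagonal_mul_diagonal, sub_eq_zero]
    simp only [mul_comm]
  lie_x_y_self := lie_colorMatrix_transpose_self hP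
  lie_x_y_of_ne := lie_colorMatrix_transpose_of_ne hP
  lie_h_x := lie_weightMatrix_colorMatrix hP
  lie_h_y i j := by
    have hH : (P.weightMatrix k i).transpose = P.weightMatrix k i := Matrix.diagonal_transpose _
    rw [← Matrix.transpose_smul, ← lie_weightMatrix_colorMatrix hP, Ring.lie_def, Ring.lie_def,
      Matrix.transpose_sub, Matrix.transpose_mul, Matrix.transpose_mul, hH, neg_sub]

/-- The coefficients of all edges of all colors as a single function of the two ends. -/
def edgeCoeff (r s : P.Labeling k) : ℚ := ∑ x, if Raises x r s then upCoeff r x else 0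

theorem Raises.edgeCoeff_eq (h : Raises x r s) : edgeCoeff r s = upCoeff r x := by
  rw [edgeCoeff, sum_eq_single_of_mem x (mem_univ x)
    fun y _ hy => if_neg fun h' => hy (h'.pos_unique h), if_pos h]

theorem edgeCoeff_pos (hP : P.IsMinuscule) (h : ∃ i, CL.edge i r s) : 0 < edgeCoeff r s := by
  obtain ⟨_, x, -, hx⟩ := h
  have hx : Raises x r s := hx
  exact hx.edgeCoeff_eq ▸ upCoeff_pos hP hx

theorem colorMatrix_apply (i : N) (s r : P.Labeling k) :
    P.colorMatrix k i s r = if CL.edge i r s then (√(edgeCoeff r s : ℝ) : ℂ) else 0 := by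
  rw [colorMatrix, Matrix.sum_apply]
  split_ifs with h
  · obtain ⟨x, rfl, hx⟩ := edge_iff_exists_raises.1 h
    have hy (y) (_ : y ∈ P.ofColor (color x)) (hne : y ≠ x) : raiseMatrix k y s r = 0 :=
      if_neg fun h' => hne (h'.pos_unique hx)
    rw [sum_eq_single_of_mem x (mem_ofColor.2 rfl) hy, raiseMatrix, Matrix.of_apply, if_pos hx,
      hx.edgeCoeff_eq]
  · exact sum_eq_zero fun x hx => if_neg fun hr => h ⟨x, mem_ofColor.1 hx, hr⟩

theorem exists_lieHom (hP : P.IsMinuscule) (k : ℕ) :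
    ∃ φ : CL.gLie P.cartan →ₗ⁅ℂ⁆ Module.End ℂ (P.Labeling k → ℂ), ∀ i,
      φ (CL.px P.cartan i) = CL.opX edgeCoeff i ∧ φ (CL.py P.cartan i) = CL.opY edgeCoeff i ∧
        φ (CL.ph P.cartan i) = CL.opH i := by
  obtain ⟨φ, hφ⟩ := (weylRelations hP k).exists_lieHom (fun i => if_pos rfl) fun i j hij => by
    rw [cartan, if_neg hij]
    split_ifs <;> norm_num
  refine ⟨(lieEquivMatrix' (R := ℂ) (n := P.Labeling k)).symm.toLieHom.comp φ, fun i => ?_⟩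
  obtain ⟨hx, hy, hh⟩ := hφ i
  have hM (M : Matrix (P.Labeling k) (P.Labeling k) ℂ) :
      (lieEquivMatrix' (R := ℂ) (n := P.Labeling k)).symm.toLieHom M = M.mulVecLin := by
    exact (lieEquivMatrix'_symm_apply M).trans (Matrix.toLin'_apply' M)
  simp only [LieHom.comp_apply, hx, hy, hh, hM]
  refine ⟨congrArg _ ?_, congrArg _ ?_, congrArg _ ?_⟩
  · ext s r
    exact colorMatrix_apply i s r
  · ext r s
    exact colorMatrix_apply i s r
  · simp only [weightMatrix, mwt_eq_wt hP]

/-! ### Irreducibility -/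

theorem exists_raises_of_minimal (hP : P.IsMinuscule) (hx : t.1 x < k)
    (hmin : ∀ y, t.1 y < k → rank x ≤ rank y) : ∃ s, Raises x t s := by
  refine (exists_raises_iff hP).2 fun o ho hrank => ?_
  cases o with
  | bot => exact hx
  | top => have := hP.rank_le x; simp only [extRank] at hrank; lia
  | pos y =>
    refine hx.trans_le (not_lt.1 fun hy => ?_)
    have := hmin y hy
    simp only [extRank] at hrank
    lia

theorem Raises.rank_le_of_minimal (hP : P.IsMinuscule) (hx : Raises x t s) (hy : Raises y r s)
    (hxy : color y = color x) (hmin : ∀ z, t.1 z < k → rank x ≤ rank z) : rank x ≤ rank y := by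
  by_contra! hlt
  have hgap := hP.rank_add_two_le hxy hlt
  obtain ⟨o, ho, hrank⟩ := hP.exists_above y
  have hlabel : label s o < s.1 y := (exists_lowers_iff hP).1 ⟨r, hy⟩ o ho hrank
  cases o with
  | bot => simp only [extRank] at hrank; lia
  | top => have := hP.rank_le x; simp only [extRank] at hrank; lia
  | pos z =>
    have hz : t.1 z < k := by
      have hzx : label s (.pos z) = label t (.pos z) :=
        hx.label_eq (hP.ne_pos_of_mem_nbr (hxy ▸ ho))
      exact hzx.symm.trans_lt (hlabel.trans_le (s.2.1 y))
    have := hmin z hz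
    simp only [extRank] at hrank
    lia

theorem Raises.rankSum_lt_of_minimal (hP : P.IsMinuscule) (hx : Raises x t s) (hy : Raises y r s)
    (hxy : color y = color x) (hmin : ∀ z, t.1 z < k → rank x ≤ rank z) (hrt : r ≠ t) :
    rankSum r < rankSum t := by
  have hlt : rank x < rank y := (hx.rank_le_of_minimal hP hy hxy hmin).lt_of_ne fun h => hrt <| by
    obtain rfl := eq_of_color_eq_of_rank_eq hxy h.symm
    exact hy.left_unique hx
  have := hx.rankSum_eq
  have := hy.rankSum_eq
  lia

section Operators

variable {w : P.Labeling k → P.Labeling k → ℚ} {v : P.Labeling k → ℂ}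
  {U : Submodule ℂ (P.Labeling k → ℂ)}

theorem opX_apply (w : P.Labeling k → P.Labeling k → ℚ) (i : N) (v : P.Labeling k → ℂ)
    (s : P.Labeling k) :
    CL.opX w i v s = ∑ r, (if CL.edge i r s then (√(w r s : ℝ) : ℂ) else 0) * v r := rfl

/-- If `t` minimizes `rankSum` on the support of `v` and can be raised to `s` at a position `x` of
minimal rank, every other edge of the same color into `s` starts off the support. -/
theorem apply_maximum_ne_zero (hP : P.IsMinuscule)
    (hw : ∀ r s, (∃ i, CL.edge i r s) → 0 < w r s) (hv : v ≠ 0)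
    (hX : ∀ i, CL.opX w i v = 0) : v (P.maximum k) ≠ 0 := by
  obtain ⟨t₀, ht₀⟩ := Function.ne_iff.1 hv
  obtain ⟨t, ht, htmin⟩ := exists_min_image {t | v t ≠ 0} rankSum ⟨t₀, by simpa using ht₀⟩
  rw [mem_filter_univ] at ht
  suffices htop : t = P.maximum k from htop ▸ ht
  by_contra hne
  obtain ⟨x, hx, hxmin⟩ := exists_minimal_of_ne_maximum hne
  obtain ⟨s, hs⟩ := exists_raises_of_minimal hP hx hxmin
  have hedge : CL.edge (color x) t s := edge_iff_exists_raises.2 ⟨x, rfl, hs⟩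
  have hother (r) (_ : r ∈ univ) (hr : r ≠ t) :
      (if CL.edge (color x) r s then (√(w r s : ℝ) : ℂ) else 0) * v r = 0 := by
    split_ifs with hrs
    · obtain ⟨y, hyx, hy⟩ := edge_iff_exists_raises.1 hrs
      have hlt : rankSum r < rankSum t := hs.rankSum_lt_of_minimal hP hy hyx hxmin hr
      have hvr : v r = 0 := by
        by_contra hvr
        exact hlt.not_ge (htmin r ((mem_filter_univ r).2 hvr))
      rw [hvr, mul_zero]
    · exact zero_mul _
  have hcoeff := congrFun (hX (color x)) s
  rw [opX_apply, sum_eq_single_of_mem t (mem_univ t) hother, if_pos hedge] at hcoeff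
  refine mul_ne_zero ?_ ht hcoeff
  exact mod_cast (Real.sqrt_pos.2 (mod_cast hw t s ⟨_, hedge⟩)).ne'

theorem opX_single_maximum (w : P.Labeling k → P.Labeling k → ℚ) (i : N) :
    CL.opX w i (Pi.single (P.maximum k) 1) = 0 := by
  funext s
  rw [opX_apply]
  refine sum_eq_zero fun r _ => ?_
  obtain rfl | hr := eq_or_ne r (P.maximum k)
  · rw [if_neg, zero_mul]
    rintro ⟨x, -, hx, -⟩
    have := s.2.1 x
    have hk : (P.maximum k).1 x = k := rfl
    lia
  · rw [Pi.single_eq_of_ne hr, mul_zero]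

theorem eq_smul_single_maximum (hP : P.IsMinuscule)
    (hw : ∀ r s, (∃ i, CL.edge i r s) → 0 < w r s) (hX : ∀ i, CL.opX w i v = 0) :
    v = v (P.maximum k) • Pi.single (P.maximum k) 1 := by
  by_contra hne
  refine apply_maximum_ne_zero hP hw (sub_ne_zero.2 hne) (fun i => ?_) (by simp)
  rw [map_sub, map_smul, opX_single_maximum, hX, smul_zero, sub_zero]

theorem exists_apply_ne_zero_of_opX_apply_ne_zero {i : N} (h : CL.opX w i v s ≠ 0) :
    ∃ r, v r ≠ 0 ∧ CL.rk s = CL.rk r + 1 := by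
  obtain ⟨r, -, hr⟩ := exists_ne_zero_of_sum_ne_zero h
  obtain ⟨x, -, hx⟩ := edge_iff_exists_raises.1 (ite_ne_right_iff.1 (left_ne_zero_of_mul hr)).1
  exact ⟨r, right_ne_zero_of_mul hr, Raises.rk_eq hx⟩

theorem single_maximum_mem (hP : P.IsMinuscule)
    (hw : ∀ r s, (∃ i, CL.edge i r s) → 0 < w r s) (hU : ∀ i, ∀ v ∈ U, CL.opX w i v ∈ U)
    (hne : U ≠ ⊥) : Pi.single (P.maximum k) 1 ∈ U := by
  have key (n : ℕ) : ∀ v ∈ U, v ≠ 0 → (∀ t, v t ≠ 0 → CL.rk (P.maximum k) < CL.rk t + n) →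
      Pi.single (P.maximum k) 1 ∈ U := by
    induction n with
    | zero =>
      intro v _ hv hsupp
      obtain ⟨t, ht⟩ := Function.ne_iff.1 hv
      exact absurd (rk_le_rk_maximum t) (hsupp t ht).not_ge
    | succ n ih =>
      intro v hvU hv hsupp
      by_cases! hX : ∀ i, CL.opX w i v = 0
      · rw [eq_smul_single_maximum hP hw hX] at hvU
        exact (U.smul_mem_iff (apply_maximum_ne_zero hP hw hv hX)).1 hvU
      · obtain ⟨i, hi⟩ := hX
        refine ih _ (hU i v hvU) hi fun s hs => ?_
        obtain ⟨r, hr, hrk⟩ := exists_apply_ne_zero_of_opX_apply_ne_zero hs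
        have := hsupp r hr
        lia
  obtain ⟨v, hvU, hv⟩ := U.ne_bot_iff.1 hne
  exact key (CL.rk (P.maximum k) + 1) v hvU hv fun t _ => by lia

theorem opX_dotProduct (w : P.Labeling k → P.Labeling k → ℚ) (i : N) (v u : P.Labeling k → ℂ) :
    CL.opX w i v ⬝ᵥ u = v ⬝ᵥ CL.opY w i u :=
  (dotProduct_comm _ _).trans <| (Matrix.dotProduct_mulVec _ _ _).trans <|
    (congrArg (· ⬝ᵥ v) (Matrix.vecMul_transpose _ _)).trans (dotProduct_comm _ _)

theorem eq_bot_or_eq_top (hP : P.IsMinuscule)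
    (hw : ∀ r s, (∃ i, CL.edge i r s) → 0 < w r s) (hX : ∀ i, ∀ v ∈ U, CL.opX w i v ∈ U)
    (hY : ∀ i, ∀ v ∈ U, CL.opY w i v ∈ U) : U = ⊥ ∨ U = ⊤ := by
  by_contra! ⟨hbot, htop⟩
  let e := dotProductEquiv ℂ (P.Labeling k)
  let U' : Submodule ℂ (P.Labeling k → ℂ) := U.dualAnnihilator.comap e.toLinearMap
  have hmem {v} : v ∈ U' ↔ ∀ u ∈ U, v ⬝ᵥ u = 0 := Submodule.mem_dualAnnihilator _
  have hstable (i) (v) (hv : v ∈ U') : CL.opX w i v ∈ U' :=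
    hmem.2 fun u hu => opX_dotProduct w i v u ▸ hmem.1 hv _ (hY i u hu)
  have hne : U' ≠ ⊥ := fun h => htop <| Submodule.dualAnnihilator_eq_bot_iff.1 <|
    (Submodule.map_eq_bot_iff (e := e.symm)).1 <|
      (Submodule.comap_equiv_eq_map_symm e _).symm.trans h
  have := hmem.1 (single_maximum_mem hP hw hstable hne) _ (single_maximum_mem hP hw hX hbot)
  simp at this

theorem opH_single_maximum (hP : P.IsMinuscule) (i : N) :
    CL.opH i (Pi.single (P.maximum k) 1) =
      (if i = P.topColor then (k : ℂ) else 0) • Pi.single (P.maximum k) (1 : ℂ) := by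
  have hwt : ((CL.mwt i (P.maximum k) : ℤ) : ℂ) = if i = P.topColor then (k : ℂ) else 0 := by
    rw [mwt_eq_wt hP, wt_maximum hP]
    split_ifs <;> simp
  rw [← hwt]
  funext s
  rw [CL.opH, Matrix.mulVecLin_apply, Matrix.mulVec_diagonal, Pi.smul_apply, smul_eq_mul]
  obtain rfl | hs := eq_or_ne s (P.maximum k)
  · rfl
  · rw [Pi.single_eq_of_ne hs, mul_zero, mul_zero]

end Operators

end ColoredPoset

/-! ### The two minuscule posets of type `E₆` -/

/-- The poset `P16'`; its virtual ends extend it to two colors adjacent to `6'` and `1'`. -/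
def minuscule6p : ColoredPoset N6 where
  Adj := adj6
  pos := pos16p
  botColor := m6
  topColor := m1
  height := 10

/-- The poset `P16''`; its virtual ends extend it to two colors adjacent to `1'` and `6'`. -/
def minuscule6pp : ColoredPoset N6 where
  Adj := adj6
  pos := pos16pp
  botColor := m1
  topColor := m6
  height := 10

theorem isMinuscule_minuscule6p : minuscule6p.IsMinuscule where
  adj_irrefl := by decide
  adj_symm := by decide
  rank_le := by decide
  comparable x y hxy := ColoredPoset.ple_or_ple_of_reaches <| by revert x y; decide +kernel
  exists_below := by decide +kernel
  exists_above := by decide +kernel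
  one_lt_card_between := by decide +kernel
  card_nbr := by decide +kernel
  sum_extRank := by decide +kernel
  odd_card_below := by decide +kernel

theorem isMinuscule_minuscule6pp : minuscule6pp.IsMinuscule where
  adj_irrefl := by decide
  adj_symm := by decide
  rank_le := by decide
  comparable x y hxy := ColoredPoset.ple_or_ple_of_reaches <| by revert x y; decide +kernel
  exists_below := by decide +kernel
  exists_above := by decide +kernel
  one_lt_card_between := by decide +kernel
  card_nbr := by decide +kernel
  sum_extRank := by decide +kernel
  odd_card_below := by decide +kernel

theorem statement_13_general {N : Type} [DecidableEq N] {P : ColoredPoset N}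
    (hP : P.IsMinuscule) (k : ℕ) :
    ∃ c : P.Labeling k → P.Labeling k → ℚ,
      (∀ r s, (∃ i, CL.edge i r s) → 0 < c r s) ∧
      (∃ φ : CL.gLie P.cartan →ₗ⁅ℂ⁆ Module.End ℂ (P.Labeling k → ℂ),
        ∀ i, φ (CL.px P.cartan i) = CL.opX c i ∧ φ (CL.py P.cartan i) = CL.opY c i ∧
          φ (CL.ph P.cartan i) = CL.opH i) ∧
      ∀ w : P.Labeling k → P.Labeling k → ℚ, (∀ r s, (∃ i, CL.edge i r s) → 0 < w r s) →
        ∀ φ : CL.gLie P.cartan →ₗ⁅ℂ⁆ Module.End ℂ (P.Labeling k → ℂ),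
          (∀ i, φ (CL.px P.cartan i) = CL.opX w i ∧ φ (CL.py P.cartan i) = CL.opY w i ∧
            φ (CL.ph P.cartan i) = CL.opH i) →
          (∀ U : Submodule ℂ (P.Labeling k → ℂ),
            (∀ g : CL.gLie P.cartan, ∀ v ∈ U, φ g v ∈ U) → U = ⊥ ∨ U = ⊤) ∧
          (∀ i, CL.opX w i (Pi.single (P.maximum k) 1 : P.Labeling k → ℂ) = 0) ∧
          CL.opH P.topColor (Pi.single (P.maximum k) 1 : P.Labeling k → ℂ) =
            (k : ℂ) • (Pi.single (P.maximum k) 1 : P.Labeling k → ℂ) ∧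
          ∀ j, j ≠ P.topColor → CL.opH j (Pi.single (P.maximum k) 1 : P.Labeling k → ℂ) = 0 := by
  refine ⟨ColoredPoset.edgeCoeff, fun r s => ColoredPoset.edgeCoeff_pos hP,
    ColoredPoset.exists_lieHom hP k, fun w hw φ hφ => ⟨fun U hU => ?_,
      ColoredPoset.opX_single_maximum w, ?_, fun j hj => ?_⟩⟩
  · exact ColoredPoset.eq_bot_or_eq_top hP hw (fun i v hv => (hφ i).1 ▸ hU _ v hv)
      fun i v hv => (hφ i).2.1 ▸ hU _ v hv
  · rw [ColoredPoset.opH_single_maximum hP, if_pos rfl]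
  · rw [ColoredPoset.opH_single_maximum hP, if_neg hj, zero_smul]

/-- Corollary 4.5 for `L6'(k)` and `L6''(k)`: positive rational edge
coefficients exist on each lattice whose square roots define representations of `𝔤(E₆)`;
any such representation is irreducible, with highest weight `kω₁'` resp. `kω₆'`. -/
theorem statement_13 (k : ℕ) :
    (∃ P : L6p k → L6p k → ℚ,
      (∀ r s : L6p k, (∃ i, CL.edge i r s) → 0 < P r s) ∧
      (∃ φ : CL.gLie A6 →ₗ⁅ℂ⁆ Module.End ℂ (L6p k → ℂ),
        ∀ i : N6, φ (CL.px A6 i) = CL.opX P i ∧ φ (CL.py A6 i) = CL.opY P i ∧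
          φ (CL.ph A6 i) = CL.opH i) ∧
      ∀ P' : L6p k → L6p k → ℚ, (∀ r s : L6p k, (∃ i, CL.edge i r s) → 0 < P' r s) →
        ∀ φ : CL.gLie A6 →ₗ⁅ℂ⁆ Module.End ℂ (L6p k → ℂ),
          (∀ i : N6, φ (CL.px A6 i) = CL.opX P' i ∧ φ (CL.py A6 i) = CL.opY P' i ∧
            φ (CL.ph A6 i) = CL.opH i) →
          (∀ U : Submodule ℂ (L6p k → ℂ), (∀ g : CL.gLie A6, ∀ v ∈ U, φ g v ∈ U) →
            U = ⊥ ∨ U = ⊤) ∧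
          (∀ i : N6, CL.opX P' i ((Pi.single (top6p k) 1 : L6p k → ℂ)) = 0) ∧
          CL.opH m1 ((Pi.single (top6p k) 1 : L6p k → ℂ)) = (k : ℂ) • (Pi.single (top6p k) 1 : L6p k → ℂ) ∧
          (∀ j : N6, j ≠ m1 → CL.opH j ((Pi.single (top6p k) 1 : L6p k → ℂ)) = 0)) ∧
    (∃ P : L6pp k → L6pp k → ℚ,
      (∀ r s : L6pp k, (∃ i, CL.edge i r s) → 0 < P r s) ∧
      (∃ φ : CL.gLie A6 →ₗ⁅ℂ⁆ Module.End ℂ (L6pp k → ℂ),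
        ∀ i : N6, φ (CL.px A6 i) = CL.opX P i ∧ φ (CL.py A6 i) = CL.opY P i ∧
          φ (CL.ph A6 i) = CL.opH i) ∧
      ∀ P' : L6pp k → L6pp k → ℚ, (∀ r s : L6pp k, (∃ i, CL.edge i r s) → 0 < P' r s) →
        ∀ φ : CL.gLie A6 →ₗ⁅ℂ⁆ Module.End ℂ (L6pp k → ℂ),
          (∀ i : N6, φ (CL.px A6 i) = CL.opX P' i ∧ φ (CL.py A6 i) = CL.opY P' i ∧
            φ (CL.ph A6 i) = CL.opH i) →
          (∀ U : Submodule ℂ (L6pp k → ℂ), (∀ g : CL.gLie A6, ∀ v ∈ U, φ g v ∈ U) →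
            U = ⊥ ∨ U = ⊤) ∧
          (∀ i : N6, CL.opX P' i ((Pi.single (top6pp k) 1 : L6pp k → ℂ)) = 0) ∧
          CL.opH m6 ((Pi.single (top6pp k) 1 : L6pp k → ℂ)) = (k : ℂ) • (Pi.single (top6pp k) 1 : L6pp k → ℂ) ∧
          (∀ j : N6, j ≠ m6 → CL.opH j ((Pi.single (top6pp k) 1 : L6pp k → ℂ)) = 0)) :=
  ⟨statement_13_general isMinuscule_minuscule6p k, statement_13_general isMinuscule_minuscule6pp k⟩

end
end

section
/- Fix a nonnegative integer k, let ℓ := 27k, and for 0 ≤ i ≤ ℓ let N_i := #{t ∈ L7(k) : Σ_{x∈P7} t(x) = i}. Then: (i) L7(k) is rank symmetric: N_i = N_{ℓ−i} for all 0 ≤ i ≤ ℓ; (ii) L7(k) is rank unimodal: there exists u with N_0 ≤ N_1 ≤ … ≤ N_u ≥ N_{u+1} ≥ … ≥ N_ℓ; (iii) L7(k) is strongly Sperner: for every positive integer m and all antichains A_1, …, A_m of L7(k), the cardinality of A_1 ∪ … ∪ A_m is at most the maximum, over m-element subsets S of {0,1,…,ℓ}, of Σ_{i∈S} N_i. -/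
noncomputable section

/-! ### Type `E₇` data -/

/-- The nodes `1, 2, 3, 4, 5, 5', 6'` of the `E₇` Dynkin diagram. -/
inductive N7 : Type
  | n1 | n2 | n3 | n4 | n5 | n5p | n6p
  deriving DecidableEq

instance : Fintype N7 where
  elems := ⟨[N7.n1, N7.n2, N7.n3, N7.n4, N7.n5, N7.n5p, N7.n6p], by decide⟩
  complete := by intro x; cases x <;> decide

open N7

/-- Adjacency in the `E₇` Dynkin diagram: edges `1-2, 2-3, 3-4, 4-5, 4-5', 5'-6'`. -/
abbrev adj7 : N7 → N7 → Prop := fun a b =>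
  (a, b) ∈ ([(n1, n2), (n2, n3), (n3, n4), (n4, n5), (n4, n5p), (n5p, n6p)] : List (N7 × N7)) ∨
  (b, a) ∈ ([(n1, n2), (n2, n3), (n3, n4), (n4, n5), (n4, n5p), (n5p, n6p)] : List (N7 × N7))

/-- The 27 (color, rank) positions of the minuscule poset `P₇ = P_{E₇}(ω₁)`. -/
def pos7 : Finset (N7 × ℕ) :=
  {(n1, 0), (n2, 1), (n3, 2), (n4, 3), (n5, 4), (n5p, 4), (n4, 5), (n6p, 5), (n3, 6),
   (n5p, 6), (n2, 7), (n4, 7), (n1, 8), (n3, 8), (n5, 8), (n2, 9), (n4, 9), (n3, 10),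
   (n5p, 10), (n4, 11), (n6p, 11), (n5, 12), (n5p, 12), (n4, 13), (n3, 14), (n2, 15), (n1, 16)}

/-- The lattice `L7(k) = L_{E₇}(kω₁)` of order-reversing labellings of `P₇` by `{0,…,k}`. -/
abbrev L7 (k : ℕ) : Type := CL.Elt adj7 pos7 k (fun _ => True)

/-- The Cartan matrix of type `E₇`, indexed by the nodes. -/
def A7 : N7 → N7 → ℤ := fun i j => if i = j then 2 else if adj7 i j then -1 else 0

/-- The number of elements of `L7(k)` of rank `i`. -/
def nrk7 (k i : ℕ) : ℕ := Nat.card {t : L7 k // CL.rk t = i}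

/-!
`L7(k)` indexes a basis of the irreducible `E₇`-module with highest weight a multiple of a
minuscule one, and the principal `sl₂` of `E₇` acts on that module. Here this action is written
down directly: in the coordinates `t(x) - rank(x) / 2` the matrix coefficients of the raising and
lowering operators are explicit rational functions, moving one position at a time. Operators at
distinct positions commute because their coefficients do, and at a single color the commutator is a
sum of residues which Lagrange interpolation evaluates; weighting the colors by the coefficients of
the sum of the positive coroots turns the total into twice the rank minus `27 * k`.

An `sl₂` pair whose raising matrix moves strictly up in the order forces the rank sizes to be
unimodal and bounds every antichain by the middle rank size, by comparing ranks of matrices. For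
unions of `m` antichains, apply this bound to the product with a chain of `m` elements.
-/

open Finset Matrix

/-! ### Order-raising matrices and antichains -/

section CoordProj

variable {m n Q K : Type*} [Field K]

lemma rank_add_le_rank_add_rank [Finite m] [Fintype n] (A B : Matrix m n K) :
    (A + B).rank ≤ A.rank + B.rank := by
  rw [Matrix.rank, mulVecLin_add]
  exact (Submodule.finrank_mono (LinearMap.range_add_le _ _)).trans
    (Submodule.finrank_add_le_finrank_add_finrank _ _)

lemma rank_le_rank_of_mulVec_eq_zero [Finite m] [Fintype n] [Finite Q] {A : Matrix m n K}
    {B : Matrix Q n K} (h : ∀ v, B *ᵥ v = 0 → A *ᵥ v = 0) : A.rank ≤ B.rank := by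
  have hker : LinearMap.ker B.mulVecLin ≤ LinearMap.ker A.mulVecLin := fun v hv => h v hv
  have hA := LinearMap.finrank_range_add_finrank_ker A.mulVecLin
  have hB := LinearMap.finrank_range_add_finrank_ker B.mulVecLin
  have := Submodule.finrank_mono hker
  simp only [Matrix.rank]
  omega

variable [DecidableEq Q]

variable (K) in
/-- The projection of `Q → K` onto the functions supported on `s`, as a matrix. Its rank is `#s`, so
products with such matrices translate ranks of matrices into cardinalities. -/
def coordProj (s : Finset Q) : Matrix Q Q K :=
  diagonal fun t => if t ∈ s then 1 else 0

@[simp] lemma coordProj_empty : coordProj K (∅ : Finset Q) = 0 := by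
  ext; simp [coordProj]

variable [Fintype Q]

@[simp] lemma coordProj_mulVec_apply (s : Finset Q) (v : Q → K) (t : Q) :
    (coordProj K s *ᵥ v) t = if t ∈ s then v t else 0 := by
  simp [coordProj, mulVec_diagonal]

@[simp] lemma mul_coordProj_apply (X : Matrix m Q K) (s : Finset Q) (a : m) (b : Q) :
    (X * coordProj K s) a b = if b ∈ s then X a b else 0 := by
  simp [coordProj]

@[simp] lemma coordProj_mul_apply (s : Finset Q) (X : Matrix Q n K) (a : Q) (b : n) :
    (coordProj K s * X) a b = if a ∈ s then X a b else 0 := by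
  simp [coordProj]

lemma coordProj_mulVec_coordProj_mulVec (s u : Finset Q) (v : Q → K) :
    coordProj K s *ᵥ (coordProj K u *ᵥ v) = coordProj K (s ∩ u) *ᵥ v := by
  ext t
  simp [ite_and]

lemma rank_coordProj (s : Finset Q) : (coordProj K s).rank = #s := by
  classical
  rw [coordProj, rank_diagonal]
  simp

lemma mul_coordProj_eq_coordProj_mul {X : Matrix Q Q K} {s u : Finset Q}
    (h : ∀ a b, X a b ≠ 0 → (b ∈ s ↔ a ∈ u)) : X * coordProj K s = coordProj K u * X := by
  ext a b
  by_cases hX : X a b = 0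
  · simp [hX]
  · simp [h a b hX]

omit [DecidableEq Q] in
lemma rank_le_card_add_card {X : Matrix Q Q K} {s u : Finset Q}
    (h : ∀ a b, X a b ≠ 0 → b ∈ s ∨ a ∈ u) : X.rank ≤ #s + #u := by
  classical
  have hX : X = X * coordProj K s + coordProj K u * (X * coordProj K sᶜ) := by
    ext a b
    have := h a b
    by_cases hb : b ∈ s
    · simp [hb]
    · by_cases hX : X a b = 0 <;> simp_all
  calc X.rank = (X * coordProj K s + coordProj K u * (X * coordProj K sᶜ)).rank := by rw [← hX]
    _ ≤ (X * coordProj K s).rank + (coordProj K u * (X * coordProj K sᶜ)).rank :=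
      rank_add_le_rank_add_rank _ _
    _ ≤ (coordProj K s).rank + (coordProj K u).rank :=
      add_le_add (rank_mul_le_right _ _) (rank_mul_le_left _ _)
    _ = #s + #u := by rw [rank_coordProj, rank_coordProj]

end CoordProj

/-- A matrix which sends each basis vector `t` into the span of the basis vectors strictly above
`t`. -/
def IsOrderRaising {Q K : Type*} [LT Q] [Zero K] (X : Matrix Q Q K) : Prop :=
  ∀ s t, X s t ≠ 0 → t < s

-- The nonzero columns of `X` not above `A` have their entries in rows not in `A`.
lemma IsOrderRaising.rank_add_card_le {Q K : Type*} [Fintype Q] [Preorder Q] [Field K]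
    {X : Matrix Q Q K} (hX : IsOrderRaising X) {A : Finset Q}
    (hA : IsAntichain (· ≤ ·) (A : Set Q)) : X.rank + #A ≤ Fintype.card Q := by
  classical
  let D : Finset Q := {q | ∃ a ∈ A, q < a}
  have mem_D {q : Q} : q ∈ D ↔ ∃ a ∈ A, q < a := by simp [D]
  have hDA : Disjoint D A := by
    refine Finset.disjoint_left.mpr fun q hqD hqA => ?_
    obtain ⟨a, ha, hqa⟩ := mem_D.mp hqD
    exact hA hqA ha hqa.ne hqa.le
  have hrank : X.rank ≤ #D + #(D ∪ A)ᶜ := by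
    refine rank_le_card_add_card fun s t hst => ?_
    rw [or_iff_not_imp_left, Finset.mem_compl, Finset.mem_union]
    rintro htD (hsD | hsA)
    · obtain ⟨a, ha, hsa⟩ := mem_D.mp hsD
      exact htD (mem_D.mpr ⟨a, ha, (hX s t hst).trans hsa⟩)
    · exact htD (mem_D.mpr ⟨s, hsA, hX s t hst⟩)
  have := Finset.card_add_card_compl (D ∪ A)
  rw [Finset.card_union_of_disjoint hDA] at this
  omega

/-! ### Raising and lowering matrices -/

/-- The elements of rank `r`. -/
def rankLevel {Q : Type*} [Fintype Q] (rk : Q → ℕ) (r : ℕ) : Finset Q := {t | rk t = r}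

@[simp] lemma mem_rankLevel {Q : Type*} [Fintype Q] {rk : Q → ℕ} {r : ℕ} {t : Q} :
    t ∈ rankLevel rk r ↔ rk t = r := by
  simp [rankLevel]

section Sl2Pair

variable {Q K : Type*} [Fintype Q] [DecidableEq Q] [Field K]

/-- Raising and lowering matrices `X` and `Y` of a representation of `sl₂` on `Q → K` in which the
basis vector `t` has weight `2 * rk t - l`. -/
structure IsSl2Pair (rk : Q → ℕ) (l : ℕ) (X Y : Matrix Q Q K) : Prop where
  rk_le : ∀ t, rk t ≤ l
  raises : ∀ s t, X s t ≠ 0 → rk s = rk t + 1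
  lowers : ∀ s t, Y s t ≠ 0 → rk t = rk s + 1
  commutator : X * Y - Y * X = diagonal fun t => 2 * (rk t : K) - l

namespace IsSl2Pair

variable {rk : Q → ℕ} {l : ℕ} {X Y : Matrix Q Q K}

lemma dual (h : IsSl2Pair rk l X Y) : IsSl2Pair (fun t => l - rk t) l Y X where
  rk_le _ := Nat.sub_le _ _
  raises s t hst := by
    have := h.lowers s t hst
    have := h.rk_le t
    omega
  lowers s t hst := by
    have := h.raises s t hst
    have := h.rk_le s
    omega
  commutator := by
    rw [← neg_sub, h.commutator, diagonal_neg]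
    congr 1
    ext t
    rw [Nat.cast_sub (h.rk_le t)]
    ring

lemma rankLevel_dual (h : IsSl2Pair rk l X Y) {r : ℕ} (hr : r ≤ l) :
    rankLevel (fun t => l - rk t) (l - r) = rankLevel rk r := by
  ext t
  have := h.rk_le t
  simp only [mem_rankLevel]
  omega

lemma rankLevel_eq_empty (h : IsSl2Pair rk l X Y) {r : ℕ} (hr : l < r) : rankLevel rk r = ∅ := by
  ext t
  simpa using ((h.rk_le t).trans_lt hr).ne

lemma raise_mul_coordProj (h : IsSl2Pair rk l X Y) (r : ℕ) :
    X * coordProj K (rankLevel rk r) = coordProj K (rankLevel rk (r + 1)) * X :=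
  mul_coordProj_eq_coordProj_mul fun s t hst => by simp [h.raises s t hst]

lemma lower_mul_coordProj_succ (h : IsSl2Pair rk l X Y) (r : ℕ) :
    Y * coordProj K (rankLevel rk (r + 1)) = coordProj K (rankLevel rk r) * Y :=
  mul_coordProj_eq_coordProj_mul fun s t hst => by simp [h.lowers s t hst]

lemma lower_mul_coordProj_zero (h : IsSl2Pair rk l X Y) :
    Y * coordProj K (rankLevel rk 0) = 0 := by
  rw [mul_coordProj_eq_coordProj_mul (u := ∅) fun s t hst => by simp [h.lowers s t hst],
    coordProj_empty, zero_mul]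

lemma commutator_mulVec (h : IsSl2Pair rk l X Y) {r : ℕ} {v : Q → K}
    (hv : coordProj K (rankLevel rk r) *ᵥ v = v) :
    X *ᵥ (Y *ᵥ v) - Y *ᵥ (X *ᵥ v) = (2 * (r : K) - l) • v := by
  rw [mulVec_mulVec, mulVec_mulVec, ← sub_mulVec, h.commutator]
  ext t
  rw [mulVec_diagonal, Pi.smul_apply, smul_eq_mul]
  by_cases ht : rk t = r
  · rw [ht]
  · have hvt : v t = 0 := by simpa [ht] using (congrFun hv t).symm
    rw [hvt, mul_zero, mul_zero]

variable [LinearOrder K] [IsStrictOrderedRing K]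

-- If `Y X v = -c v` with `c ≥ 0`, then `Y v` satisfies the same hypothesis one rank lower with a
-- larger `c`; so `Y v = 0` by induction, and the commutator relation leaves a nonzero multiple of
-- `v` equal to zero.
lemma eq_zero_of_lower_raise_eq_neg_smul (h : IsSl2Pair rk l X Y) {r : ℕ} (hr : 2 * r < l)
    {v : Q → K} (hv : coordProj K (rankLevel rk r) *ᵥ v = v) {c : K} (hc : 0 ≤ c)
    (hYX : Y *ᵥ (X *ᵥ v) = -c • v) : v = 0 := by
  induction r generalizing c v with
  | zero =>
    have hYv : Y *ᵥ v = 0 := by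
      rw [← hv, mulVec_mulVec, h.lower_mul_coordProj_zero, zero_mulVec]
    have hcomm := h.commutator_mulVec hv
    rw [hYv, mulVec_zero, hYX, zero_sub, ← sub_eq_zero, ← neg_smul, ← sub_smul] at hcomm
    have hl : (0 : K) < l := by exact_mod_cast hr
    refine (smul_eq_zero.mp hcomm).resolve_left (ne_of_gt ?_)
    push_cast
    linarith
  | succ r ih =>
    have hr' : 2 * ((r + 1 : ℕ) : K) < l := by exact_mod_cast hr
    have hXY : X *ᵥ (Y *ᵥ v) = -(c + (l - 2 * ((r + 1 : ℕ) : K))) • v := by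
      rw [eq_add_of_sub_eq (h.commutator_mulVec hv), hYX, ← add_smul]
      congr 1
      ring
    have hYv : Y *ᵥ v = 0 := by
      refine ih (by omega) ?_ (c := c + (l - 2 * ((r + 1 : ℕ) : K))) (by linarith) ?_
      · rw [mulVec_mulVec, ← h.lower_mul_coordProj_succ, ← mulVec_mulVec, hv]
      · rw [hXY, mulVec_smul]
    rw [hYv, mulVec_zero] at hXY
    exact (smul_eq_zero.mp hXY.symm).resolve_left (by linarith)

lemma eq_zero_of_raise_eq_zero (h : IsSl2Pair rk l X Y) {r : ℕ} (hr : 2 * r < l) {v : Q → K}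
    (hv : coordProj K (rankLevel rk r) *ᵥ v = v) (hXv : X *ᵥ v = 0) : v = 0 :=
  h.eq_zero_of_lower_raise_eq_neg_smul hr hv le_rfl (by simp [hXv])

lemma eq_zero_of_raise_lower_eq_zero (h : IsSl2Pair rk l X Y) {r : ℕ} (hr : l < 2 * r)
    {v : Q → K} (hv : coordProj K (rankLevel rk r) *ᵥ v = v) (hXYv : X *ᵥ (Y *ᵥ v) = 0) :
    v = 0 := by
  rcases le_or_gt r l with hrl | hrl
  · exact h.dual.eq_zero_of_lower_raise_eq_neg_smul (r := l - r) (by omega)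
      (by rw [h.rankLevel_dual hrl, hv]) le_rfl (by simp [hXYv])
  · rw [← hv, h.rankLevel_eq_empty hrl, coordProj_empty, zero_mulVec]

theorem card_rankLevel_le_succ (h : IsSl2Pair rk l X Y) {r : ℕ} (hr : 2 * r < l) :
    #(rankLevel rk r) ≤ #(rankLevel rk (r + 1)) := by
  calc #(rankLevel rk r) = (coordProj K (rankLevel rk r)).rank := (rank_coordProj _).symm
    _ ≤ (X * coordProj K (rankLevel rk r)).rank :=
      rank_le_rank_of_mulVec_eq_zero fun v hv =>
        h.eq_zero_of_raise_eq_zero hr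
          (by rw [coordProj_mulVec_coordProj_mulVec, inter_self]) (by rw [mulVec_mulVec, hv])
    _ = (coordProj K (rankLevel rk (r + 1)) * X).rank := by rw [h.raise_mul_coordProj]
    _ ≤ (coordProj K (rankLevel rk (r + 1))).rank := rank_mul_le_left _ _
    _ = #(rankLevel rk (r + 1)) := rank_coordProj _

lemma card_rankLevel_succ_le (h : IsSl2Pair rk l X Y) {r : ℕ} (hr : l < 2 * (r + 1)) :
    #(rankLevel rk (r + 1)) ≤ #(rankLevel rk r) := by
  rcases le_or_gt (r + 1) l with hrl | hrl
  · have := h.dual.card_rankLevel_le_succ (r := l - (r + 1)) (by omega)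
    rwa [show l - (r + 1) + 1 = l - r by omega, h.rankLevel_dual hrl,
      h.rankLevel_dual (by omega)] at this
  · simp [h.rankLevel_eq_empty hrl]

theorem monotoneOn_card_rankLevel (h : IsSl2Pair rk l X Y) :
    MonotoneOn (fun r => #(rankLevel rk r)) (Set.Iic (l / 2)) :=
  monotoneOn_of_le_succ Set.ordConnected_Iic fun r _ _ hr =>
    h.card_rankLevel_le_succ (by simp only [Nat.succ_eq_succ, Set.mem_Iic] at hr; omega)

theorem antitoneOn_card_rankLevel (h : IsSl2Pair rk l X Y) :
    AntitoneOn (fun r => #(rankLevel rk r)) (Set.Ici (l / 2)) :=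
  antitoneOn_of_succ_le Set.ordConnected_Ici fun r _ hr _ =>
    h.card_rankLevel_succ_le (by simp only [Set.mem_Ici] at hr; omega)

omit [LinearOrder K] [IsStrictOrderedRing K] in
lemma coordProj_succ_mulVec_raise (h : IsSl2Pair rk l X Y) (r : ℕ) (v w : Q → K) :
    coordProj K (rankLevel rk (r + 1)) *ᵥ (X *ᵥ (v + Y *ᵥ w)) =
      X *ᵥ (coordProj K (rankLevel rk r) *ᵥ v +
        Y *ᵥ (coordProj K (rankLevel rk (r + 1)) *ᵥ w)) := by
  rw [mulVec_mulVec, ← h.raise_mul_coordProj, ← mulVec_mulVec, mulVec_add, mulVec_mulVec _ _ Y,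
    ← h.lower_mul_coordProj_succ, mulVec_mulVec w]

-- `X` is injective below the middle rank and `X Y` is injective above it. The rank `r + 1` part of
-- `X (P₋ v + Y P₊ v)` is `X P_r v` in the first case and `X Y P_{r+1} v` in the second.
lemma coordProj_mulVec_eq_zero_of_ne_half (h : IsSl2Pair rk l X Y) {v : Q → K}
    (hv : X *ᵥ (coordProj K {t | rk t < l / 2} *ᵥ v +
      Y *ᵥ (coordProj K {t | l / 2 < rk t} *ᵥ v)) = 0) {r : ℕ} (hr : r ≠ l / 2) :
    coordProj K (rankLevel rk r) *ᵥ v = 0 := by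
  have hself : coordProj K (rankLevel rk r) *ᵥ (coordProj K (rankLevel rk r) *ᵥ v) =
      coordProj K (rankLevel rk r) *ᵥ v := by
    rw [coordProj_mulVec_coordProj_mulVec, inter_self]
  have hlevel (r : ℕ) := h.coordProj_succ_mulVec_raise r (coordProj K {t | rk t < l / 2} *ᵥ v)
    (coordProj K {t | l / 2 < rk t} *ᵥ v)
  simp only [hv, mulVec_zero, coordProj_mulVec_coordProj_mulVec] at hlevel
  rcases lt_or_gt_of_ne hr with hr | hr
  · have hlow : rankLevel rk r ∩ ({t | rk t < l / 2} : Finset Q) = rankLevel rk r := by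
      ext t; simp only [mem_inter, mem_rankLevel, mem_filter_univ]; omega
    have hhigh : rankLevel rk (r + 1) ∩ ({t | l / 2 < rk t} : Finset Q) = ∅ := by
      ext t; simp only [mem_inter, mem_rankLevel, mem_filter_univ, notMem_empty, iff_false]; omega
    refine h.eq_zero_of_raise_eq_zero (by omega) hself ?_
    simpa [hlow, hhigh] using (hlevel r).symm
  · obtain ⟨r, rfl⟩ := Nat.exists_eq_add_one_of_ne_zero (by omega : r ≠ 0)
    have hlow : rankLevel rk r ∩ ({t | rk t < l / 2} : Finset Q) = ∅ := by
      ext t; simp only [mem_inter, mem_rankLevel, mem_filter_univ, notMem_empty, iff_false]; omega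
    have hhigh :
        rankLevel rk (r + 1) ∩ ({t | l / 2 < rk t} : Finset Q) = rankLevel rk (r + 1) := by
      ext t; simp only [mem_inter, mem_rankLevel, mem_filter_univ]; omega
    refine h.eq_zero_of_raise_lower_eq_zero (by omega) hself ?_
    simpa [hlow, hhigh] using (hlevel r).symm

theorem card_compl_rankLevel_half_le_rank (h : IsSl2Pair rk l X Y) :
    #(rankLevel rk (l / 2))ᶜ ≤ X.rank := by
  let Z := coordProj K {t | rk t < l / 2} + Y * coordProj K {t | l / 2 < rk t}
  calc #(rankLevel rk (l / 2))ᶜ = (coordProj K (rankLevel rk (l / 2))ᶜ).rank :=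
      (rank_coordProj _).symm
    _ ≤ (X * Z).rank := rank_le_rank_of_mulVec_eq_zero fun v hv => by
      rw [← mulVec_mulVec, add_mulVec, ← mulVec_mulVec] at hv
      ext t
      by_cases ht : rk t = l / 2
      · simp [ht]
      · simpa [ht] using congrFun (h.coordProj_mulVec_eq_zero_of_ne_half hv ht) t
    _ ≤ X.rank := rank_mul_le_left _ _

theorem card_le_card_rankLevel_half [Preorder Q] (h : IsSl2Pair rk l X Y) (hX : IsOrderRaising X)
    {A : Finset Q} (hA : IsAntichain (· ≤ ·) (A : Set Q)) : #A ≤ #(rankLevel rk (l / 2)) := by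
  have := hX.rank_add_card_le hA
  have := h.card_compl_rankLevel_half_le_rank
  have := Finset.card_add_card_compl (rankLevel rk (l / 2))
  omega

end IsSl2Pair

end Sl2Pair

/-! ### Products and chains -/

open Kronecker

section KroneckerSum

variable {Q R K : Type*} [DecidableEq Q] [DecidableEq R]

/-- The Kronecker sum `X ⊗ 1 + 1 ⊗ X'`, which is how a Lie algebra element acts on a tensor
product. -/
def kroneckerSum [Semiring K] (X : Matrix Q Q K) (X' : Matrix R R K) :
    Matrix (Q × R) (Q × R) K :=
  X ⊗ₖ 1 + 1 ⊗ₖ X'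

lemma kroneckerSum_apply_ne_zero [Semiring K] {X : Matrix Q Q K} {X' : Matrix R R K}
    {s t : Q × R} (h : kroneckerSum X X' s t ≠ 0) :
    (X s.1 t.1 ≠ 0 ∧ s.2 = t.2) ∨ (s.1 = t.1 ∧ X' s.2 t.2 ≠ 0) := by
  by_contra! hcon
  simp only [kroneckerSum, Matrix.add_apply, kroneckerMap_apply, one_apply] at h
  by_cases h1 : s.1 = t.1 <;> by_cases h2 : s.2 = t.2 <;> simp_all

lemma IsOrderRaising.kroneckerSum [Semiring K] [Preorder Q] [Preorder R] {X : Matrix Q Q K}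
    {X' : Matrix R R K} (hX : IsOrderRaising X) (hX' : IsOrderRaising X') :
    IsOrderRaising (kroneckerSum X X') := by
  intro s t hst
  rcases kroneckerSum_apply_ne_zero hst with ⟨h, h2⟩ | ⟨h1, h⟩
  · exact Prod.lt_iff.mpr (Or.inl ⟨hX _ _ h, h2.ge⟩)
  · exact Prod.lt_iff.mpr (Or.inr ⟨h1.ge, hX' _ _ h⟩)

lemma kroneckerSum_commutator [CommRing K] [Fintype Q] [Fintype R] (X Y : Matrix Q Q K)
    (X' Y' : Matrix R R K) :
    kroneckerSum X X' * kroneckerSum Y Y' - kroneckerSum Y Y' * kroneckerSum X X' =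
      kroneckerSum (X * Y - Y * X) (X' * Y' - Y' * X') := by
  simp only [kroneckerSum, mul_add, add_mul, ← mul_kronecker_mul, mul_one, one_mul]
  ext s t
  simp only [Matrix.add_apply, Matrix.sub_apply, kroneckerMap_apply]
  ring

lemma IsSl2Pair.kroneckerSum [Field K] [Fintype Q] [Fintype R] {rk : Q → ℕ} {rk' : R → ℕ}
    {l l' : ℕ} {X Y : Matrix Q Q K} {X' Y' : Matrix R R K} (h : IsSl2Pair rk l X Y)
    (h' : IsSl2Pair rk' l' X' Y') :
    IsSl2Pair (fun p : Q × R => rk p.1 + rk' p.2) (l + l') (kroneckerSum X X')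
      (kroneckerSum Y Y') where
  rk_le p := add_le_add (h.rk_le _) (h'.rk_le _)
  raises s t hst := by
    rcases kroneckerSum_apply_ne_zero hst with ⟨hX, h2⟩ | ⟨h1, hX'⟩
    · rw [h.raises _ _ hX, h2, add_right_comm]
    · rw [h'.raises _ _ hX', h1, add_assoc]
  lowers s t hst := by
    rcases kroneckerSum_apply_ne_zero hst with ⟨hY, h2⟩ | ⟨h1, hY'⟩
    · rw [h.lowers _ _ hY, h2, add_right_comm]
    · rw [h'.lowers _ _ hY', h1, add_assoc]
  commutator := by
    rw [kroneckerSum_commutator, h.commutator, h'.commutator, _root_.kroneckerSum,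
      ← diagonal_one, ← diagonal_one, diagonal_kronecker_diagonal, diagonal_kronecker_diagonal,
      diagonal_add]
    congr 1
    ext p
    push_cast
    ring

end KroneckerSum

section Chain

variable {K : Type*} [Field K] {m : ℕ}

variable (K m) in
/-- The raising matrix of the irreducible representation of `sl₂` of dimension `m + 1`, realised on
the chain `Fin (m + 1)`. -/
def chainRaise : Matrix (Fin (m + 1)) (Fin (m + 1)) K :=
  of fun i j => if (i : ℕ) = j + 1 then 1 else 0

variable (K m) in
/-- The lowering matrix of the irreducible representation of `sl₂` of dimension `m + 1`, realised on
the chain `Fin (m + 1)`. -/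
def chainLower : Matrix (Fin (m + 1)) (Fin (m + 1)) K :=
  of fun i j => if (j : ℕ) = i + 1 then ((j : ℕ) : K) * (m + 1 - (j : ℕ)) else 0

lemma isOrderRaising_chainRaise : IsOrderRaising (chainRaise K m) := by
  intro i j hij
  have : (i : ℕ) = j + 1 := of_not_not fun h => hij (by simp [chainRaise, h])
  exact Fin.lt_def.mpr (by omega)

lemma chainRaise_mul_chainLower : chainRaise K m * chainLower K m =
    diagonal fun i : Fin (m + 1) => ((i : ℕ) : K) * (m + 1 - (i : ℕ)) := by
  ext i k
  rw [mul_apply, diagonal_apply]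
  cases i using Fin.cases with
  | zero => simp [chainRaise]
  | succ i =>
    rw [Finset.sum_eq_single i.castSucc]
    · simp only [chainRaise, chainLower, of_apply, Fin.val_succ, Fin.val_castSucc, if_true, one_mul,
        Fin.ext_iff, eq_comm (a := (k : ℕ))]
      refine ite_congr rfl (fun h => by rw [h]) fun _ => rfl
    · intro j _ hj
      have : (i : ℕ) ≠ j := fun h => hj (Fin.ext h.symm)
      simp [chainRaise, this]
    · simp

lemma chainLower_mul_chainRaise : chainLower K m * chainRaise K m =
    diagonal fun i : Fin (m + 1) => (((i : ℕ) : K) + 1) * (m - (i : ℕ)) := by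
  ext i k
  rw [mul_apply, diagonal_apply]
  cases i using Fin.lastCases with
  | last =>
    have (j : Fin (m + 1)) : (j : ℕ) ≠ m + 1 := j.2.ne
    simp [chainLower, this]
  | cast i =>
    rw [Finset.sum_eq_single i.succ]
    · simp [chainRaise, chainLower, Fin.ext_iff]
    · intro j _ hj
      have : (j : ℕ) ≠ i + 1 := fun h => hj (Fin.ext h)
      simp [chainLower, this]
    · simp

lemma isSl2Pair_chain :
    IsSl2Pair (fun i : Fin (m + 1) => (i : ℕ)) m (chainRaise K m) (chainLower K m) where
  rk_le i := Nat.le_of_lt_succ i.2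
  raises i j hij := of_not_not fun h => hij (by simp [chainRaise, h])
  lowers i j hij := of_not_not fun h => hij (by simp [chainLower, h])
  commutator := by
    rw [chainRaise_mul_chainLower, chainLower_mul_chainRaise, diagonal_sub]
    congr 1
    ext i
    ring

end Chain

/-! ### The strong Sperner property -/

section StrongSperner

variable {α ι : Type*} [Fintype ι]

-- A chain ending at `x` takes pairwise distinct values under `c`.
lemma height_lt_card_of_ne [Preorder α] {c : α → ι} (hc : ∀ ⦃x y⦄, x < y → c x ≠ c y) (x : α) :
    Order.height x < Fintype.card ι := by
  have hinj (p : LTSeries α) : Function.Injective fun i => c (p i) := by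
    refine Function.Injective.of_eq_imp_le fun {i j} hij => ?_
    exact not_lt.mp fun hji => hc (p.strictMono hji) hij.symm
  have hpos : 0 < Fintype.card ι := Fintype.card_pos_iff.mpr ⟨c x⟩
  have hle : Order.height x ≤ (Fintype.card ι - 1 : ℕ) := Order.height_le fun p _ => by
    have := Fintype.card_le_of_injective _ (hinj p)
    rw [Fintype.card_fin] at this
    exact_mod_cast Nat.le_sub_one_of_lt this
  exact hle.trans_lt (by exact_mod_cast Nat.sub_one_lt hpos.ne')

lemma exists_strictMono_fin_of_ne [Preorder α] {m : ℕ} {c : α → Fin m}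
    (hc : ∀ ⦃x y⦄, x < y → c x ≠ c y) : ∃ f : α → Fin m, StrictMono f := by
  have hlt (x : α) : Order.height x < m := by simpa using height_lt_card_of_ne hc x
  have hcast (x : α) : ((Order.height x).toNat : ℕ∞) = Order.height x :=
    ENat.natCast_toNat (hlt x).ne_top
  refine ⟨fun x => ⟨(Order.height x).toNat, ?_⟩, fun x y hxy => ?_⟩
  · exact_mod_cast (hcast x).trans_lt (hlt x)
  · have := Order.height_strictMono hxy ((hlt x).trans_le le_top)
    rw [← hcast x, ← hcast y] at this
    exact Fin.lt_def.mpr (by exact_mod_cast this)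

lemma card_rankLevel_add_val_le {Q : Type*} [Fintype Q] {rk : Q → ℕ} {m M : ℕ} {S : Finset ℕ}
    (hS : ∀ t, rk t ≤ M → M ≤ rk t + m → rk t ∈ S) :
    #(rankLevel (fun p : Q × Fin (m + 1) => rk p.1 + (p.2 : ℕ)) M) ≤
      ∑ i ∈ S, #(rankLevel rk i) := by
  rw [card_eq_sum_card_fiberwise (f := fun p => rk p.1) (t := S)]
  · refine sum_le_sum fun i _ => card_le_card_of_injOn Prod.fst ?_ ?_
    · intro p hp
      simpa using (mem_filter.mp hp).2
    · rintro ⟨t, j⟩ hp ⟨t', j'⟩ hp' (rfl : t = t')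
      have hj := mem_rankLevel.mp (mem_filter.mp hp).1
      have hj' := mem_rankLevel.mp (mem_filter.mp hp').1
      exact Prod.ext rfl (Fin.ext (Nat.add_left_cancel (hj.trans hj'.symm)))
  · rintro ⟨t, j⟩ hp
    simp only [mem_coe, mem_rankLevel] at hp
    exact hS t (by omega) (by omega)

lemma isAntichain_range_prod_rev [PartialOrder α] {U : Set α} {m : ℕ} {f : U → Fin m}
    (hf : StrictMono f) : IsAntichain (· ≤ ·) (Set.range fun x : U => ((x : α), (f x).rev)) := by
  rintro _ ⟨x, rfl⟩ _ ⟨y, rfl⟩ hne hle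
  have hxy : x < y := lt_of_le_of_ne hle.1 fun h => hne (by rw [h])
  exact (hf hxy).not_ge (Fin.rev_le_rev.mp hle.2)

-- A union of `m + 1` antichains maps strictly monotonically to the chain with `m + 1` elements. The
-- reversed graph of this map is an antichain in the product with the chain, whose middle level
-- projects injectively to `m + 1` consecutive levels of `Q`.
theorem IsSl2Pair.exists_card_iUnion_le {Q K : Type*} [Fintype Q] [DecidableEq Q] [PartialOrder Q]
    [Field K] [LinearOrder K] [IsStrictOrderedRing K] {rk : Q → ℕ} {l : ℕ} {X Y : Matrix Q Q K}
    (h : IsSl2Pair rk l X Y) (hX : IsOrderRaising X) {m : ℕ} {A : Fin (m + 1) → Set Q}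
    (hA : ∀ a, IsAntichain (· ≤ ·) (A a)) :
    ∃ S ⊆ range (l + 1), #S ≤ m + 1 ∧ Nat.card (⋃ a, A a) ≤ ∑ i ∈ S, #(rankLevel rk i) := by
  classical
  choose c hc using fun x : ⋃ a, A a => Set.mem_iUnion.mp x.2
  obtain ⟨f, hf⟩ := exists_strictMono_fin_of_ne (c := c) fun x y hxy hcxy =>
    hA (c x) (hc x) (hcxy ▸ hc y) (Subtype.coe_injective.ne hxy.ne) hxy.le
  let B : Finset (Q × Fin (m + 1)) := univ.image fun x : ⋃ a, A a => ((x : Q), (f x).rev)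
  have hB : IsAntichain (· ≤ ·) (B : Set (Q × Fin (m + 1))) := by
    simpa [B] using isAntichain_range_prod_rev hf
  refine ⟨{i ∈ range (l + 1) | i ≤ (l + m) / 2 ∧ (l + m) / 2 ≤ i + m}, filter_subset _ _, ?_, ?_⟩
  · calc _ ≤ #(Icc ((l + m) / 2 - m) ((l + m) / 2)) := by
          refine card_le_card fun i hi => ?_
          simp only [mem_filter, mem_Icc] at hi ⊢
          omega
      _ ≤ m + 1 := by rw [Nat.card_Icc]; omega
  · calc Nat.card (⋃ a, A a) = #B := by
          rw [card_image_of_injective _ fun x y hxy => Subtype.ext (congrArg Prod.fst hxy),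
            card_univ, Nat.card_eq_fintype_card]
      _ ≤ _ := (h.kroneckerSum isSl2Pair_chain).card_le_card_rankLevel_half
          (hX.kroneckerSum isOrderRaising_chainRaise) hB
      _ ≤ _ := card_rankLevel_add_val_le fun t ht ht' => by
          have := h.rk_le t
          simp only [mem_filter, mem_range]
          omega

end StrongSperner

/-! ### A Lagrange interpolation identity -/

lemma exists_add_nodup_of_count_le {α : Type*} [DecidableEq α] {U Ω : Multiset α}
    (hU : ∀ a, 2 ≤ U.count a → U.count a ≤ Ω.count a) :
    ∃ T U' Ω', U = T + U' ∧ Ω = T + Ω' ∧ U'.Nodup ∧ (∀ a ∈ T, a ∈ U.erase a) ∧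
      ∀ a ∈ U', a ∉ T := by
  let T := U.filter fun a => 2 ≤ U.count a
  have mem_T {a : α} : a ∈ T ↔ a ∈ U ∧ 2 ≤ U.count a := Multiset.mem_filter
  have hcount_T (a : α) : T.count a = if 2 ≤ U.count a then U.count a else 0 :=
    Multiset.count_filter
  obtain ⟨U', hU'⟩ : ∃ U', U = T + U' := Multiset.le_iff_exists_add.mp (Multiset.filter_le _ U)
  have hcount (a : α) : U.count a = T.count a + U'.count a := by
    conv_lhs => rw [hU', Multiset.count_add]
  obtain ⟨Ω', hΩ'⟩ : ∃ Ω', Ω = T + Ω' := Multiset.le_iff_exists_add.mp <|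
    Multiset.le_iff_count.mpr fun a => by
      rw [hcount_T]
      split_ifs with ha
      exacts [hU a ha, Nat.zero_le _]
  refine ⟨T, U', Ω', hU', hΩ', Multiset.nodup_iff_count_le_one.mpr fun a => ?_, fun a ha => ?_,
    fun a ha haT => ?_⟩
  · have := hcount a
    rw [hcount_T] at this
    split_ifs at this <;> omega
  · rw [← Multiset.count_pos, Multiset.count_erase_self]
    exact Nat.sub_pos_of_lt (mem_T.mp ha).2
  · have := hcount a
    rw [hcount_T, if_pos (mem_T.mp haT).2] at this
    exact (Multiset.count_pos.mpr ha).ne' (by omega)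

section LagrangeIdentity

open Polynomial

variable {K : Type*} [Field K] [DecidableEq K]

-- Interpolate `∏ (X - ω) - ∏ (X - a)`, whose degree is less than the number of nodes `a`.
lemma sum_multisetProd_sub_mul_inv_prod_erase_sub {s : Finset K} {Ω : Multiset K}
    (hcard : Ω.card = #s) :
    ∑ a ∈ s, (Ω.map (a - ·)).prod * (∏ b ∈ s.erase a, (a - b))⁻¹ = ∑ a ∈ s, a - Ω.sum := by
  rcases s.eq_empty_or_nonempty with rfl | hs
  · simp_all
  let p (V : Multiset K) : K[X] := (V.map fun v => X - C v).prod
  have hp_degree (V : Multiset K) : (p V).degree = V.card := by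
    rw [degree_eq_natDegree (monic_multisetProd_X_sub_C V).ne_zero,
      natDegree_multiset_prod_X_sub_C_eq_card]
  have hdeg : (p Ω - p s.val).degree < #s := by
    rw [← hcard, ← hp_degree]
    refine degree_sub_lt_left ?_ (monic_multisetProd_X_sub_C Ω).ne_zero ?_
    · rw [hp_degree, hp_degree, hcard, card_val]
    · exact (monic_multisetProd_X_sub_C Ω).leadingCoeff.trans
        (monic_multisetProd_X_sub_C s.val).leadingCoeff.symm
  have heval (a : K) (ha : a ∈ s) : eval a (p Ω - p s.val) = (Ω.map (a - ·)).prod := by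
    rw [eval_sub, eval_multiset_prod, eval_multiset_prod,
      Multiset.prod_eq_zero (s := (s.val.map fun v => X - C v).map (eval a)), sub_zero]
    · simp
    · simpa using ⟨a, ha, sub_self a⟩
  have hcoeff : (p Ω - p s.val).coeff (#s - 1) = ∑ a ∈ s, a - Ω.sum := by
    have hs' : 0 < s.val.card := card_pos.mpr hs
    rw [coeff_sub, ← card_val, multiset_prod_X_sub_C_coeff_card_pred _ hs', card_val, ← hcard,
      multiset_prod_X_sub_C_coeff_card_pred _ (hcard ▸ hs'), sum_eq_multiset_sum, Multiset.map_id']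
    ring
  rw [← hcoeff, Lagrange.coeff_eq_sum (v := id) Function.injective_id.injOn hdeg]
  exact sum_congr rfl fun a ha => by rw [id, heval a ha, div_eq_mul_inv]; rfl

-- The repeated elements of `U` contribute `0` to the left side, as `0⁻¹ = 0`, and cancel from the
-- other terms.
theorem sum_map_prod_sub_mul_inv_prod_erase_sub {U Ω : Multiset K} (hcard : Ω.card = U.card)
    (hU : ∀ a, 2 ≤ U.count a → U.count a ≤ Ω.count a) :
    (U.map fun a => (Ω.map (a - ·)).prod * ((U.erase a).map (a - ·)).prod⁻¹).sum =
      U.sum - Ω.sum := by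
  obtain ⟨T, U', Ω', rfl, rfl, hnodup, hT, hTU'⟩ := exists_add_nodup_of_count_le hU
  have term_eq_zero (a : K) (ha : a ∈ T) : (((T + U').erase a).map (a - ·)).prod = 0 :=
    Multiset.prod_eq_zero (Multiset.mem_map.mpr ⟨a, hT a ha, sub_self a⟩)
  have term_eq (a : K) (ha : a ∈ U') :
      ((T + Ω').map (a - ·)).prod * (((T + U').erase a).map (a - ·)).prod⁻¹ =
        (Ω'.map (a - ·)).prod * ((U'.erase a).map (a - ·)).prod⁻¹ := by
    have hne : (T.map (a - ·)).prod ≠ 0 := Multiset.prod_ne_zero fun h => by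
      obtain ⟨b, hb, hab⟩ := Multiset.mem_map.mp h
      exact hTU' a ha (sub_eq_zero.mp hab ▸ hb)
    rw [Multiset.erase_add_right_neg _ (hTU' a ha), Multiset.map_add, Multiset.map_add,
      Multiset.prod_add, Multiset.prod_add, mul_inv, mul_mul_mul_comm, mul_inv_cancel₀ hne, one_mul]
  have map_T : (T.map fun a => ((T + Ω').map (a - ·)).prod *
      (((T + U').erase a).map (a - ·)).prod⁻¹) = T.map fun _ => 0 :=
    Multiset.map_congr rfl fun a ha => by rw [term_eq_zero a ha, _root_.inv_zero, mul_zero]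
  rw [Multiset.map_add, Multiset.sum_add, map_T, Multiset.map_congr rfl term_eq,
    Multiset.sum_map_zero, zero_add, Multiset.sum_add, Multiset.sum_add, add_sub_add_left_eq_sub]
  have hcard' : Ω'.card = #(⟨U', hnodup⟩ : Finset K) := by simpa using hcard
  simpa [Finset.sum, Finset.prod] using sum_multisetProd_sub_mul_inv_prod_erase_sub hcard'

end LagrangeIdentity

/-! ### Coefficients of the raising and lowering operators -/

section HalfShifts

variable {K P : Type*} [Field K]

/-- The nodes of the interpolation behind the color sum: `z x + 1 / 2` and `z x - 1 / 2` for all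
`x ∈ S`. -/
def halfShifts (S : Finset P) (z : P → K) : Multiset K :=
  S.val.map (z · + 1 / 2) + S.val.map (z · - 1 / 2)

variable [CharZero K] [DecidableEq K]

lemma count_halfShifts_le {S T : Finset P} {z : P → K} (hz : Set.InjOn z S)
    (hST : ∀ x ∈ S, ∀ y ∈ S, z y = z x + 1 →
      ∃ c ∈ T, ∃ d ∈ T, c ≠ d ∧ z c = z x + 1 / 2 ∧ z d = z x + 1 / 2) (a : K)
    (ha : 2 ≤ (halfShifts S z).count a) : (halfShifts S z).count a ≤ (T.val.map z).count a := by
  have count_le_one (f : P → K) (hf : Set.InjOn f S) : (S.val.map f).count a ≤ 1 :=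
    Multiset.nodup_iff_count_le_one.mp (S.nodup.map_on fun x hx y hy => hf hx hy) a
  have add_le := count_le_one (z · + 1 / 2) fun x hx y hy h => hz hx hy (by simpa using h)
  have sub_le := count_le_one (z · - 1 / 2) fun x hx y hy h => hz hx hy (by simpa using h)
  rw [halfShifts, Multiset.count_add] at ha ⊢
  refine (add_le_add add_le sub_le).trans ?_
  obtain ⟨x, hx, rfl⟩ := Multiset.mem_map.mp (Multiset.count_pos.mp
    (show 0 < (S.val.map (z · + 1 / 2)).count a by omega))
  obtain ⟨y, hy, hyx⟩ := Multiset.mem_map.mp (Multiset.count_pos.mp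
    (show 0 < (S.val.map (z · - 1 / 2)).count (z x + 1 / 2) by omega))
  obtain ⟨c, hc, d, hd, hcd, hzc, hzd⟩ := hST x hx y hy (by linear_combination hyx)
  rw [Multiset.count_map]
  exact one_lt_card.mpr
    ⟨c, mem_filter.mpr ⟨hc, hzc.symm⟩, d, mem_filter.mpr ⟨hd, hzd.symm⟩, hcd⟩

variable [DecidableEq P]

lemma prod_halfShifts_erase_add {S : Finset P} {x : P} (hx : x ∈ S) (z : P → K) :
    (((halfShifts S z).erase (z x + 1 / 2)).map (z x + 1 / 2 - ·)).prod =
      ∏ w ∈ S.erase x, (z x - z w) * (z x - z w + 1) := by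
  have hmem : z x + 1 / 2 ∈ S.val.map (z · + 1 / 2) := Multiset.mem_map_of_mem _ hx
  rw [halfShifts, Multiset.erase_add_left_pos _ hmem,
    ← Multiset.map_erase_of_mem (z · + 1 / 2) _ hx, ← erase_val, Multiset.map_add,
    Multiset.map_map, Multiset.map_map, Multiset.prod_add, prod_mul_distrib]
  change (∏ w ∈ S.erase x, (z x + 1 / 2 - (z w + 1 / 2))) *
    ∏ w ∈ S, (z x + 1 / 2 - (z w - 1 / 2)) = _
  rw [← mul_prod_erase S _ hx]
  ring_nf

lemma prod_halfShifts_erase_sub {S : Finset P} {x : P} (hx : x ∈ S) (z : P → K) :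
    (((halfShifts S z).erase (z x - 1 / 2)).map (z x - 1 / 2 - ·)).prod =
      -∏ w ∈ S.erase x, (z x - z w) * (z x - z w - 1) := by
  have hmem : z x - 1 / 2 ∈ S.val.map (z · - 1 / 2) := Multiset.mem_map_of_mem _ hx
  rw [halfShifts, Multiset.erase_add_right_pos _ hmem,
    ← Multiset.map_erase_of_mem (z · - 1 / 2) _ hx, ← erase_val, Multiset.map_add,
    Multiset.map_map, Multiset.map_map, Multiset.prod_add, prod_mul_distrib]
  change (∏ w ∈ S, (z x - 1 / 2 - (z w + 1 / 2))) *
    ∏ w ∈ S.erase x, (z x - 1 / 2 - (z w - 1 / 2)) = _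
  rw [← mul_prod_erase S _ hx]
  ring_nf

end HalfShifts

section Coefficients

variable {K N P : Type*} [Field K] [DecidableEq N] (out : N → N → Prop) [DecidableRel out]

/-- The factor contributed to a raising coefficient at a node of color `i` by a node of color `j`
whose coordinate is smaller by `e`. The relation `out` is an orientation of the Dynkin diagram. -/
def raisingFactor (i j : N) (e : K) : K :=
  if i = j then e⁻¹ else if out i j then e + 1 / 2 else 1

/-- The factor contributed to a lowering coefficient at a node of color `i` by a node of color `j`
whose coordinate is smaller by `e`. -/
def loweringFactor (i j : N) (e : K) : K :=
  if i = j then e⁻¹ else if out j i then e - 1 / 2 else 1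

lemma raisingFactor_add_one_mul_loweringFactor (i j : N) (e : K) :
    raisingFactor out i j (e + 1) * loweringFactor out j i (-e) =
      raisingFactor out i j e * loweringFactor out j i (-e - 1) := by
  unfold raisingFactor loweringFactor
  rcases eq_or_ne i j with rfl | hij
  · rw [if_pos rfl, if_pos rfl, if_pos rfl, if_pos rfl, ← neg_add', inv_neg, inv_neg]
    ring
  · rw [if_neg hij, if_neg hij, if_neg hij.symm, if_neg hij.symm]
    split_ifs <;> ring

lemma raisingFactor_mul_loweringFactor_add_one [CharZero K]
    (hout : ∀ ⦃i j⦄, out i j → ¬out j i) (i j : N) (e : K) :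
    raisingFactor out i j e * loweringFactor out i j (e + 1) =
      (if out i j ∨ out j i then e + 1 / 2 else 1) * (if j = i then e * (e + 1) else 1)⁻¹ := by
  unfold raisingFactor loweringFactor
  rcases eq_or_ne i j with rfl | hij
  · have hii : ¬out i i := fun h => hout h h
    simp [hii, mul_comm]
  · rw [if_neg hij, if_neg hij, if_neg hij.symm]
    by_cases hi : out i j
    · simp [hi, hout hi]
    by_cases hj : out j i
    · simp only [hi, hj, false_or, if_true, if_false]
      ring
    · simp [hi, hj]

variable [Fintype P] [DecidableEq P] (col : P → N) (B : N → Multiset K)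

/-- The coefficient with which the raising operator adds one to the coordinate `x` of `z`. The
multiset `B i` plays the role of additional fixed coordinates at neighbors of the color `i`. -/
def raisingCoeff (x : P) (z : P → K) : K :=
  ((B (col x)).map (z x + 1 / 2 - ·)).prod *
    ∏ w ∈ univ.erase x, raisingFactor out (col x) (col w) (z x - z w)

/-- The coefficient with which the lowering operator subtracts one from the coordinate `y` of
`z`, up to a weight depending only on the color of `y`. -/
def loweringCoeff (y : P) (z : P → K) : K :=
  ∏ w ∈ univ.erase y, loweringFactor out (col y) (col w) (z y - z w)

/-- The coefficient with which raising and then lowering the coordinate `x` fixes `z`. -/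
def loopCoeff (x : P) (z : P → K) : K :=
  raisingCoeff out col B x z * loweringCoeff out col x (z + Pi.single x 1)

variable {out col B}

lemma raisingCoeff_mul_loweringCoeff_add_single {x y : P} (hxy : x ≠ y) (z : P → K) :
    raisingCoeff out col B x z * loweringCoeff out col y (z + Pi.single y 1) =
      raisingCoeff out col B x (z + Pi.single y 1) *
        loweringCoeff out col y (z + Pi.single x 1 + Pi.single y 1) := by
  have hy : y ∈ univ.erase x := mem_erase.mpr ⟨hxy.symm, mem_univ y⟩
  have hx : x ∈ univ.erase y := mem_erase.mpr ⟨hxy, mem_univ x⟩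
  have raising_others : ∏ w ∈ (univ.erase x).erase y, raisingFactor out (col x) (col w)
        ((z + Pi.single y 1 : P → K) x - (z + Pi.single y 1 : P → K) w) =
      ∏ w ∈ (univ.erase x).erase y, raisingFactor out (col x) (col w) (z x - z w) :=
    prod_congr rfl fun w hw => by simp [hxy, ne_of_mem_erase hw]
  have lowering_others : ∏ w ∈ (univ.erase y).erase x, loweringFactor out (col y) (col w)
        ((z + Pi.single x 1 + Pi.single y 1 : P → K) y -
          (z + Pi.single x 1 + Pi.single y 1 : P → K) w) =
      ∏ w ∈ (univ.erase y).erase x, loweringFactor out (col y) (col w)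
        ((z + Pi.single y 1 : P → K) y - (z + Pi.single y 1 : P → K) w) :=
    prod_congr rfl fun w hw => by simp [hxy.symm, ne_of_mem_erase hw]
  have hfactor := raisingFactor_add_one_mul_loweringFactor out (col x) (col y) (z x - (z y + 1))
  rw [show z x - (z y + 1) + 1 = z x - z y by ring,
    show -(z x - (z y + 1)) = z y + 1 - z x by ring, sub_sub _ (z x) 1] at hfactor
  rw [raisingCoeff, raisingCoeff, loweringCoeff, loweringCoeff, ← mul_prod_erase _ _ hy,
    ← mul_prod_erase _ _ hy, ← mul_prod_erase _ _ hx, ← mul_prod_erase _ _ hx, raising_others,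
    lowering_others]
  simp only [Pi.add_apply, Pi.single_eq_same, Pi.single_eq_of_ne hxy, Pi.single_eq_of_ne hxy.symm,
    add_zero]
  generalize ∏ w ∈ (univ.erase x).erase y, (_ : K) = R
  generalize ∏ w ∈ (univ.erase y).erase x, (_ : K) = L
  linear_combination (((B (col x)).map (z x + 1 / 2 - ·)).prod * R * L) * hfactor

lemma loopCoeff_eq [CharZero K] (hout : ∀ ⦃i j⦄, out i j → ¬out j i) (x : P) (z : P → K) :
    loopCoeff out col B x z = ((B (col x)).map (z x + 1 / 2 - ·)).prod *
      (∏ w with out (col x) (col w) ∨ out (col w) (col x), (z x + 1 / 2 - z w)) *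
      (∏ w ∈ ({w | col w = col x} : Finset P).erase x, (z x - z w) * (z x - z w + 1))⁻¹ := by
  have hfactor (w : P) (hw : w ∈ univ.erase x) :
      raisingFactor out (col x) (col w) (z x - z w) * loweringFactor out (col x) (col w)
          ((z + Pi.single x 1 : P → K) x - (z + Pi.single x 1 : P → K) w) =
        (if out (col x) (col w) ∨ out (col w) (col x) then z x + 1 / 2 - z w else 1) *
          (if col w = col x then (z x - z w) * (z x - z w + 1) else 1)⁻¹ := by
    rw [add_sub_right_comm, ← raisingFactor_mul_loweringFactor_add_one out hout]
    simp [ne_of_mem_erase hw, add_sub_right_comm]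
  rw [loopCoeff, raisingCoeff, loweringCoeff, mul_assoc, ← prod_mul_distrib,
    prod_congr rfl hfactor, prod_mul_distrib, prod_inv_distrib, ← prod_filter, ← prod_filter,
    filter_erase, filter_erase, erase_eq_of_notMem, mul_assoc]
  simpa using fun h => hout h h

lemma loopCoeff_sub_single [CharZero K] (hout : ∀ ⦃i j⦄, out i j → ¬out j i) (x : P)
    (z : P → K) :
    loopCoeff out col B x (z - Pi.single x 1) = ((B (col x)).map (z x - 1 / 2 - ·)).prod *
      (∏ w with out (col x) (col w) ∨ out (col w) (col x), (z x - 1 / 2 - z w)) *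
      (∏ w ∈ ({w | col w = col x} : Finset P).erase x, (z x - z w) * (z x - z w - 1))⁻¹ := by
  have hsub (w : P) (hw : w ≠ x) : (z - Pi.single x 1 : P → K) w = z w := by simp [hw]
  have hx : (z - Pi.single x 1 : P → K) x = z x - 1 := by simp
  rw [loopCoeff_eq hout, hx, show z x - 1 + 1 / 2 = z x - 1 / 2 by ring]
  congr! 3 with w hw w hw
  · refine congrArg _ (hsub w ?_)
    rintro rfl
    exact (mem_filter.mp hw).2.elim (fun h => hout h h) fun h => hout h h
  · rw [hsub w (ne_of_mem_erase hw)]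
    ring

lemma ne_of_loopCoeff_ne_zero [CharZero K] (hout : ∀ ⦃i j⦄, out i j → ¬out j i) {x : P}
    {z : P → K} (h : loopCoeff out col B x z ≠ 0) :
    z x + 1 / 2 ∉ B (col x) ∧
      ∀ w, out (col x) (col w) ∨ out (col w) (col x) → z x + 1 / 2 ≠ z w := by
  rw [loopCoeff_eq hout] at h
  simpa [prod_eq_zero_iff, sub_eq_zero] using left_ne_zero_of_mul h

lemma ne_of_loopCoeff_sub_single_ne_zero [CharZero K] (hout : ∀ ⦃i j⦄, out i j → ¬out j i)
    {x : P} {z : P → K} (h : loopCoeff out col B x (z - Pi.single x 1) ≠ 0) :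
    z x - 1 / 2 ∉ B (col x) ∧
      ∀ w, out (col x) (col w) ∨ out (col w) (col x) → z x - 1 / 2 ≠ z w := by
  rw [loopCoeff_sub_single hout] at h
  simpa [prod_eq_zero_iff, sub_eq_zero] using left_ne_zero_of_mul h

-- The terms are those of Lagrange interpolation at `halfShifts S z`.
theorem sum_loopCoeff_sub_loopCoeff [CharZero K] (hout : ∀ ⦃i j⦄, out i j → ¬out j i) {i : N}
    {z : P → K} {S T : Finset P} (hS : S = ({w | col w = i} : Finset P))
    (hT : T = ({w | out i (col w) ∨ out (col w) i} : Finset P))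
    (hcard : #T + (B i).card = 2 * #S) (hz : Set.InjOn z S)
    (hST : ∀ x ∈ S, ∀ y ∈ S, z y = z x + 1 →
      ∃ c ∈ T, ∃ d ∈ T, c ≠ d ∧ z c = z x + 1 / 2 ∧ z d = z x + 1 / 2) :
    ∑ x ∈ S, (loopCoeff out col B x z - loopCoeff out col B x (z - Pi.single x 1)) =
      2 * ∑ x ∈ S, z x - ∑ x ∈ T, z x - (B i).sum := by
  classical
  have hΩ (a : K) : ((T.val.map z + B i).map (a - ·)).prod =
      ((B i).map (a - ·)).prod * ∏ w ∈ T, (a - z w) := by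
    rw [Multiset.map_add, Multiset.prod_add, mul_comm, Multiset.map_map]
    rfl
  have lagrange := sum_map_prod_sub_mul_inv_prod_erase_sub
    (U := halfShifts S z) (Ω := T.val.map z + B i)
    (by simpa [halfShifts, two_mul] using hcard) fun a ha =>
      (count_halfShifts_le hz hST a ha).trans (by rw [Multiset.count_add]; omega)
  have sum_map_halfShifts (f : K → K) :
      ((halfShifts S z).map f).sum = ∑ x ∈ S, (f (z x + 1 / 2) + f (z x - 1 / 2)) := by
    rw [halfShifts, Multiset.map_add, Multiset.sum_add, Multiset.map_map, Multiset.map_map,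
      sum_add_distrib]
    rfl
  have hsum : (halfShifts S z).sum = 2 * ∑ x ∈ S, z x := by
    rw [← Multiset.map_id' (halfShifts S z), sum_map_halfShifts, mul_sum]
    exact sum_congr rfl fun x _ => by ring
  rw [sum_map_halfShifts, hsum, Multiset.sum_add, ← sub_sub] at lagrange
  refine (sum_congr rfl fun x hx => ?_).trans lagrange
  obtain rfl : col x = i := by simpa [hS] using hx
  rw [hΩ, hΩ, prod_halfShifts_erase_add hx, prod_halfShifts_erase_sub hx, loopCoeff_eq hout,
    loopCoeff_sub_single hout, ← hS, ← hT, inv_neg, mul_neg, sub_eq_add_neg]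

theorem sum_mul_loopCoeff_sub_loopCoeff [CharZero K] [Fintype N]
    (hout : ∀ ⦃i j⦄, out i j → ¬out j i) {a : N → K}
    (ha : ∀ j, 2 * a j = 2 + ∑ i with out i j ∨ out j i, a i) {z : P → K}
    (hcard : ∀ i, #{w | out i (col w) ∨ out (col w) i} + (B i).card = 2 * #{w | col w = i})
    (hz : ∀ x y, col x = col y → z x = z y → x = y)
    (hpair : ∀ x y, col x = col y → z y = z x + 1 → ∃ c d, c ≠ d ∧
      (out (col x) (col c) ∨ out (col c) (col x)) ∧ (out (col x) (col d) ∨ out (col d) (col x)) ∧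
      z c = z x + 1 / 2 ∧ z d = z x + 1 / 2) :
    ∑ x, a (col x) * (loopCoeff out col B x z - loopCoeff out col B x (z - Pi.single x 1)) =
      2 * ∑ x, z x - ∑ i, a i * (B i).sum := by
  have hcolor (i : N) : ∑ x with col x = i,
        (loopCoeff out col B x z - loopCoeff out col B x (z - Pi.single x 1)) =
      2 * ∑ x with col x = i, z x - ∑ x with out i (col x) ∨ out (col x) i, z x - (B i).sum := by
    refine sum_loopCoeff_sub_loopCoeff hout rfl rfl (hcard i) ?_ ?_ <;>
      simp only [Set.InjOn, mem_coe, mem_filter_univ]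
    · exact fun x hx y hy => hz x y (hx.trans hy.symm)
    · rintro x rfl y hy hxy
      obtain ⟨c, d, hcd, hc, hd, hzc, hzd⟩ := hpair x y hy.symm hxy
      exact ⟨c, hc, d, hd, hcd, hzc, hzd⟩
  calc _ = ∑ i, a i * ∑ x with col x = i,
        (loopCoeff out col B x z - loopCoeff out col B x (z - Pi.single x 1)) := by
        simp only [mul_sum, sum_filter, mul_ite, mul_zero]
        rw [sum_comm]
        simp
    _ = ∑ x, (2 * a (col x) - ∑ i with out i (col x) ∨ out (col x) i, a i) * z x -
        ∑ i, a i * (B i).sum := by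
        simp only [hcolor, mul_sub, sum_sub_distrib, sub_mul, sum_mul, mul_sum, sum_filter,
          mul_ite, mul_zero, ite_mul, zero_mul]
        rw [sum_comm, sum_comm (f := fun i x => ite _ (a i * z x) _)]
        simp [mul_left_comm, mul_assoc]
    _ = _ := by simp only [ha, add_sub_cancel_right, mul_sum]

end Coefficients

/-! ### Raising and lowering operators on a configuration of points -/

section Operators

variable {K L P : Type*} [CommRing K] [DecidableEq K] [Fintype P] [DecidableEq P] (z : L → P → K)

/-- The operator on functions on the configuration `z` which adds one to the coordinate `x`,
weighted by `c` at the point it starts from. Moves that leave the configuration are dropped. -/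
def raiseAt (x : P) (c : (P → K) → K) : Matrix L L K :=
  of fun s t => if z s = z t + Pi.single x 1 then c (z t) else 0

/-- The operator on functions on the configuration `z` which subtracts one from the coordinate
`y`, weighted by `d` at the point it starts from. -/
def lowerAt (y : P) (d : (P → K) → K) : Matrix L L K :=
  of fun s t => if z t = z s + Pi.single y 1 then d (z t) else 0

/-- Two points of the configuration `z` obtained from a common point of it by raising distinct
coordinates also have a common point of it above them, and conversely. -/
def IsSquareComplete : Prop :=
  ∀ x y, x ≠ y → ∀ s t, (∃ r, z s = z r + Pi.single x 1 ∧ z t = z r + Pi.single y 1) ↔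
    ∃ r, z r = z s + Pi.single y 1 ∧ z r = z t + Pi.single x 1

variable {z} {x y : P} {c d : (P → K) → K} {r s t : L}

lemma eq_add_single_of_raiseAt_ne_zero (h : raiseAt z x c s t ≠ 0) :
    z s = z t + Pi.single x 1 := by
  by_contra hst
  exact h (if_neg hst)

lemma eq_add_single_of_lowerAt_ne_zero (h : lowerAt z y d s t ≠ 0) :
    z t = z s + Pi.single y 1 := by
  by_contra hst
  exact h (if_neg hst)

variable [Fintype L]

lemma raiseAt_mul_lowerAt_apply (hz : z.Injective) (hs : z s = z r + Pi.single x 1)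
    (ht : z t = z r + Pi.single y 1) :
    (raiseAt z x c * lowerAt z y d) s t = c (z r) * d (z t) := by
  rw [mul_apply, sum_eq_single r _ (fun hr => absurd (mem_univ r) hr)]
  · exact congrArg₂ _ (if_pos hs) (if_pos ht)
  · intro r' _ hr'
    rw [raiseAt, of_apply, if_neg, zero_mul]
    exact fun h => hr' (hz (add_right_cancel (h.symm.trans hs)))

lemma lowerAt_mul_raiseAt_apply (hz : z.Injective) (hs : z r = z s + Pi.single y 1)
    (ht : z r = z t + Pi.single x 1) :
    (lowerAt z y d * raiseAt z x c) s t = d (z r) * c (z t) := by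
  rw [mul_apply, sum_eq_single r _ (fun hr => absurd (mem_univ r) hr)]
  · exact congrArg₂ _ (if_pos hs) (if_pos ht)
  · intro r' _ hr'
    rw [lowerAt, of_apply, if_neg, zero_mul]
    exact fun h => hr' (hz (h.trans hs.symm))

lemma exists_of_raiseAt_mul_lowerAt_ne_zero (h : (raiseAt z x c * lowerAt z y d) s t ≠ 0) :
    ∃ r, z s = z r + Pi.single x 1 ∧ z t = z r + Pi.single y 1 := by
  rw [mul_apply] at h
  obtain ⟨r, -, hr⟩ := exists_ne_zero_of_sum_ne_zero h
  exact ⟨r, eq_add_single_of_raiseAt_ne_zero (left_ne_zero_of_mul hr),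
    eq_add_single_of_lowerAt_ne_zero (right_ne_zero_of_mul hr)⟩

lemma exists_of_lowerAt_mul_raiseAt_ne_zero (h : (lowerAt z y d * raiseAt z x c) s t ≠ 0) :
    ∃ r, z r = z s + Pi.single y 1 ∧ z r = z t + Pi.single x 1 := by
  rw [mul_apply] at h
  obtain ⟨r, -, hr⟩ := exists_ne_zero_of_sum_ne_zero h
  exact ⟨r, eq_add_single_of_lowerAt_ne_zero (left_ne_zero_of_mul hr),
    eq_add_single_of_raiseAt_ne_zero (right_ne_zero_of_mul hr)⟩

lemma raiseAt_mul_lowerAt_comm (hz : z.Injective) (hsq : IsSquareComplete z) (hxy : x ≠ y)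
    (hcd : ∀ w, c w * d (w + Pi.single y 1) =
      c (w + Pi.single y 1) * d (w + Pi.single x 1 + Pi.single y 1)) :
    raiseAt z x c * lowerAt z y d = lowerAt z y d * raiseAt z x c := by
  ext s t
  by_cases h : ∃ r, z s = z r + Pi.single x 1 ∧ z t = z r + Pi.single y 1
  · obtain ⟨r', hs', ht'⟩ := (hsq x y hxy s t).mp h
    obtain ⟨r, hs, ht⟩ := h
    rw [raiseAt_mul_lowerAt_apply hz hs ht, lowerAt_mul_raiseAt_apply hz hs' ht', hs', ht, hs, hcd,
      mul_comm]
  · rw [not_imp_comm.mp exists_of_raiseAt_mul_lowerAt_ne_zero h,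
      not_imp_comm.mp exists_of_lowerAt_mul_raiseAt_ne_zero (mt (hsq x y hxy s t).mpr h)]

variable [DecidableEq L]

lemma raiseAt_mul_lowerAt_self (hz : z.Injective)
    (hdown : ∀ t, c (z t - Pi.single x 1) * d (z t) ≠ 0 → ∃ r, z t = z r + Pi.single x 1) :
    raiseAt z x c * lowerAt z x d = diagonal fun t => c (z t - Pi.single x 1) * d (z t) := by
  ext s t
  rcases eq_or_ne s t with rfl | hst
  · rw [diagonal_apply_eq]
    by_cases h : ∃ r, z s = z r + Pi.single x 1
    · obtain ⟨r, hr⟩ := h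
      rw [raiseAt_mul_lowerAt_apply hz hr hr, eq_sub_of_add_eq hr.symm]
    · rw [not_imp_comm.mp (hdown s) h, not_imp_comm.mp exists_of_raiseAt_mul_lowerAt_ne_zero]
      exact fun ⟨r, hr, _⟩ => h ⟨r, hr⟩
  · rw [diagonal_apply_ne _ hst, not_imp_comm.mp exists_of_raiseAt_mul_lowerAt_ne_zero]
    exact fun ⟨r, hs, ht⟩ => hst (hz (hs.trans ht.symm))

lemma lowerAt_mul_raiseAt_self (hz : z.Injective)
    (hup : ∀ t, c (z t) * d (z t + Pi.single x 1) ≠ 0 → ∃ s, z s = z t + Pi.single x 1) :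
    lowerAt z x d * raiseAt z x c = diagonal fun t => c (z t) * d (z t + Pi.single x 1) := by
  ext s t
  rcases eq_or_ne s t with rfl | hst
  · rw [diagonal_apply_eq]
    by_cases h : ∃ r, z r = z s + Pi.single x 1
    · obtain ⟨r, hr⟩ := h
      rw [lowerAt_mul_raiseAt_apply hz hr hr, hr, mul_comm]
    · rw [not_imp_comm.mp (hup s) h, not_imp_comm.mp exists_of_lowerAt_mul_raiseAt_ne_zero]
      exact fun ⟨r, hr, _⟩ => h ⟨r, hr⟩
  · rw [diagonal_apply_ne _ hst, not_imp_comm.mp exists_of_lowerAt_mul_raiseAt_ne_zero]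
    exact fun ⟨r, hs, ht⟩ => hst (hz (add_right_cancel (hs.symm.trans ht)))

theorem commutator_sum_raiseAt_sum_lowerAt {c d : P → (P → K) → K} (hz : z.Injective)
    (hsq : IsSquareComplete z)
    (hcd : ∀ x y, x ≠ y → ∀ w, c x w * d y (w + Pi.single y 1) =
      c x (w + Pi.single y 1) * d y (w + Pi.single x 1 + Pi.single y 1))
    (hdown : ∀ x t, c x (z t - Pi.single x 1) * d x (z t) ≠ 0 → ∃ r, z t = z r + Pi.single x 1)
    (hup : ∀ x t, c x (z t) * d x (z t + Pi.single x 1) ≠ 0 → ∃ s, z s = z t + Pi.single x 1) :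
    (∑ x, raiseAt z x (c x)) * ∑ y, lowerAt z y (d y) -
        (∑ y, lowerAt z y (d y)) * ∑ x, raiseAt z x (c x) =
      diagonal fun t =>
        ∑ x, (c x (z t - Pi.single x 1) * d x (z t) - c x (z t) * d x (z t + Pi.single x 1)) := by
  have hcomm (x : P) : ∑ y, (raiseAt z x (c x) * lowerAt z y (d y) -
        lowerAt z y (d y) * raiseAt z x (c x)) = diagonal fun t =>
      c x (z t - Pi.single x 1) * d x (z t) - c x (z t) * d x (z t + Pi.single x 1) := by
    rw [sum_eq_single x _ (fun hx => absurd (mem_univ x) hx),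
      raiseAt_mul_lowerAt_self hz (hdown x), lowerAt_mul_raiseAt_self hz (hup x), diagonal_sub]
    intro y _ hyx
    rw [raiseAt_mul_lowerAt_comm hz hsq hyx.symm (hcd x y hyx.symm), sub_self]
  calc _ = ∑ x, ∑ y, (raiseAt z x (c x) * lowerAt z y (d y) -
        lowerAt z y (d y) * raiseAt z x (c x)) := by
        rw [sum_mul_sum, sum_mul_sum, sum_comm (f := fun y x => lowerAt z y (d y) * _),
          ← sum_sub_distrib]
        simp only [sum_sub_distrib]
    _ = _ := by
        rw [sum_congr rfl fun x _ => hcomm x]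
        ext s t
        simp [Matrix.sum_apply, diagonal_apply]

end Operators

/-! ### Labellings of a colored poset -/

namespace CL

variable {N : Type} {adj : N → N → Prop} {pos : Finset (N × ℕ)}

instance [DecidableEq N] [DecidableRel adj] : DecidableRel (step adj pos) := fun _ _ =>
  inferInstanceAs (Decidable (_ ∧ _ ∧ _ ∧ _))

/-- Decides whether `y` is reached from `x` by `n` steps; the order itself has no decision
procedure. -/
def reaches [DecidableEq N] (adj : N → N → Prop) [DecidableRel adj] (pos : Finset (N × ℕ)) :
    ℕ → N × ℕ → N × ℕ → Bool
  | 0, x, y => x = y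
  | n + 1, x, y => ∃ w ∈ pos, (adj x.1 w.1 ∧ w.2 = x.2 + 1) ∧ reaches adj pos n w y

lemma ple_of_reaches [DecidableEq N] [DecidableRel adj] {n : ℕ} {x y : N × ℕ} (hx : x ∈ pos)
    (h : reaches adj pos n x y) : ple adj pos x y := by
  induction n generalizing x with
  | zero => exact of_decide_eq_true h ▸ Relation.ReflTransGen.refl
  | succ n ih =>
    obtain ⟨w, hw, ⟨hadj, hrank⟩, hwy⟩ := of_decide_eq_true h
    exact Relation.ReflTransGen.head ⟨hx, hw, hadj, hrank⟩ (ih hw hwy)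

lemma antitone_of_step {α : Type*} [Preorder α] {f : {x // x ∈ pos} → α}
    (hf : ∀ x y, step adj pos x.1 y.1 → f y ≤ f x) {x y : {x // x ∈ pos}}
    (hxy : ple adj pos x.1 y.1) : f y ≤ f x := by
  obtain ⟨x, hx⟩ := x
  obtain ⟨y, hy⟩ := y
  replace hxy : Relation.ReflTransGen (step adj pos) x y := hxy
  induction hxy with
  | refl => exact le_rfl
  | tail _ hstep ih => exact (hf ⟨_, hstep.1⟩ ⟨_, hy⟩ hstep).trans (ih hstep.1)

variable {k : ℕ}

instance {extra : ({x // x ∈ pos} → ℕ) → Prop} : PartialOrder (Elt adj pos k extra) :=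
  PartialOrder.lift (fun t => t.1) Subtype.val_injective

/-- The labelling with a given underlying function, which need only be compared along the
generating relation of the poset. -/
def Elt.ofStep (f : {x // x ∈ pos} → ℕ) (hk : ∀ x, f x ≤ k)
    (hf : ∀ x y, step adj pos x.1 y.1 → f y ≤ f x) : Elt adj pos k fun _ => True :=
  ⟨f, hk, fun _ _ => antitone_of_step hf, trivial⟩

variable {s t : Elt adj pos k fun _ => True} {x y : {x // x ∈ pos}}

lemma le_of_step (t : Elt adj pos k fun _ => True) (h : step adj pos x.1 y.1) : t.1 y ≤ t.1 x :=
  t.2.2.1 y x (Relation.ReflTransGen.single h)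

lemma rk_eq_sum (t : Elt adj pos k fun _ => True) : rk t = ∑ x, t.1 x := rfl

lemma rk_le (t : Elt adj pos k fun _ => True) : rk t ≤ #pos * k := by
  simpa [rk] using sum_le_card_nsmul pos.attach t.1 k fun x _ => t.2.1 x

/-- The coordinates of a labelling in which the raising and lowering coefficients are rational
functions: the value at a position, minus half the rank of the position. -/
def coord (t : Elt adj pos k fun _ => True) (x : {x // x ∈ pos}) : ℚ := t.1 x - x.1.2 / 2

lemma coord_injective :
    Function.Injective (coord : (Elt adj pos k fun _ => True) → {x // x ∈ pos} → ℚ) := by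
  intro s t hst
  refine Subtype.ext (funext fun x => ?_)
  simpa [coord] using congrFun hst x

lemma sum_coord (t : Elt adj pos k fun _ => True) :
    ∑ x, coord t x = rk t - (∑ x ∈ pos, x.2 : ℕ) / 2 := by
  simp only [coord, sum_sub_distrib, ← sum_div, rk_eq_sum, Nat.cast_sum]
  rw [sum_coe_sort pos fun x => (x.2 : ℚ)]

lemma coord_add_le (t : Elt adj pos k fun _ => True) (h : ple adj pos x.1 y.1) :
    coord t y + ((y.1.2 : ℚ) - x.1.2) / 2 ≤ coord t x := by
  have : (t.1 y : ℚ) ≤ t.1 x := by exact_mod_cast t.2.2.1 y x h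
  simp only [coord]
  linarith

lemma coord_add_half_eq_iff (t : Elt adj pos k fun _ => True) (h : step adj pos x.1 y.1) :
    coord t y + 1 / 2 = coord t x ↔ t.1 y = t.1 x := by
  simp only [coord, h.2.2.2, Nat.cast_add, Nat.cast_one]
  rw [← Nat.cast_inj (R := ℚ)]
  constructor <;> intro h <;> linarith

lemma coord_add_half_le (t : Elt adj pos k fun _ => True) (h : step adj pos x.1 y.1) :
    coord t y + 1 / 2 ≤ coord t x := by
  have := coord_add_le t (Relation.ReflTransGen.single h)
  simpa [h.2.2.2] using this

lemma lt_of_coord_add_half_ne (h : step adj pos x.1 y.1) (hne : coord t y + 1 / 2 ≠ coord t x) :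
    t.1 y < t.1 x :=
  (le_of_step t h).lt_of_ne fun heq => hne ((coord_add_half_eq_iff t h).mpr heq)

variable [DecidableEq N]

lemma coord_eq_add_single_iff :
    coord s = coord t + Pi.single x 1 ↔ s.1 = t.1 + Pi.single x 1 := by
  simp only [funext_iff, coord, Pi.add_apply, Pi.single_apply]
  refine forall_congr' fun w => ?_
  rw [sub_add_eq_add_sub, sub_left_inj]
  split_ifs <;> norm_cast

lemma rk_eq_add_one (h : s.1 = t.1 + Pi.single x 1) : rk s = rk t + 1 := by
  simp [rk_eq_sum, h, sum_add_distrib]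

lemma lt_of_eq_add_single (h : s.1 = t.1 + Pi.single x 1) : t < s := by
  refine lt_of_le_of_ne (show t.1 ≤ s.1 from h ▸ le_self_add) ?_
  rintro rfl
  have := rk_eq_add_one h
  omega

lemma exists_eq_add_single (hx : t.1 x < k)
    (hstep : ∀ w : {x // x ∈ pos}, step adj pos w.1 x.1 → t.1 x < t.1 w) :
    ∃ s : Elt adj pos k fun _ => True, s.1 = t.1 + Pi.single x 1 := by
  refine ⟨.ofStep (t.1 + Pi.single x 1) (fun w => ?_) fun w y hwy => ?_, rfl⟩
  · have := t.2.1 w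
    rcases eq_or_ne w x with rfl | hw
    · simpa using hx
    · simpa [hw] using this
  · have := le_of_step t hwy
    rcases eq_or_ne y x with rfl | hy
    · simpa using (hstep w hwy).trans_le le_self_add
    · simpa [hy] using this.trans le_self_add

lemma exists_add_single_eq (hx : 0 < t.1 x)
    (hstep : ∀ w : {x // x ∈ pos}, step adj pos x.1 w.1 → t.1 w < t.1 x) :
    ∃ s : Elt adj pos k fun _ => True, t.1 = s.1 + Pi.single x 1 := by
  refine ⟨.ofStep (t.1 - Pi.single x 1) (fun w => tsub_le_self.trans (t.2.1 w))
    fun w y hwy => ?_, (tsub_add_cancel_of_le ?_).symm⟩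
  · have := le_of_step t hwy
    rcases eq_or_ne w x with rfl | hw
    · simpa using tsub_le_self.trans (Nat.le_sub_one_of_lt (hstep y hwy))
    · simpa [hw] using tsub_le_self.trans this
  · intro w
    rcases eq_or_ne w x with rfl | hw
    · simpa using Nat.succ_le_of_lt hx
    · simp [hw]

-- The square is completed by the componentwise maximum or minimum.
lemma isSquareComplete_coord :
    IsSquareComplete (coord : (Elt adj pos k fun _ => True) → {x // x ∈ pos} → ℚ) := by
  intro x y hxy s t
  simp only [coord_eq_add_single_iff]
  simp only [funext_iff, Pi.add_apply, Pi.single_apply]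
  constructor
  · rintro ⟨r, hs, ht⟩
    refine ⟨.ofStep (s.1 ⊔ t.1) (fun w => max_le (s.2.1 w) (t.2.1 w))
      fun w w' h => max_le_max (le_of_step s h) (le_of_step t h), fun w => ?_, fun w => ?_⟩ <;>
    · change max (s.1 w) (t.1 w) = _
      have := hs w
      have := ht w
      grind
  · rintro ⟨r, hs, ht⟩
    refine ⟨.ofStep (s.1 ⊓ t.1) (fun w => (min_le_left _ _).trans (s.2.1 w))
      fun w w' h => min_le_min (le_of_step s h) (le_of_step t h), fun w => ?_, fun w => ?_⟩ <;>
    · change _ = min (s.1 w) (t.1 w) + _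
      have := hs w
      have := ht w
      grind

end CL

/-! ### Type `E₇` -/

namespace L7

/-- The positions of the poset `P₇`. -/
abbrev Pos : Type := {x : N7 × ℕ // x ∈ pos7}

/-- The color of a position. -/
abbrev color (x : Pos) : N7 := x.1.1

/-- An orientation of the `E₇` Dynkin diagram. -/
def out (i j : N7) : Prop := adj7 i j ∧ i.ctorIdx < j.ctorIdx

instance : DecidableRel out := fun _ _ => inferInstanceAs (Decidable (_ ∧ _))

/-- The boundary coordinates of the raising coefficients. They make the coefficient vanish when
raising the least position `(1, 0)` above `k` or lowering the greatest position `(1, 16)` below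
`0`. -/
def boundary (k : ℕ) (i : N7) : Multiset ℚ := if i = n1 then {(k : ℚ) + 1 / 2, -(17 / 2)} else 0

/-- The coefficients of the sum of the positive coroots of `E₇` in the simple coroots. -/
def weight : N7 → ℕ
  | n1 => 27
  | n2 => 52
  | n3 => 75
  | n4 => 96
  | n5 => 49
  | n5p => 66
  | n6p => 34

lemma not_out_of_out : ∀ ⦃i j⦄, out i j → ¬out j i := by decide

lemma out_or_out_iff : ∀ i j, out i j ∨ out j i ↔ adj7 i j := by decide

lemma two_mul_weight : ∀ j, 2 * weight j = 2 + ∑ i with out i j ∨ out j i, weight i := by decide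

lemma card_adj_add_card_boundary (k : ℕ) (i : N7) :
    #{w : Pos | out i (color w) ∨ out (color w) i} + (boundary k i).card =
      2 * #{w : Pos | color w = i} := by
  have hcard : ∀ i, #{w : Pos | out i (color w) ∨ out (color w) i} + (if i = n1 then 2 else 0) =
      2 * #{w : Pos | color w = i} := by decide +kernel
  rw [← hcard, boundary]
  split_ifs <;> rfl

lemma card_pos7 : #pos7 = 27 := by decide

lemma sum_snd_pos7 : ∑ x ∈ pos7, x.2 = 216 := by decide

lemma ple_of_color_eq {x y : Pos} (hcol : color x = color y) (hlt : x.1.2 < y.1.2) :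
    x.1.2 + 2 ≤ y.1.2 ∧ CL.ple adj7 pos7 x.1 y.1 := by
  have hreach : ∀ x ∈ pos7, ∀ y ∈ pos7, x.1 = y.1 → x.2 < y.2 →
      x.2 + 2 ≤ y.2 ∧ CL.reaches adj7 pos7 (y.2 - x.2) x y := by decide +kernel
  exact (hreach x.1 x.2 y.1 y.2 hcol hlt).imp_right (CL.ple_of_reaches x.2)

lemma exists_step_to : ∀ x : Pos, x.1 ≠ (n1, 0) → ∃ w : Pos, CL.step adj7 pos7 w.1 x.1 := by
  decide +kernel

lemma exists_step_from : ∀ x : Pos, x.1 ≠ (n1, 16) → ∃ w : Pos, CL.step adj7 pos7 x.1 w.1 := by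
  decide +kernel

lemma one_lt_card_between : ∀ x y : Pos, color x = color y → y.1.2 = x.1.2 + 2 →
    1 < #{c : Pos | CL.step adj7 pos7 x.1 c.1 ∧ CL.step adj7 pos7 c.1 y.1} := by
  decide +kernel

variable {k : ℕ} {t : L7 k} {x y : Pos}

lemma sum_coord (t : L7 k) : ∑ x, CL.coord t x = CL.rk t - 108 := by
  rw [CL.sum_coord, sum_snd_pos7, sub_right_inj]
  norm_num

lemma sum_weight_mul_sum_boundary (k : ℕ) :
    ∑ i, (weight i : ℚ) * (boundary k i).sum = 27 * (k - 8) := by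
  rw [sum_eq_single n1 (fun i _ hi => by simp [boundary, hi]) (by simp)]
  simp only [weight, boundary, if_true, Multiset.insert_eq_cons, Multiset.sum_cons,
    Multiset.sum_singleton]
  push_cast
  ring

lemma coord_add_one_le_of_color_eq (t : L7 k) (hcol : color x = color y)
    (hlt : x.1.2 < y.1.2) : CL.coord t y + 1 ≤ CL.coord t x := by
  obtain ⟨hrank, hle⟩ := ple_of_color_eq hcol hlt
  have := CL.coord_add_le t hle
  have : (x.1.2 : ℚ) + 2 ≤ y.1.2 := by exact_mod_cast hrank
  linarith

lemma eq_of_coord_eq (hcol : color x = color y) (h : CL.coord t x = CL.coord t y) : x = y := by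
  rcases lt_trichotomy x.1.2 y.1.2 with hlt | heq | hlt
  · linarith [coord_add_one_le_of_color_eq t hcol hlt]
  · exact Subtype.ext (Prod.ext hcol heq)
  · linarith [coord_add_one_le_of_color_eq t hcol.symm hlt]

lemma exists_pair_of_coord_eq (hcol : color x = color y)
    (h : CL.coord t y = CL.coord t x + 1) : ∃ c d, c ≠ d ∧
      (out (color x) (color c) ∨ out (color c) (color x)) ∧
      (out (color x) (color d) ∨ out (color d) (color x)) ∧
      CL.coord t c = CL.coord t x + 1 / 2 ∧ CL.coord t d = CL.coord t x + 1 / 2 := by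
  have hlt : y.1.2 < x.1.2 := by
    rcases lt_trichotomy x.1.2 y.1.2 with hlt | heq | hlt
    · linarith [coord_add_one_le_of_color_eq t hcol hlt]
    · rw [Subtype.ext (Prod.ext hcol heq)] at h
      linarith
    · exact hlt
  obtain ⟨hrank, hle⟩ := ple_of_color_eq hcol.symm hlt
  have hrank' : x.1.2 = y.1.2 + 2 := by
    refine le_antisymm ?_ hrank
    have := CL.coord_add_le t hle
    have : (x.1.2 : ℚ) ≤ y.1.2 + 2 := by linarith
    exact_mod_cast this
  have hbetween (c : Pos)
      (hc : c ∈ ({c | CL.step adj7 pos7 y.1 c.1 ∧ CL.step adj7 pos7 c.1 x.1} : Finset Pos)) :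
      (out (color x) (color c) ∨ out (color c) (color x)) ∧
        CL.coord t c = CL.coord t x + 1 / 2 := by
    obtain ⟨hyc, hcx⟩ := (mem_filter_univ c).mp hc
    refine ⟨(out_or_out_iff _ _).mpr hcx.2.2.1.symm, ?_⟩
    linarith [CL.coord_add_half_le t hyc, CL.coord_add_half_le t hcx]
  obtain ⟨c, hc, d, hd, hcd⟩ := one_lt_card.mp (one_lt_card_between y x hcol.symm hrank')
  exact ⟨c, d, hcd, (hbetween c hc).1, (hbetween d hd).1, (hbetween c hc).2, (hbetween d hd).2⟩

/-- The coefficient with which raising and then lowering the position `x` fixes a point. -/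
abbrev loop (k : ℕ) (x : Pos) (z : Pos → ℚ) : ℚ := loopCoeff out color (boundary k) x z

lemma sum_weight_mul_loop (t : L7 k) :
    ∑ x, (weight (color x) : ℚ) * (loop k x (CL.coord t) - loop k x (CL.coord t - Pi.single x 1)) =
      2 * CL.rk t - (27 * k : ℕ) := by
  rw [sum_mul_loopCoeff_sub_loopCoeff not_out_of_out (a := fun i => (weight i : ℚ))
    (fun j => by exact_mod_cast two_mul_weight j) (card_adj_add_card_boundary k)
    (fun x y => eq_of_coord_eq) (fun x y => exists_pair_of_coord_eq), sum_coord,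
    sum_weight_mul_sum_boundary]
  push_cast
  ring

lemma exists_eq_add_single_of_loop_ne_zero (h : loop k x (CL.coord t) ≠ 0) :
    ∃ s : L7 k, CL.coord s = CL.coord t + Pi.single x 1 := by
  obtain ⟨hboundary, hadj⟩ := ne_of_loopCoeff_ne_zero not_out_of_out h
  have hstep (w : Pos) (hw : CL.step adj7 pos7 w.1 x.1) : t.1 x < t.1 w :=
    CL.lt_of_coord_add_half_ne hw (hadj w ((out_or_out_iff _ _).mpr hw.2.2.1.symm))
  have hlt : t.1 x < k := by
    by_cases hx : x.1 = (n1, 0)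
    · refine (t.2.1 x).lt_of_ne fun hk => ?_
      exact hboundary (by simp [boundary, color, CL.coord, hx, hk])
    · obtain ⟨w, hw⟩ := exists_step_to x hx
      exact (hstep w hw).trans_le (t.2.1 w)
  obtain ⟨s, hs⟩ := CL.exists_eq_add_single hlt hstep
  exact ⟨s, CL.coord_eq_add_single_iff.mpr hs⟩

lemma exists_add_single_eq_of_loop_ne_zero (h : loop k x (CL.coord t - Pi.single x 1) ≠ 0) :
    ∃ r : L7 k, CL.coord t = CL.coord r + Pi.single x 1 := by
  obtain ⟨hboundary, hadj⟩ := ne_of_loopCoeff_sub_single_ne_zero not_out_of_out h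
  have hstep (w : Pos) (hw : CL.step adj7 pos7 x.1 w.1) : t.1 w < t.1 x :=
    CL.lt_of_coord_add_half_ne hw fun heq =>
      hadj w ((out_or_out_iff _ _).mpr hw.2.2.1) (sub_eq_of_eq_add heq.symm)
  have hpos : 0 < t.1 x := by
    by_cases hx : x.1 = (n1, 16)
    · refine Nat.pos_of_ne_zero fun h0 => ?_
      exact hboundary (by norm_num [boundary, color, CL.coord, hx, h0])
    · obtain ⟨w, hw⟩ := exists_step_from x hx
      exact (Nat.zero_le _).trans_lt (hstep w hw)
  obtain ⟨r, hr⟩ := CL.exists_add_single_eq hpos hstep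
  exact ⟨r, CL.coord_eq_add_single_iff.mpr hr⟩

/-- The operator of raising one position. -/
def raise (k : ℕ) : Matrix (L7 k) (L7 k) ℚ :=
  ∑ x, raiseAt CL.coord x (raisingCoeff out color (boundary k) x)

/-- The operator of lowering one position, weighted so that it forms an `sl₂` pair with `raise`. -/
def lower (k : ℕ) : Matrix (L7 k) (L7 k) ℚ :=
  ∑ y, lowerAt CL.coord y fun z => -weight (color y) * loweringCoeff out color y z

lemma exists_eq_add_single_of_raise_ne_zero {s t : L7 k} (h : raise k s t ≠ 0) :
    ∃ x, s.1 = t.1 + Pi.single x 1 := by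
  rw [raise, Matrix.sum_apply] at h
  obtain ⟨x, -, hx⟩ := exists_ne_zero_of_sum_ne_zero h
  exact ⟨x, CL.coord_eq_add_single_iff.mp (eq_add_single_of_raiseAt_ne_zero hx)⟩

lemma exists_eq_add_single_of_lower_ne_zero {s t : L7 k} (h : lower k s t ≠ 0) :
    ∃ y, t.1 = s.1 + Pi.single y 1 := by
  rw [lower, Matrix.sum_apply] at h
  obtain ⟨y, -, hy⟩ := exists_ne_zero_of_sum_ne_zero h
  exact ⟨y, CL.coord_eq_add_single_iff.mp (eq_add_single_of_lowerAt_ne_zero hy)⟩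

lemma isOrderRaising_raise (k : ℕ) : IsOrderRaising (raise k) := fun _ _ h =>
  (exists_eq_add_single_of_raise_ne_zero h).elim fun _ => CL.lt_of_eq_add_single

lemma commutator_raise_lower (k : ℕ) :
    raise k * lower k - lower k * raise k =
      diagonal fun t => 2 * (CL.rk t : ℚ) - (27 * k : ℕ) := by
  have loop_sub (x : Pos) (z : Pos → ℚ) :
      raisingCoeff out color (boundary k) x (z - Pi.single x 1) *
        (-weight (color x) * loweringCoeff out color x z) =
      -weight (color x) * loop k x (z - Pi.single x 1) := by
    rw [loop, loopCoeff, sub_add_cancel]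
    ring
  have loop_self (x : Pos) (z : Pos → ℚ) :
      raisingCoeff out color (boundary k) x z *
        (-weight (color x) * loweringCoeff out color x (z + Pi.single x 1)) =
      -weight (color x) * loop k x z := by
    rw [loop, loopCoeff]
    ring
  rw [raise, lower, commutator_sum_raiseAt_sum_lowerAt CL.coord_injective CL.isSquareComplete_coord]
  · simp only [loop_sub, loop_self, ← sum_weight_mul_loop]
    congr! 3 with t x
    ring
  · intro x y hxy z
    linear_combination -(weight (color y) : ℚ) *
      raisingCoeff_mul_loweringCoeff_add_single (out := out) (col := color) (B := boundary k) hxy z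
  · intro x t h
    rw [loop_sub] at h
    exact exists_add_single_eq_of_loop_ne_zero (right_ne_zero_of_mul h)
  · intro x t h
    rw [loop_self] at h
    exact exists_eq_add_single_of_loop_ne_zero (right_ne_zero_of_mul h)

theorem isSl2Pair_raise_lower (k : ℕ) :
    IsSl2Pair (CL.rk : L7 k → ℕ) (27 * k) (raise k) (lower k) where
  rk_le t := card_pos7 ▸ CL.rk_le t
  raises _ _ h := (exists_eq_add_single_of_raise_ne_zero h).elim fun _ => CL.rk_eq_add_one
  lowers _ _ h := (exists_eq_add_single_of_lower_ne_zero h).elim fun _ => CL.rk_eq_add_one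
  commutator := commutator_raise_lower k

/-- The order-reversing involution of `P₇`, which fixes colors. -/
def flip (x : Pos) : Pos :=
  ⟨(x.1.1, 16 - x.1.2), (by decide : ∀ x ∈ pos7, (x.1, 16 - x.2) ∈ pos7) x.1 x.2⟩

lemma flip_flip : ∀ x, flip (flip x) = x := by decide +kernel

lemma step_flip : ∀ x y : Pos, CL.step adj7 pos7 x.1 y.1 →
    CL.step adj7 pos7 (flip y).1 (flip x).1 := by decide +kernel

/-- The order-reversing involution of `L7(k)`. -/
def dual (t : L7 k) : L7 k :=
  .ofStep (fun x => k - t.1 (flip x)) (fun _ => Nat.sub_le _ _) fun x y h =>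
    Nat.sub_le_sub_left (CL.le_of_step t (step_flip x y h)) k

lemma dual_dual (t : L7 k) : dual (dual t) = t :=
  Subtype.ext <| funext fun x => by
    change k - (k - t.1 (flip (flip x))) = t.1 x
    rw [flip_flip, Nat.sub_sub_self (t.2.1 x)]

lemma rk_dual (t : L7 k) : CL.rk (dual t) = 27 * k - CL.rk t := by
  have hflip : ∑ x, t.1 (flip x) = CL.rk t :=
    Equiv.sum_comp (Function.Involutive.toPerm flip flip_flip) t.1
  rw [CL.rk_eq_sum, ← hflip, ← card_pos7, ← smul_eq_mul, ← Fintype.card_coe, ← Finset.card_univ,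
    ← sum_const, ← sum_tsub_distrib _ fun x _ => t.2.1 (flip x)]
  rfl

lemma nrk7_symm {i : ℕ} (hi : i ≤ 27 * k) : nrk7 k i = nrk7 k (27 * k - i) := by
  refine Nat.card_congr (Equiv.subtypeEquiv (Function.Involutive.toPerm dual dual_dual) fun t => ?_)
  have := (isSl2Pair_raise_lower k).rk_le t
  change _ ↔ CL.rk (dual t) = _
  rw [rk_dual]
  omega

lemma nrk7_eq_card_rankLevel (k i : ℕ) : nrk7 k i = #(rankLevel (CL.rk : L7 k → ℕ) i) := by
  rw [nrk7, Nat.card_eq_fintype_card, Fintype.card_subtype, rankLevel]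

end L7

/-- `L7(k)` is rank symmetric, rank unimodal, and strongly Sperner. -/
theorem statement_18 (k : ℕ) :
    (∀ i ≤ 27 * k, nrk7 k i = nrk7 k (27 * k - i)) ∧
    (∃ u ≤ 27 * k,
      (∀ i j, i ≤ j → j ≤ u → nrk7 k i ≤ nrk7 k j) ∧
      (∀ i j, u ≤ i → i ≤ j → j ≤ 27 * k → nrk7 k j ≤ nrk7 k i)) ∧
    (∀ m : ℕ, 0 < m → ∀ A : Fin m → Set (L7 k),
      (∀ a, ∀ s ∈ A a, ∀ t ∈ A a, s ≠ t → ¬CL.elLe s t ∧ ¬CL.elLe t s) →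
      ∃ S : Finset ℕ, S ⊆ Finset.range (27 * k + 1) ∧ S.card ≤ m ∧
        Nat.card (⋃ a, A a) ≤ ∑ i ∈ S, nrk7 k i) := by
  have hsl2 := L7.isSl2Pair_raise_lower k
  refine ⟨fun i => L7.nrk7_symm, ?_⟩
  simp only [L7.nrk7_eq_card_rankLevel]
  refine ⟨⟨27 * k / 2, Nat.div_le_self _ _, fun i j hij hj => ?_, fun i j hi hij _ => ?_⟩, ?_⟩
  · exact hsl2.monotoneOn_card_rankLevel (hij.trans hj) hj hij
  · exact hsl2.antitoneOn_card_rankLevel hi (hi.trans hij) hij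
  · intro m hm A hA
    obtain ⟨m, rfl⟩ := Nat.exists_eq_add_one.mpr hm
    exact hsl2.exists_card_iUnion_le (L7.isOrderRaising_raise k)
      fun a s hs t ht hst => (hA a s hs t ht hst).1

end
end
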